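/- arXiv:1012.3833 — 5 statements merged into one kernel-verified Lean document; each statement's English description precedes it below -/
import Mathlib

section
/- Let p be an odd prime and x a rational p-integer. Then \sum_{k=0}^{(p-1)/2} \binom{2k}{k}^2 / 16^k \cdot (x^k - (-1)^{(p-1)/2} (1-x)^k) \equiv 0 \pmod{p^2}. -/
open Finset

/-- `a ≡ b (mod p^k)` as rationals: `a - b` is `p^k` times a `p`-integral rational. -/
def ratCongr (p k : ℕ) (a b : ℚ) : Prop :=
  ∃ c : ℚ, a - b = (p : ℚ) ^ k * c ∧ ¬ (p ∣ c.den)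

/-- The subring of `p`-integral rationals. -/
def pInt (p : ℕ) (hp : p.Prime) : Subring ℚ where
  carrier := {c | ¬ (p ∣ c.den)}
  mul_mem' := by
    intro a b ha hb h
    rcases (hp.dvd_mul).1 (h.trans (Rat.mul_den_dvd a b)) with h | h
    · exact ha h
    · exact hb h
  add_mem' := by
    intro a b ha hb h
    rcases (hp.dvd_mul).1 (h.trans (Rat.add_den_dvd a b)) with h | h
    · exact ha h
    · exact hb h
  one_mem' := by
    simpa using hp.one_lt.ne'
  zero_mem' := by
    simpa using hp.one_lt.ne'
  neg_mem' := by
    intro a ha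
    simpa using ha

theorem inv_mem_pInt (p : ℕ) (hp : p.Prime) (m : ℕ) (hm : ¬ p ∣ m) :
    ((m : ℚ)⁻¹) ∈ pInt p hp := by
  change ¬ (p ∣ ((m : ℚ)⁻¹).den)
  have h0 : m ≠ 0 := by
    rintro rfl
    exact hm (dvd_zero p)
  rw [Rat.inv_natCast_den_of_pos (Nat.pos_of_ne_zero h0)]
  exact hm

/-- coefficient of the shifted Legendre polynomial -/
def lcoef (n k : ℕ) : ℚ := (-1) ^ k * (n.choose k : ℚ) * ((n + k).choose n : ℚ)

theorem lcoef_succ (n k : ℕ) (hk : k ≤ n) :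
    ((k : ℚ) + 1) ^ 2 * lcoef n (k + 1) = -((n : ℚ) - k) * (n + k + 1) * lcoef n k := by
  have h1 := Nat.choose_succ_right_eq n k
  have h2 := Nat.add_one_mul_choose_eq (n + k) k
  have h1' : (n.choose (k + 1) : ℚ) * (k + 1) = n.choose k * ((n : ℚ) - k) := by
    rw [← Nat.cast_sub hk]
    exact_mod_cast h1
  have h2' : ((n : ℚ) + k + 1) * (n + k).choose k = (n + (k + 1)).choose (k + 1) * ((k : ℚ) + 1) := by
    rw [← add_assoc]
    exact_mod_cast h2
  unfold lcoef
  rw [Nat.choose_symm_add, Nat.choose_symm_add]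
  linear_combination (-(-1) ^ k * (k + 1) * ((n + (k + 1)).choose (k + 1) : ℚ)) * h1'
    + (-1) ^ k * n.choose k * ((n : ℚ) - k) * h2'

theorem coef_congr (p n : ℕ) (hp : p.Prime) (hodd : p ≠ 2) (hn : p = 2 * n + 1) (k : ℕ)
    (hk : k ≤ n) :
    ∃ c ∈ pInt p hp, ((2 * k).choose k : ℚ) ^ 2 / 16 ^ k - lcoef n k = (p : ℚ) ^ 2 * c := by
  induction k with
  | zero => exact ⟨0, zero_mem _, by simp [lcoef]⟩
  | succ k ih =>
    obtain ⟨c, hc, h⟩ := ih (by omega)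
    have hm : ¬ p ∣ 4 * (k + 1) ^ 2 := by
      intro hd
      rcases hp.dvd_mul.1 hd with h4 | h4
      · have : p ∣ 2 ^ 2 := by simpa using h4
        exact hodd ((Nat.prime_dvd_prime_iff_eq hp Nat.prime_two).1 (hp.dvd_of_dvd_pow this))
      · have := Nat.le_of_dvd (Nat.succ_pos k) (hp.dvd_of_dvd_pow h4)
        omega
    have hB : lcoef n k ∈ pInt p hp := by
      unfold lcoef
      exact mul_mem (mul_mem (pow_mem (neg_mem (one_mem _)) _) (natCast_mem _ _)) (natCast_mem _ _)
    refine ⟨((4 * (k + 1) ^ 2 : ℕ) : ℚ)⁻¹ * (((2 * k + 1 : ℕ) : ℚ) ^ 2 * c + lcoef n k),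
      mul_mem (inv_mem_pInt p hp _ hm)
        (add_mem (mul_mem (pow_mem (natCast_mem _ _) _) hc) hB), ?_⟩
    have hA := Nat.succ_mul_centralBinom_succ k
    unfold Nat.centralBinom at hA
    have hA' : ((k : ℚ) + 1) * (2 * (k + 1)).choose (k + 1) = 2 * (2 * k + 1) * (2 * k).choose k := by
      exact_mod_cast hA
    have hL := lcoef_succ n k (by omega)
    have hk0 : (k : ℚ) + 1 ≠ 0 := by positivity
    have hA2 : ((2 * (k + 1)).choose (k + 1) : ℚ) = 2 * (2 * k + 1) * (2 * k).choose k / (k + 1) := by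
      rw [eq_div_iff hk0]
      linear_combination hA'
    have hL2 : lcoef n (k + 1) = -((n : ℚ) - k) * (n + k + 1) * lcoef n k / (k + 1) ^ 2 := by
      rw [eq_div_iff (pow_ne_zero 2 hk0)]
      linear_combination hL
    have hpq : (p : ℚ) = 2 * n + 1 := by exact_mod_cast hn
    rw [hA2, hL2]
    have hA3 : (2 * (2 * (k : ℚ) + 1) * (2 * k).choose k / (k + 1)) ^ 2 / 16 ^ (k + 1)
        = (2 * k + 1) ^ 2 / (4 * (k + 1) ^ 2) * (((2 * k).choose k : ℚ) ^ 2 / 16 ^ k) := by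
      field_simp
      ring
    rw [hA3, eq_add_of_sub_eq h]
    push_cast
    rw [hpq]
    field_simp
    ring

theorem sum_lcoef (n : ℕ) (x : ℚ) :
    ∑ k ∈ range (n + 1), lcoef n k * (x ^ k - (-1) ^ n * (1 - x) ^ k) = 0 := by
  have h := Polynomial.shiftedLegendre_eval_symm n x
  have e : ∀ y : ℚ, Polynomial.aeval y (Polynomial.shiftedLegendre n)
      = ∑ k ∈ range (n + 1), lcoef n k * y ^ k := by
    intro y
    simp [Polynomial.shiftedLegendre, lcoef]
  rw [e, e] at h
  simp only [mul_sub, sum_sub_distrib]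
  rw [h, mul_sum, sub_eq_zero]
  exact sum_congr rfl fun k _ => by ring

theorem stmt4 (p : ℕ) (hp : p.Prime) (hodd : p ≠ 2) (x : ℚ) (hx : ¬ (p ∣ x.den)) :
    ratCongr p 2
      (∑ k ∈ Finset.range ((p - 1) / 2 + 1),
        ((2 * k).choose k : ℚ) ^ 2 / 16 ^ k *
          (x ^ k - (-1 : ℚ) ^ ((p - 1) / 2) * (1 - x) ^ k)) 0 := by
  obtain ⟨n, hn⟩ := hp.odd_of_ne_two hodd
  have hn2 : (p - 1) / 2 = n := by omega
  rw [hn2]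
  have hx' : x ∈ pInt p hp := hx
  have H : ∀ k : ℕ, ∃ c ∈ pInt p hp, k ≤ n →
      ((2 * k).choose k : ℚ) ^ 2 / 16 ^ k - lcoef n k = (p : ℚ) ^ 2 * c := by
    intro k
    by_cases hk : k ≤ n
    · obtain ⟨c, hc, h⟩ := coef_congr p n hp hodd hn k hk
      exact ⟨c, hc, fun _ => h⟩
    · exact ⟨0, zero_mem _, fun h => absurd h hk⟩
  choose c hc hcc using H
  refine ⟨∑ k ∈ range (n + 1), c k * (x ^ k - (-1 : ℚ) ^ n * (1 - x) ^ k), ?_, ?_⟩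
  · rw [sub_zero, ← sub_zero (∑ k ∈ range (n + 1), _ / _ * _), ← sum_lcoef n x,
      ← sum_sub_distrib, mul_sum]
    refine sum_congr rfl fun k hk => ?_
    rw [← mul_assoc, ← hcc k (by simpa [Nat.lt_succ_iff] using hk)]
    ring
  · have : ∑ k ∈ range (n + 1), c k * (x ^ k - (-1 : ℚ) ^ n * (1 - x) ^ k) ∈ pInt p hp :=
      sum_mem fun k _ => mul_mem (hc k) (sub_mem (pow_mem hx' _)
        (mul_mem (pow_mem (neg_mem (one_mem _)) _) (pow_mem (sub_mem (one_mem _) hx') _)))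
    exact this
end

section
/- Let p be an odd prime. If p \equiv 3 (mod 4), then \sum_{k=0}^{(p-1)/2} \binom{2k}{k}^2 / 32^k \equiv 0 \pmod{p^2}. If p \equiv 1 (mod 4) and p = a^2 + b^2 with integers a, b and a \equiv 1 (mod 4), then \sum_{k=0}^{(p-1)/2} \binom{2k}{k}^2 / 32^k \equiv 2a - p/(2a) \pmod{p^2}. -/
open Finset

section PartA
variable (p : ℕ) [Fact p.Prime]

theorem ringChar_ne (h2 : p ≠ 2) : ringChar (ZMod p) ≠ 2 := by
  rw [ZMod.ringChar_zmod_n]; exact h2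

theorem chi_sq_sum : ∑ k : ZMod p, (quadraticChar (ZMod p) k)^2 = (p:ℤ) - 1 := by
  have h : ∀ k : ZMod p, (quadraticChar (ZMod p) k)^2 = 1 - (if k = 0 then 1 else 0) := by
    intro k
    by_cases hk : k = 0
    · simp [hk]
    · rw [quadraticChar_sq_one hk]; simp [hk]
  simp only [h, Finset.sum_sub_distrib]
  simp [ZMod.card]

theorem quad_corr (h2 : p ≠ 2) (c : ZMod p) (hc : c ≠ 0) :
    ∑ k : ZMod p, quadraticChar (ZMod p) k * quadraticChar (ZMod p) (k + c) = -1 := by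
  have h : ∀ k : ZMod p, quadraticChar (ZMod p) k * quadraticChar (ZMod p) (k + c)
      = quadraticChar (ZMod p) (1 + c * k⁻¹) - (if k = 0 then 1 else 0) := by
    intro k
    by_cases hk : k = 0
    · simp [hk]
    · have : k + c = k * (1 + c * k⁻¹) := by field_simp
      rw [this, map_mul, ← mul_assoc, ← sq, quadraticChar_sq_one hk]
      simp [hk]
  simp only [h, Finset.sum_sub_distrib]
  have e : ∑ k : ZMod p, quadraticChar (ZMod p) (1 + c * k⁻¹) = ∑ k : ZMod p, quadraticChar (ZMod p) k :=
    Equiv.sum_comp (((Equiv.inv (ZMod p)).trans (Equiv.mulLeft₀ c hc)).trans (Equiv.addLeft 1))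
      (fun k => quadraticChar (ZMod p) k)
  rw [e, quadraticChar_sum_zero (ringChar_ne p h2)]
  simp

/-- Jacobsthal sum -/
def jacS (k : ZMod p) : ℤ := ∑ x : ZMod p, quadraticChar (ZMod p) x * quadraticChar (ZMod p) (x^2 + k)

theorem jacS_scale (h2 : p ≠ 2) (k t : ZMod p) (ht : t ≠ 0) :
    jacS p (k * t^2) = quadraticChar (ZMod p) t * jacS p k := by
  unfold jacS
  rw [← Equiv.sum_comp (Equiv.mulLeft₀ t ht), Finset.mul_sum]
  refine Finset.sum_congr rfl fun x _ => ?_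
  change quadraticChar (ZMod p) (t * x) * quadraticChar (ZMod p) ((t*x)^2 + k * t^2) = _
  have : (t * x)^2 + k * t^2 = t^2 * (x^2 + k) := by ring
  rw [this, map_mul, map_mul, quadraticChar_sq_one' ht]; ring

theorem jacS_zero (h2 : p ≠ 2) : jacS p 0 = 0 := by
  unfold jacS
  rw [← quadraticChar_sum_zero (ringChar_ne p h2)]
  refine Finset.sum_congr rfl fun x _ => ?_
  by_cases hx : x = 0
  · simp [hx]
  · rw [add_zero, quadraticChar_sq_one' hx, mul_one]

theorem inner_sum_chi (h2 : p ≠ 2) (x y : ZMod p) :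
    ∑ k : ZMod p, quadraticChar (ZMod p) (x^2+k) * quadraticChar (ZMod p) (y^2+k)
      = (if x^2 = y^2 then (p:ℤ) else 0) - 1 := by
  rw [← Equiv.sum_comp (Equiv.addLeft (-x^2))]
  simp only [Equiv.coe_addLeft]
  have : ∀ k : ZMod p, quadraticChar (ZMod p) (x^2+(-x^2+k)) * quadraticChar (ZMod p) (y^2+(-x^2+k))
     = quadraticChar (ZMod p) k * quadraticChar (ZMod p) (k + (y^2 - x^2)) := by
    intro k; congr 2 <;> ring
  simp only [this]
  split_ifs with h
  · rw [← chi_sq_sum]; simp [h, sq]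
  · rw [quad_corr p h2 _ (by rwa [sub_ne_zero, ne_comm])]; simp

theorem y_sum (h2 : p ≠ 2) (hm1 : quadraticChar (ZMod p) (-1) = 1) (x : ZMod p) :
    ∑ y : ZMod p, (if x^2 = y^2 then quadraticChar (ZMod p) x * quadraticChar (ZMod p) y else 0)
     = 2 * (quadraticChar (ZMod p) x)^2 := by
  by_cases hx : x = 0
  · simp [hx]
  have hne : x ≠ -x := by
    intro h
    have h3 : (2:ZMod p) * x = 0 := by linear_combination h
    rcases mul_eq_zero.1 h3 with h4 | h4
    · exact (Ring.two_ne_zero (ringChar_ne p h2)) h4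
    · exact hx h4
  rw [← Finset.sum_filter]
  have : (univ.filter fun y : ZMod p => x^2 = y^2) = {x, -x} := by
    ext y; simp only [mem_filter, mem_univ, true_and, mem_insert, mem_singleton]
    rw [eq_comm, sq_eq_sq_iff_eq_or_eq_neg]
  rw [this, Finset.sum_pair hne]
  have : quadraticChar (ZMod p) (-x) = quadraticChar (ZMod p) x := by
    rw [← neg_one_mul, map_mul, hm1, one_mul]
  rw [this]; ring

theorem second_moment (h2 : p ≠ 2) (hm1 : quadraticChar (ZMod p) (-1) = 1) :
    ∑ k : ZMod p, (jacS p k)^2 = 2 * p * (p - 1) := by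
  have h1 : ∀ k, (jacS p k)^2 = ∑ x : ZMod p, ∑ y : ZMod p, (quadraticChar (ZMod p) x * quadraticChar (ZMod p) y) *
      (quadraticChar (ZMod p) (x^2+k) * quadraticChar (ZMod p) (y^2+k)) := by
    intro k
    rw [sq, jacS, Finset.sum_mul_sum]
    refine Finset.sum_congr rfl fun x _ => Finset.sum_congr rfl fun y _ => by ring
  simp only [h1]
  rw [Finset.sum_comm]
  have h3 : ∀ x : ZMod p, ∑ k : ZMod p, ∑ y : ZMod p, (quadraticChar (ZMod p) x * quadraticChar (ZMod p) y) *
      (quadraticChar (ZMod p) (x^2+k) * quadraticChar (ZMod p) (y^2+k)) = p * (2 * (quadraticChar (ZMod p) x)^2) := by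
    intro x
    rw [Finset.sum_comm]
    simp only [← Finset.mul_sum, inner_sum_chi p h2]
    rw [← y_sum p h2 hm1 x, Finset.mul_sum]
    have : ∀ y : ZMod p, quadraticChar (ZMod p) x * quadraticChar (ZMod p) y * ((if x^2 = y^2 then (p:ℤ) else 0) - 1)
      = p * (if x^2 = y^2 then quadraticChar (ZMod p) x * quadraticChar (ZMod p) y else 0) -
       quadraticChar (ZMod p) x * quadraticChar (ZMod p) y := by
      intro y; split_ifs <;> ring
    simp only [this, Finset.sum_sub_distrib]
    rw [← Finset.mul_sum (f := fun y => quadraticChar (ZMod p) y), quadraticChar_sum_zero (ringChar_ne p h2)]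
    simp
  simp only [h3]
  rw [← Finset.mul_sum, ← Finset.mul_sum, chi_sq_sum]; ring

theorem jacS_sq_sum (h2 : p ≠ 2) (hm1 : quadraticChar (ZMod p) (-1) = 1) :
    ∃ B : ℤ, (jacS p 1)^2 + B^2 = 4 * p := by
  obtain ⟨g, hg⟩ := quadraticChar_exists_neg_one (ringChar_ne p h2)
  refine ⟨jacS p g, ?_⟩
  have hg0 : g ≠ 0 := by rintro rfl; simp at hg
  have key : ∀ k, 2 * (jacS p k)^2 = ((jacS p 1)^2 + (jacS p g)^2) * (quadraticChar (ZMod p) k)^2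
      + ((jacS p 1)^2 - (jacS p g)^2) * quadraticChar (ZMod p) k := by
    intro k
    by_cases hk : k = 0
    · subst hk; simp [jacS_zero p h2]
    rcases quadraticChar_dichotomy hk with h | h
    · obtain ⟨t, ht⟩ := (quadraticChar_one_iff_isSquare hk).1 h
      have ht0 : t ≠ 0 := by rintro rfl; simp at ht; exact hk ht
      have e : k = 1 * t^2 := by rw [ht]; ring
      have := jacS_scale p h2 1 t ht0
      rw [← e] at this
      rw [this, h, mul_pow, quadraticChar_sq_one ht0]; ring
    · have h5 : quadraticChar (ZMod p) (k * g⁻¹) = 1 := by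
        have : quadraticChar (ZMod p) (k * g⁻¹) * quadraticChar (ZMod p) g = quadraticChar (ZMod p) k := by
          rw [← map_mul]; congr 1; field_simp
        rw [hg, h] at this; linarith
      obtain ⟨t, ht⟩ := (quadraticChar_one_iff_isSquare (mul_ne_zero hk (inv_ne_zero hg0))).1 h5
      have e : k = g * t^2 := by rw [sq, ← ht]; field_simp
      have ht0 : t ≠ 0 := by rintro rfl; simp at e; exact hk e
      have := jacS_scale p h2 g t ht0
      rw [← e] at this
      rw [this, h, mul_pow, quadraticChar_sq_one ht0]; ring
  have hs := second_moment p h2 hm1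
  have : 2 * ∑ k : ZMod p, (jacS p k)^2 = ((jacS p 1)^2 + (jacS p g)^2) * (p - 1) := by
    rw [Finset.mul_sum]
    simp only [key, Finset.sum_add_distrib, ← Finset.mul_sum, chi_sq_sum, quadraticChar_sum_zero (ringChar_ne p h2)]
    ring
  rw [hs] at this
  have hp1 : (p:ℤ) - 1 ≠ 0 := by
    have := (Fact.out : p.Prime).two_le
    omega
  apply mul_right_cancel₀ hp1
  linarith

end PartA

theorem two_sq_unique (p : ℕ) (hp : p.Prime) (h2 : p ≠ 2) (a b A B : ℤ) (h : (p:ℤ) = a^2+b^2)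
    (H : (p:ℤ) = A^2+B^2) (ha : a % 2 = 1) (hA : A % 2 = 1) : a^2 = A^2 := by
  have hp0 : (p:ℤ) ≠ 0 := by exact_mod_cast hp.ne_zero
  have hpp : Prime (p:ℤ) := Nat.prime_iff_prime_int.1 hp
  have main : ∀ B : ℤ, (p:ℤ) = A^2+B^2 → (p:ℤ) ∣ a*B - b*A → a^2 = A^2 := by
    intro B H hd
    obtain ⟨c, hc⟩ := hd
    have e : (a*A+b*B)^2 + (a*B-b*A)^2 = p^2 := by
      nth_rewrite 1 [sq (p:ℤ)]
      nth_rewrite 1 [h]; rw [H]; ring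
    have hc1 : c^2 ≤ 1 := by
      by_contra hcon
      rw [hc] at e
      have : (p:ℤ)^2 > 0 := by positivity
      nlinarith [sq_nonneg (a*A+b*B)]
    have hc2 : c = 0 ∨ c^2 = 1 := by
      rcases eq_or_ne c 0 with h | h
      · exact Or.inl h
      · right; have : 0 < c^2 := by positivity
        omega
    rcases hc2 with hc2 | hc2
    · have e1 : a*B = b*A := by rw [hc2] at hc; linarith
      have e2 : a^2*B^2 = b^2*A^2 := by rw [← mul_pow, e1]; ring
      have : (p:ℤ) * a^2 = p * A^2 := by
        have h1 : B^2 = p - A^2 := by linarith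
        have h2 : b^2 = p - a^2 := by linarith
        rw [h1, h2] at e2; linarith
      exact mul_left_cancel₀ hp0 this
    · exfalso
      have e0 : (a*A+b*B)^2 = 0 := by
        rw [hc, mul_pow, hc2] at e; linarith
      have e1 : a*A = -(b*B) := by have := pow_eq_zero_iff (two_ne_zero) |>.1 e0; linarith
      have e2 : a^2*A^2 = b^2*B^2 := by rw [← mul_pow, e1]; ring
      have : (p:ℤ) * (a^2+A^2) = p * p := by
        have h1 : B^2 = p - A^2 := by linarith
        have h2 : b^2 = p - a^2 := by linarith
        rw [h1, h2] at e2; linarith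
      have h5 := mul_left_cancel₀ hp0 this
      have hodd := hp.eq_two_or_odd
      have q1 : a^2 % 2 = 1 := by rw [sq, Int.mul_emod, ha]; rfl
      have q2 : A^2 % 2 = 1 := by rw [sq, Int.mul_emod, hA]; rfl
      omega
  have hd : (p:ℤ) ∣ (a*B-b*A)*(a*B+b*A) := ⟨a^2-A^2, by
    have h1 : B^2 = p - A^2 := by linarith
    have h2 : b^2 = p - a^2 := by linarith
    have : (a*B-b*A)*(a*B+b*A) = a^2*B^2-b^2*A^2 := by ring
    rw [this, h1, h2]; ring⟩
  rcases hpp.dvd_or_dvd hd with h1 | h1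
  · exact main B H h1
  · exact main (-B) (by rw [H]; ring) (by
      rw [← dvd_neg]; convert h1 using 1; ring)

section PartB
/-- sum over symmetric function -/
theorem fold_sum (m : ℕ) (hm : 0 < m) (F : ℕ → ℤ) (h1 : ∀ k, F (k + 2*m) = F k) (h2 : ∀ k ≤ 2*m, F (2*m - k) = F k)
    (h0 : F m = 0) (hu : ∀ k, 1 ≤ k → k < m → F k = 1 ∨ F k = -1) :
    ∃ A : ℤ, ∑ k ∈ range (4*m), F k = 2 * A ∧ (4:ℤ) ∣ A - (F 0 + 2 * (m-1)) := by
  have e1 : ∑ k ∈ range (4*m), F k = 2 * ∑ k ∈ range (2*m), F k := by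
    rw [show 4*m = 2*m + 2*m by ring, Finset.sum_range_add]
    have : ∀ x, F (2*m + x) = F x := by intro x; rw [add_comm, h1]
    simp only [this]; ring
  obtain ⟨r, rfl⟩ : ∃ r, m = r + 1 := ⟨m-1, by omega⟩
  have e2 : ∑ k ∈ range (2*(r+1)), F k = F 0 + 2 * ∑ k ∈ range r, F (k+1) := by
    rw [show 2*(r+1) = (r+1) + 1 + r by ring, Finset.sum_range_add, Finset.sum_range_succ, h0,
      Finset.sum_range_succ', ← Finset.sum_range_reflect (fun x => F (r+1+1+x))]
    have : ∑ j ∈ range r, F (r+1+1+(r-1-j)) = ∑ k ∈ range r, F (k+1) := by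
      refine Finset.sum_congr rfl fun j hj => ?_
      have hj := Finset.mem_range.1 hj
      rw [← h2 (j+1) (by omega)]
      congr 1; omega
    rw [this]; ring
  refine ⟨_, e1, ?_⟩
  rw [e2]
  have par : ∀ s ≤ r, (2:ℤ) ∣ ∑ k ∈ range s, F (k+1) - s := by
    intro s
    induction s with
    | zero => simp
    | succ s ih =>
      intro hs
      have := ih (by omega)
      rw [Finset.sum_range_succ]
      push_cast
      rcases hu (s+1) (by omega) (by omega) with h | h <;> rw [h] <;> omega
  have := par r le_rfl
  push_cast
  omega

variable (p : ℕ) [Fact p.Prime]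

theorem exists_gen (m : ℕ) (hpm : p = 4*m+1) : ∃ g : ZMod p, g ≠ 0 ∧ (∀ k, g^k = 1 ↔ 4*m ∣ k) ∧
    ∀ f : ZMod p → ℤ, f 0 = 0 → ∑ x, f x = ∑ k ∈ range (4*m), f (g^k) := by
  classical
  obtain ⟨u, hu⟩ := IsCyclic.exists_generator (α := (ZMod p)ˣ)
  have ho : orderOf u = 4*m := by
    rw [orderOf_eq_card_of_forall_mem_zpowers hu, Nat.card_eq_fintype_card, ZMod.card_units]; omega
  refine ⟨u, u.ne_zero, ?_, ?_⟩
  · intro k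
    rw [← ho, orderOf_dvd_iff_pow_eq_one, ← Units.val_pow_eq_pow_val, Units.val_eq_one]
  · intro f hf
    have him := IsCyclic.image_range_orderOf hu
    rw [ho] at him
    have e : ∑ x : ZMod p, f x = ∑ v : (ZMod p)ˣ, f v := by
      rw [← Finset.sum_subset (Finset.subset_univ (univ.filter fun x : ZMod p => x ≠ 0))]
      · symm
        refine Finset.sum_bij (fun v _ => (v : ZMod p)) ?_ ?_ ?_ ?_
        · intro v _; simp
        · intro v _ w _ h; exact Units.ext h
        · intro b hb; exact ⟨Units.mk0 b (by simpa using hb), mem_univ _, rfl⟩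
        · intros; rfl
      · intro x _ hx
        have : x = 0 := by simpa using hx
        rw [this, hf]
    rw [e, ← him, Finset.sum_image]
    · simp
    · intro i hi j hj hij
      have hi' : i < 4*m := by simpa using hi
      have hj' : j < 4*m := by simpa using hj
      exact pow_injOn_Iio_orderOf (by rw [Set.mem_Iio, ho]; exact hi') (by rw [Set.mem_Iio, ho]; exact hj') hij

theorem chi_two (m : ℕ) (hpm : p = 4*m+1) : quadraticChar (ZMod p) 2 = (-1)^m := by
  have hc : ringChar (ZMod p) ≠ 2 := by rw [ZMod.ringChar_zmod_n]; omega
  rw [quadraticChar_two hc, ZMod.card, ZMod.χ₈_nat_eq_if_mod_eight]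
  rcases Nat.even_or_odd' m with ⟨c, hc | hc⟩
  · rw [if_neg (by omega), if_pos (by omega), hc, pow_mul]; simp
  · rw [if_neg (by omega), if_neg (by omega), hc, pow_succ, pow_mul]; simp

theorem chi_neg_one (m : ℕ) (hpm : p = 4*m+1) : quadraticChar (ZMod p) (-1) = 1 := by
  have hc : ringChar (ZMod p) ≠ 2 := by rw [ZMod.ringChar_zmod_n]; omega
  rw [quadraticChar_neg_one hc, ZMod.card, ZMod.χ₄_nat_one_mod_four (by omega)]

theorem chi_sum_mod4 (m : ℕ) (hm : 0 < m) (hpm : p = 4*m+1) (g : ZMod p) (hg0 : g ≠ 0)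
    (hg : ∀ k, g^k = 1 ↔ 4*m ∣ k) :
    ∃ A : ℤ, ∑ k ∈ range (4*m), quadraticChar (ZMod p) (g^k * ((g^k)^2+1)) = 2 * A ∧ A % 4 = 3 := by
  have g4 : g^(4*m) = 1 := (hg _).2 dvd_rfl
  have g2 : g^(2*m) = -1 := by
    have h1 : (g^(2*m) - 1) * (g^(2*m) + 1) = 0 := by
      have : g^(4*m) = g^(2*m) * g^(2*m) := by rw [← pow_add]; congr 1; ring
      linear_combination g4 - this
    rcases mul_eq_zero.1 h1 with h | h
    · have := Nat.le_of_dvd (by omega) ((hg (2*m)).1 (by linear_combination h)); omega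
    · linear_combination h
  have chm := chi_neg_one p m hpm
  have hneg : ∀ x, quadraticChar (ZMod p) (-x) = quadraticChar (ZMod p) x := by
    intro x; rw [← neg_one_mul, map_mul, chm, one_mul]
  obtain ⟨A, hA, hd⟩ := fold_sum m hm (fun k => quadraticChar (ZMod p) (g^k * ((g^k)^2+1)))
    (by
      intro k
      simp only [pow_add, g2]
      rw [← hneg]; congr 1; ring)
    (by
      intro k hk
      have e : g^(2*m-k) * g^k = -1 := by rw [← pow_add, Nat.sub_add_cancel hk, g2]
      have hk0 : g^k ≠ 0 := pow_ne_zero _ hg0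
      have e2 : (g^(2*m-k)* ((g^(2*m-k))^2+1)) * ((g^k)^2)^2 = -(g^k * ((g^k)^2+1)) := by
        generalize g^(2*m-k) = y at *
        generalize g^k = x at *
        linear_combination (y^2*x^3 - x^2 *y + x + x^3) * e
      have : quadraticChar (ZMod p) ((g^(2*m-k)* ((g^(2*m-k))^2+1)) * ((g^k)^2)^2) = quadraticChar (ZMod p) (g^k * ((g^k)^2+1)) := by
        rw [e2, hneg]
      rw [map_mul, quadraticChar_sq_one' (pow_ne_zero 2 hk0), mul_one] at this
      exact this)
    (by
      have : (g^m)^2 = -1 := by rw [← pow_mul, mul_comm, g2]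
      simp [this])
    (by
      intro k h1 h2
      apply quadraticChar_dichotomy
      refine mul_ne_zero (pow_ne_zero _ hg0) ?_
      intro h
      have h3 : (g^k)^2 = -1 := by linear_combination h
      have h4 : g^(4*k) = 1 := by
        rw [show 4*k = k*2*2 by ring, pow_mul, pow_mul, h3]; ring
      have := Nat.le_of_dvd (by omega) ((hg _).1 h4)
      omega)
  refine ⟨A, hA, ?_⟩
  have h0 : quadraticChar (ZMod p) (g^0 * ((g^0)^2+1)) = (-1)^m := by
    rw [← chi_two p m hpm]; congr 1; norm_num
  simp only [h0] at hd
  rcases Nat.even_or_odd' m with ⟨c, hc | hc⟩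
  · have : (-1:ℤ)^m = 1 := by rw [hc, pow_mul]; simp
    rw [this] at hd; omega
  · have : (-1:ℤ)^m = -1 := by rw [hc, pow_succ, pow_mul]; simp
    rw [this] at hd; omega

end PartB

section PartC

theorem legendre_coeff {R : Type*} [CommRing R] (h : R) (hh : 2 * h = 1) (n : ℕ) :
    2^n * ∑ k ∈ range (n+1), ((n.choose k : R) * ((n+k).choose k : R)) * (-h)^k
      = ((1 - Polynomial.X^2 : Polynomial R)^n).coeff n := by
  have e : (1 - Polynomial.X^2 : Polynomial R)^n = Polynomial.C (2^n) *
      ∑ k ∈ range (n+1), Polynomial.C ((n.choose k : R) * (-h)^k) * (1 + Polynomial.X)^(n+k) := by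
    have hC : (2 : Polynomial R) * Polynomial.C h = 1 := by
      have : (2:Polynomial R) = Polynomial.C 2 := (map_ofNat Polynomial.C 2).symm
      rw [this, ← Polynomial.C_mul, hh, Polynomial.C_1]
    have e1 : ∑ k ∈ range (n+1), Polynomial.C ((n.choose k : R) * (-h)^k) * (1 + Polynomial.X)^(n+k)
      = (1 + Polynomial.X)^n * ((Polynomial.C (-h) * (1 + Polynomial.X)) + 1)^n := by
      rw [add_pow (Polynomial.C (-h) * (1 + Polynomial.X)) 1 n, Finset.mul_sum]
      refine Finset.sum_congr rfl fun k _ => ?_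
      rw [pow_add, mul_pow, Polynomial.C_mul, Polynomial.C_pow, one_pow, Polynomial.C_eq_natCast]
      ring
    rw [e1, Polynomial.C_pow, ← mul_pow, ← mul_pow]
    congr 1
    have : Polynomial.C (2:R) = 2 := map_ofNat Polynomial.C 2
    rw [this, Polynomial.C_neg]
    linear_combination (1 + Polynomial.X)^2 * hC
  rw [e, Polynomial.coeff_C_mul, Polynomial.finsetSum_coeff]
  congr 1
  refine Finset.sum_congr rfl fun k _ => ?_
  rw [Polynomial.coeff_C_mul, Polynomial.coeff_one_add_X_pow, Nat.choose_symm_add]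
  ring

theorem coeff_one_sub_sq {R : Type*} [CommRing R] (n : ℕ) :
    ((1 - Polynomial.X^2 : Polynomial R)^n).coeff n
      = ∑ j ∈ range (n+1), if n = 2*j then (-1)^j * (n.choose j : R) else 0 := by
  rw [sub_eq_neg_add, add_pow, Polynomial.finsetSum_coeff]
  refine Finset.sum_congr rfl fun j _ => ?_
  rw [neg_pow, ← pow_mul, one_pow, mul_one]
  have : (-1 : Polynomial R)^j * Polynomial.X^(2*j) * (n.choose j : Polynomial R)
    = Polynomial.C ((-1)^j * (n.choose j : R)) * Polynomial.X^(2*j) := by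
    simp; ring
  rw [this, Polynomial.coeff_C_mul, Polynomial.coeff_X_pow]
  split_ifs <;> simp

variable (p : ℕ) [hpF : Fact p.Prime]

theorem pp0 : (p : ZMod (p^2)) * p = 0 := by
  rw [← Nat.cast_mul, ← sq, ZMod.natCast_self]

theorem unit_nat (k : ℕ) (h0 : 0 < k) (h1 : k < p) : IsUnit (k : ZMod (p^2)) := by
  rw [ZMod.isUnit_iff_coprime]
  apply Nat.Coprime.pow_right
  rw [Nat.coprime_comm, hpF.out.coprime_iff_not_dvd]
  exact Nat.not_dvd_of_pos_of_lt h0 h1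

theorem binom_congr (n : ℕ) (hpn : p = 2*n+1) (k : ℕ) (hk : k ≤ n) :
    ((n.choose k : ZMod (p^2)) * ((n+k).choose k : ZMod (p^2))) * (-16)^k = ((2*k).choose k : ZMod (p^2))^2 := by
  induction k with
  | zero => simp
  | succ k ih =>
    have ih := ih (by omega)
    have hu := unit_nat p (k+1) (by omega) (by omega)
    have hu2 : IsUnit (((k+1 : ℕ) : ZMod (p^2))^2) := hu.pow 2
    have f1 : (n.choose (k+1) : ZMod (p^2)) * ((k+1 : ℕ) : ZMod (p^2)) = n.choose k * ((n:ZMod (p^2)) - k) := by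
      rw [← Nat.cast_sub (by omega : k ≤ n)]
      rw [← Nat.cast_mul, ← Nat.cast_mul, Nat.choose_succ_right_eq n k]
    have f2 : ((n+(k+1)).choose (k+1) : ZMod (p^2)) * ((k+1 : ℕ) : ZMod (p^2)) = (n+k).choose k * ((n:ZMod (p^2)) + k + 1) := by
      have := Nat.add_one_mul_choose_eq (n+k) k
      have := congrArg (Nat.cast (R := ZMod (p^2))) this
      push_cast at this ⊢
      rw [← add_assoc n k 1]
      linear_combination -this
    have f3 : ((k+1 : ℕ) : ZMod (p^2)) * ((2*(k+1)).choose (k+1) : ZMod (p^2)) = 2 * (2*k+1) * ((2*k).choose k : ZMod (p^2)) := by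
      have := Nat.succ_mul_centralBinom_succ k
      rw [Nat.centralBinom, Nat.centralBinom] at this
      have := congrArg (Nat.cast (R := ZMod (p^2))) this
      push_cast at this ⊢
      exact this
    have hp : (2*(n : ZMod (p^2))+1) = p := by
      have := congrArg (Nat.cast (R := ZMod (p^2))) hpn
      push_cast at this; exact this.symm
    have hz := pp0 p
    rw [← hp] at hz
    apply hu2.mul_left_cancel
    calc ((k+1 : ℕ) : ZMod (p^2))^2 * ((n.choose (k+1) : ZMod (p^2)) * ((n+(k+1)).choose (k+1) : ZMod (p^2)) * (-16)^(k+1))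
        = (n.choose (k+1) * ((k+1 : ℕ) : ZMod (p^2))) * (((n+(k+1)).choose (k+1) : ZMod (p^2)) * ((k+1 : ℕ) : ZMod (p^2))) * (-16)^(k+1) := by ring
      _ = (n.choose k * ((n:ZMod (p^2)) - k)) * ((n+k).choose k * ((n:ZMod (p^2)) + k + 1)) * ((-16)^k * (-16)) := by rw [f1, f2, pow_succ (-16 : ZMod (p^2)) k]
      _ = (2 * (2*k+1) * ((2*k).choose k : ZMod (p^2)))^2 := by
        linear_combination (-16 * ((n:ZMod (p^2)) - k) * ((n:ZMod (p^2)) + k + 1)) * ih - 4 * ((2*k).choose k : ZMod (p^2))^2 * hz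
      _ = _ := by rw [← f3]; ring

theorem sum_main (n : ℕ) (hpn : p = 2*n+1) :
    (2:ZMod (p^2))^n * ∑ k ∈ range (n+1), ((2*k).choose k : ZMod (p^2))^2 * 32^(n-k)
      = 32^n * ∑ j ∈ range (n+1), if n = 2*j then (-1)^j * (n.choose j : ZMod (p^2)) else 0 := by
  have hn : 2 < p := by
    have := hpF.out.two_le
    omega
  obtain ⟨h, hh⟩ := (unit_nat p 2 (by omega) hn).exists_right_inv
  push_cast at hh
  rw [← coeff_one_sub_sq, ← legendre_coeff h hh]
  have : ∀ k ∈ range (n+1), ((2*k).choose k : ZMod (p^2))^2 * 32^(n-k) =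
      32^n * (((n.choose k : ZMod (p^2)) * ((n+k).choose k : ZMod (p^2))) * (-h)^k) := by
    intro k hk
    have hk : k ≤ n := by have := Finset.mem_range.1 hk; omega
    rw [← binom_congr p n hpn k hk]
    have e : (32:ZMod (p^2))^n = 32^(n-k) * 32^k := by rw [← pow_add, Nat.sub_add_cancel hk]
    have e2 : (-16 : ZMod (p^2))^k = 32^k * (-h)^k := by
      rw [← mul_pow]; congr 1; linear_combination (16 : ZMod (p^2)) * hh
    rw [e, e2]; ring
  rw [Finset.sum_congr rfl this, ← Finset.mul_sum]; ring

/-- reduction mod p -/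
noncomputable def redp : ZMod (p^2) →+* ZMod p := ZMod.castHom (dvd_pow_self p two_ne_zero) (ZMod p)

theorem redp_ker (x y : ZMod (p^2)) (h : redp p x = redp p y) : ∃ w, x = y + p * w := by
  obtain ⟨a, rfl⟩ := ZMod.intCast_surjective x
  obtain ⟨b, rfl⟩ := ZMod.intCast_surjective y
  rw [map_intCast, map_intCast, ZMod.intCast_eq_intCast_iff_dvd_sub] at h
  obtain ⟨c, hc⟩ := h
  refine ⟨-(c : ZMod (p^2)), ?_⟩
  have := congrArg (Int.cast (R := ZMod (p^2))) hc
  push_cast at this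
  linear_combination -this

theorem redp_mul (x y : ZMod (p^2)) (h : redp p x = redp p y) : (p : ZMod (p^2)) * x = p * y := by
  obtain ⟨w, rfl⟩ := redp_ker p x y h
  linear_combination w * pp0 p

theorem redp_unit (x : ZMod (p^2)) (h : redp p x ≠ 0) : IsUnit x := by
  obtain ⟨a, rfl⟩ := ZMod.natCast_zmod_surjective x
  rw [ZMod.isUnit_iff_coprime]
  apply Nat.Coprime.pow_right
  rw [Nat.coprime_comm, hpF.out.coprime_iff_not_dvd]
  rwa [map_natCast, Ne, ZMod.natCast_eq_zero_iff] at h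

theorem chi_lift (m : ℕ) (hm : 0 < m) (hpm : p = 4*m+1) (y : ZMod (p^2)) :
    2 * ((quadraticChar (ZMod p) (redp p y) : ℤ) : ZMod (p^2)) = 3 * y^(2*m) - y^(6*m) := by
  have hc : ringChar (ZMod p) ≠ 2 := by rw [ZMod.ringChar_zmod_n]; omega
  by_cases h0 : redp p y = 0
  · obtain ⟨w, hw⟩ := redp_ker p y 0 (by rw [h0, map_zero])
    have : y^2 = 0 := by rw [hw]; linear_combination w^2 * pp0 p
    rw [h0]
    rw [show 6*m = 2*(3*m) by ring, pow_mul, pow_mul, this, zero_pow (by omega), zero_pow (by omega)]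
    simp
  · have h1 := quadraticChar_eq_pow_of_char_ne_two' hc (redp p y)
    rw [ZMod.card, show p/2 = 2*m by omega] at h1
    obtain ⟨w, hw⟩ := redp_ker p (y^(2*m)) ((quadraticChar (ZMod p) (redp p y) : ℤ) : ZMod (p^2))
      (by rw [map_intCast, map_pow, h1])
    rw [show 6*m = 2*m*3 by ring, pow_mul y (2*m) 3, hw]
    have hz := pp0 p
    rcases quadraticChar_dichotomy h0 with h | h <;> rw [h] <;> push_cast
    · linear_combination (3*w^2+p*w^3)*hz
    · linear_combination (-3*w^2+p*w^3)*hz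

theorem exists_lift (m : ℕ) (hpm : p = 4*m+1) (g : ZMod p) (hg0 : g ≠ 0) :
    ∃ G : ZMod (p^2), redp p G = g ∧ G^(4*m) = 1 := by
  obtain ⟨z, rfl⟩ := ZMod.intCast_surjective g
  refine ⟨(z : ZMod (p^2))^p, ?_, ?_⟩
  · rw [map_pow, map_intCast, ZMod.pow_card]
  · have hu : IsUnit (z : ZMod (p^2)) := redp_unit p _ (by rwa [map_intCast])
    obtain ⟨u, hu⟩ := hu
    have := ZMod.pow_totient u
    rw [Nat.totient_prime_pow hpF.out (by norm_num)] at this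
    rw [← pow_mul, ← hu, ← Units.val_pow_eq_pow_val]
    have e : p^(2-1) * (p-1) = p*(4*m) := by
      have : p - 1 = 4*m := by omega
      rw [this]; simp
    rw [e] at this
    rw [this]; rfl

theorem geom (m : ℕ) (g : ZMod p) (hg : ∀ k, g^k = 1 ↔ 4*m ∣ k) (G : ZMod (p^2)) (hG : redp p G = g)
    (hG1 : G^(4*m) = 1) (M : ℕ) :
    ∑ k ∈ range (4*m), (G^M)^k = if 4*m ∣ M then ((4*m : ℕ) : ZMod (p^2)) else 0 := by
  split_ifs with h
  · obtain ⟨c, rfl⟩ := h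
    rw [pow_mul, hG1]; simp
  · have hu : IsUnit (G^M - 1) := by
      apply redp_unit
      rw [map_sub, map_pow, hG, map_one, sub_ne_zero]
      exact fun h' => h ((hg M).1 h')
    apply hu.mul_left_cancel
    rw [mul_comm, geom_sum_mul, mul_zero, ← pow_mul, mul_comm, pow_mul, hG1, one_pow, sub_self]

theorem pow_sum (m r : ℕ) (g : ZMod p) (hg : ∀ k, g^k = 1 ↔ 4*m ∣ k) (G : ZMod (p^2)) (hG : redp p G = g)
    (hG1 : G^(4*m) = 1) :
    ∑ k ∈ range (4*m), (G^k * ((G^k)^2+1))^r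
      = ((4*m : ℕ) : ZMod (p^2)) * ∑ j ∈ range (r+1), if 4*m ∣ r + 2*j then (r.choose j : ZMod (p^2)) else 0 := by
  have : ∀ k, (G^k * ((G^k)^2+1))^r = ∑ j ∈ range (r+1), (r.choose j : ZMod (p^2)) * (G^(r+2*j))^k := by
    intro k
    rw [mul_pow, add_pow, Finset.mul_sum]
    refine Finset.sum_congr rfl fun j _ => ?_
    rw [one_pow, mul_one, ← pow_mul, ← pow_mul, ← pow_mul, ← pow_mul, ← mul_assoc, ← pow_add, mul_comm]
    congr 2; ring
  simp only [this]
  rw [Finset.sum_comm, Finset.mul_sum]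
  refine Finset.sum_congr rfl fun j _ => ?_
  rw [← Finset.mul_sum, geom p m g hg G hG hG1]
  split_ifs <;> ring

theorem char_sum (m : ℕ) (hm : 0 < m) (hpm : p = 4*m+1) (g : ZMod p) (hg0 : g ≠ 0)
    (hg : ∀ k, g^k = 1 ↔ 4*m ∣ k) :
    2 * ((∑ k ∈ range (4*m), quadraticChar (ZMod p) (g^k * ((g^k)^2+1)) : ℤ) : ZMod (p^2))
     = (p - 1) * (3 * ((2*m).choose m : ZMod (p^2)) - 2 * ((6*m).choose m : ZMod (p^2)) - ((6*m).choose (3*m) : ZMod (p^2))) := by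
  obtain ⟨G, hG, hG1⟩ := exists_lift p m hpm g hg0
  have e : ∀ k, 2 * ((quadraticChar (ZMod p) (g^k * ((g^k)^2+1)) : ℤ) : ZMod (p^2)) =
      3 * (G^k * ((G^k)^2+1))^(2*m) - (G^k * ((G^k)^2+1))^(6*m) := by
    intro k
    rw [← chi_lift p m hm hpm]
    simp [hG]
  rw [Int.cast_sum, Finset.mul_sum]
  simp only [e]
  rw [Finset.sum_sub_distrib, ← Finset.mul_sum, pow_sum p m _ g hg G hG hG1, pow_sum p m _ g hg G hG hG1]
  have s1 : (∑ j ∈ range (2*m+1), if 4*m ∣ 2*m + 2*j then ((2*m).choose j : ZMod (p^2)) else 0) = ((2*m).choose m : ZMod (p^2)) := by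
    rw [Finset.sum_eq_single m]
    · rw [if_pos]; exact ⟨1, by ring⟩
    · intro j hj hjm
      have hj := Finset.mem_range.1 hj
      rw [if_neg]
      rintro ⟨c, hc⟩
      have : m + j = 2*m*c := by linarith
      rcases c with _ | _ | c
      · omega
      · omega
      · have : 2*m*(c+1+1) = 2*m*c + 4*m := by ring
        have : 0 ≤ 2*m*c := Nat.zero_le _
        omega
    · intro h; exfalso; apply h; rw [Finset.mem_range]; omega
  have s2 : (∑ j ∈ range (6*m+1), if 4*m ∣ 6*m + 2*j then ((6*m).choose j : ZMod (p^2)) else 0)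
      = 2 * ((6*m).choose m : ZMod (p^2)) + ((6*m).choose (3*m) : ZMod (p^2)) := by
    have hs : ({m, 3*m, 5*m} : Finset ℕ) ⊆ range (6*m+1) := by
      intro x hx
      simp only [mem_insert, mem_singleton] at hx
      rw [Finset.mem_range]; omega
    rw [← Finset.sum_subset hs]
    · rw [Finset.sum_insert (by simp; omega), Finset.sum_insert (by simp; omega), Finset.sum_singleton,
        if_pos ⟨2, by ring⟩, if_pos ⟨3, by ring⟩, if_pos ⟨4, by ring⟩,
        Nat.choose_symm_of_eq_add (show 6*m = 5*m + m by ring)]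
      ring
    · intro j hj hjm
      simp only [mem_insert, mem_singleton] at hjm
      have hj := Finset.mem_range.1 hj
      rw [if_neg]
      rintro ⟨c, hc⟩
      have : 3*m + j = 2*m*c := by linarith
      rcases c with _ | _ | _ | _ | _ | c
      · omega
      · omega
      · omega
      · omega
      · omega
      · have : 2*m*(c+1+1+1+1+1) = 2*m*c + 10*m := by ring
        have : 0 ≤ 2*m*c := Nat.zero_le _
        omega
  rw [s1, s2]
  have : ((4*m:ℕ) : ZMod (p^2)) = p - 1 := by
    have := congrArg (Nat.cast (R := ZMod (p^2))) hpm
    push_cast at this ⊢; rw [this]; ring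
  rw [this]; ring

end PartC

section PartD
variable (p : ℕ) [hpF : Fact p.Prime]

theorem unit_fact (k : ℕ) (h : k < p) : IsUnit ((k.factorial : ℕ) : ZMod (p^2)) := by
  induction k with
  | zero => simp
  | succ k ih =>
    rw [Nat.factorial_succ, Nat.cast_mul]
    exact (unit_nat p (k+1) (by omega) h).mul (ih (by omega))

theorem cast_p (m : ℕ) (hpm : p = 4*m+1) : (p : ZMod (p^2)) = 4 * m + 1 := by
  have := congrArg (Nat.cast (R := ZMod (p^2))) hpm
  push_cast at this; exact this

theorem wilson_gen (m : ℕ) (hpm : p = 4*m+1) (k j : ℕ) (h : j + k = 4*m) :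
    ((j.factorial : ℕ) : ZMod p) * ((k.factorial : ℕ) : ZMod p) = (-1)^(k+1) := by
  induction k generalizing j with
  | zero =>
    have := ZMod.wilsons_lemma p
    rw [show p - 1 = j by omega] at this
    simp [this]
  | succ k ih =>
    have := ih (j+1) (by omega)
    have hk : ((k+1 : ℕ) : ZMod p) ≠ 0 := by
      rw [Ne, ZMod.natCast_eq_zero_iff]
      exact Nat.not_dvd_of_pos_of_lt (by omega) (by omega)
    have hs : ((j+1 : ℕ) : ZMod p) = -((k+1 : ℕ) : ZMod p) := by
      have : ((j + 1 + (k+1) : ℕ) : ZMod p) = 0 := by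
        rw [ZMod.natCast_eq_zero_iff]; exact ⟨1, by omega⟩
      rw [Nat.cast_add] at this
      linear_combination this
    rw [Nat.factorial_succ, Nat.cast_mul, hs] at this
    rw [Nat.factorial_succ, Nat.cast_mul, pow_succ]
    linear_combination -this

theorem choose_6m_3m (m : ℕ) (hm : 0 < m) (hpm : p = 4*m+1) :
    ((6*m).choose (3*m) : ZMod (p^2)) * ((2*m).choose m : ZMod (p^2)) = -2 * p := by
  have e1 : ((6*m).choose (3*m)) * (3*m).factorial * (3*m).factorial
      = p * ((4*m).factorial * (p+1).ascFactorial (2*m-1)) := by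
    have h1 := Nat.choose_mul_factorial_mul_factorial (show 3*m ≤ 6*m by omega)
    rw [show 6*m - 3*m = 3*m by omega] at h1
    rw [h1, ← mul_assoc]
    have h2 := Nat.factorial_mul_ascFactorial p (2*m-1)
    rw [show p + (2*m-1) = 6*m by omega] at h2
    rw [← h2]
    congr 1
    rw [hpm, Nat.factorial_succ]
  have e2 : ((2*m).choose m) * m.factorial * m.factorial = (2*m).factorial := by
    have h1 := Nat.choose_mul_factorial_mul_factorial (show m ≤ 2*m by omega)
    rwa [show 2*m - m = m by omega] at h1
  have e3 : (2*m).factorial = (2*m) * (2*m-1).factorial := (Nat.mul_factorial_pred (by omega)).symm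
  have r1 : (p : ZMod (p^2)) * (((4*m).factorial * (p+1).ascFactorial (2*m-1) : ℕ) : ZMod (p^2))
      = p * (-((2*m-1).factorial : ℕ) : ZMod (p^2)) := by
    apply redp_mul
    rw [map_natCast, map_neg, map_natCast, Nat.cast_mul]
    have := wilson_gen p m hpm 0 (4*m) (by omega)
    simp at this
    rw [this]
    have : (((p+1).ascFactorial (2*m-1) : ℕ) : ZMod p) = ((2*m-1).factorial : ℕ) := by
      rw [← Nat.one_ascFactorial, Nat.ascFactorial_eq_prod_range, Nat.ascFactorial_eq_prod_range]
      push_cast; simp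
    rw [this]; ring
  have r2 : (p : ZMod (p^2)) * (((2*m).factorial : ℕ) : ZMod (p^2))^2 = p * (-1) := by
    apply redp_mul
    rw [map_pow, map_natCast, map_neg, map_one, sq, wilson_gen p m hpm (2*m) (2*m) (by omega), pow_succ, pow_mul]
    simp
  have r3 : (p : ZMod (p^2)) * ((((3*m).factorial : ℕ) : ZMod (p^2))*((m.factorial : ℕ) : ZMod (p^2)))^2 = p * 1 := by
    apply redp_mul
    rw [map_pow, map_mul, map_natCast, map_natCast, wilson_gen p m hpm m (3*m) (by omega), map_one, ← pow_mul, mul_comm, pow_mul]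
    simp
  have c1 := congrArg (Nat.cast (R := ZMod (p^2))) e1
  have c2 := congrArg (Nat.cast (R := ZMod (p^2))) e2
  have c3 := congrArg (Nat.cast (R := ZMod (p^2))) e3
  rw [Nat.cast_mul p, r1] at c1
  push_cast at c1 c2 c3
  have hU : IsUnit ((((3*m).factorial : ℕ) : ZMod (p^2))^2 * ((m.factorial : ℕ) : ZMod (p^2))^2 * ((2*m : ℕ) : ZMod (p^2))) :=
    (((unit_fact p _ (by omega)).pow 2).mul ((unit_fact p _ (by omega)).pow 2)).mul (unit_nat p _ (by omega) (by omega))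
  apply hU.mul_left_cancel
  have hp := cast_p p m hpm
  have hz := pp0 p
  push_cast
  generalize (((3*m).factorial : ℕ) : ZMod (p^2)) = x at *
  generalize ((m.factorial : ℕ) : ZMod (p^2)) = y at *
  generalize (((2*m).factorial : ℕ) : ZMod (p^2)) = z at *
  generalize (((2*m-1).factorial : ℕ) : ZMod (p^2)) = t at *
  generalize ((6*m).choose (3*m) : ZMod (p^2)) = E at *
  generalize ((2*m).choose m : ZMod (p^2)) = C at *
  generalize (p : ZMod (p^2)) = P at *
  generalize (m : ZMod (p^2)) = M at *
  have lhs : x^2*y^2*(2*M)*(E*C) = P := by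
    calc x^2*y^2*(2*M)*(E*C) = (E*x*x)*(C*y*y)*(2*M) := by ring
      _ = -(P * z * (2*M*t)) := by rw [c1, c2]; ring
      _ = P := by rw [← c3]; linear_combination -r2
  rw [lhs]
  linear_combination 4*M*r3 - P * hp + hz

theorem choose_4m (m : ℕ) (hpm : p = 4*m+1) (i : ℕ) (hi : i ≤ 4*m) :
    ((4*m).choose i : ZMod p) = (-1)^i := by
  induction i with
  | zero => simp
  | succ i ih =>
    have h1 : ((4*m+1).choose (i+1) : ZMod p) = 0 := by
      rw [ZMod.natCast_eq_zero_iff]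
      have := hpF.out.dvd_choose_self (k := i+1) (by omega) (by omega)
      rwa [← hpm]
    rw [Nat.choose_succ_succ, Nat.cast_add, ih (by omega)] at h1
    rw [pow_succ]; linear_combination h1

theorem inv_mul_nat (k : ℕ) (h0 : 0 < k) (h1 : k < p) : (k : ZMod (p^2)) * (k : ZMod (p^2))⁻¹ = 1 :=
  ZMod.mul_inv_of_unit _ (unit_nat p k h0 h1)

theorem pow2_sum (m : ℕ) (hpm : p = 4*m+1) :
    (2 : ZMod (p^2))^(4*m) - 1 = p * ∑ k ∈ range (2*m), (-1)^k * ((k+1 : ℕ) : ZMod (p^2))⁻¹ := by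
  have h := congrArg (Nat.cast (R := ZMod (p^2))) (Nat.sum_range_choose_halfway (2*m))
  rw [Finset.sum_range_succ'] at h
  push_cast at h
  rw [show (4:ZMod (p^2)) = 2^2 by norm_num, ← pow_mul, show 2*(2*m) = 4*m by ring] at h
  rw [← h, Finset.mul_sum]
  simp only [Nat.choose_zero_right, Nat.cast_one, add_sub_cancel_right]
  refine Finset.sum_congr rfl fun k hk => ?_
  have hk := Finset.mem_range.1 hk
  have h1 := congrArg (Nat.cast (R := ZMod (p^2))) (Nat.add_one_mul_choose_eq (4*m) k)
  have h2 : (p : ZMod (p^2)) * ((4*m).choose k : ZMod (p^2)) = p * (-1)^k := by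
    apply redp_mul
    rw [map_natCast, choose_4m p m hpm k (by omega)]; simp
  have h3 := inv_mul_nat p (k+1) (by omega) (by omega)
  have hp := cast_p p m hpm
  push_cast at h1 h3 ⊢
  rw [← hp, h2] at h1
  linear_combination (-((4*m+1).choose (k+1) : ZMod (p^2))) * h3 - ((k:ZMod (p^2))+1)⁻¹ * h1

theorem alt_sum (m : ℕ) (hpm : p = 4*m+1) (s : ℕ) (hs : s ≤ m) :
    ∑ k ∈ range (2*s), (-1)^k * ((k+1 : ℕ) : ZMod (p^2))⁻¹ = ∑ i ∈ range s, ((s+1+i : ℕ) : ZMod (p^2))⁻¹ := by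
  induction s with
  | zero => simp
  | succ s ih =>
    rw [show 2*(s+1) = 2*s+1+1 by ring, Finset.sum_range_succ, Finset.sum_range_succ, ih (by omega)]
    have e : ∑ i ∈ range (s+1), ((s+1+1+i : ℕ) : ZMod (p^2))⁻¹ + ((s+1 : ℕ) : ZMod (p^2))⁻¹ =
      ∑ i ∈ range s, ((s+1+i : ℕ) : ZMod (p^2))⁻¹ + ((2*s+1 : ℕ) : ZMod (p^2))⁻¹ + ((2*s+1+1 : ℕ) : ZMod (p^2))⁻¹ := by
      have h1 := Finset.sum_range_succ' (fun i => ((s+1+i : ℕ) : ZMod (p^2))⁻¹) (s+1)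
      rw [Finset.sum_range_succ, Finset.sum_range_succ] at h1
      rw [show 2*s+1 = s+1+s by ring, show s+1+s+1 = s+1+(s+1) by ring, h1]
      rw [add_zero]
      congr 1
      refine Finset.sum_congr rfl fun i _ => ?_
      congr 2; ring
    have h2 : ((s+1 : ℕ) : ZMod (p^2))⁻¹ = 2 * ((2*s+1+1 : ℕ) : ZMod (p^2))⁻¹ := by
      have u := inv_mul_nat p (s+1) (by omega) (by omega)
      have v := inv_mul_nat p (2*s+1+1) (by omega) (by omega)
      have e : ((2*s+1+1 : ℕ) : ZMod (p^2)) = 2 * ((s+1 : ℕ) : ZMod (p^2)) := by push_cast; ring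
      rw [e] at v ⊢
      linear_combination 2 * (2 * ((s+1 : ℕ) : ZMod (p^2)))⁻¹ * u - ((s+1 : ℕ) : ZMod (p^2))⁻¹ * v
    have h3 : (-1 : ZMod (p^2))^(2*s) = 1 := by rw [pow_mul]; simp
    rw [pow_succ (-1 : ZMod (p^2)) (2*s), h3]
    linear_combination -e + h2

theorem prod_shift (m : ℕ) (hm : 0 < m) (hpm : p = 4*m+1) (s : ℕ) (hs : s ≤ m) :
    ∏ i ∈ range s, ((p : ZMod (p^2)) + ((m+i : ℕ) : ZMod (p^2))) =
     (∏ i ∈ range s, ((m+i : ℕ) : ZMod (p^2))) * (1 + p * ∑ i ∈ range s, ((m+i : ℕ) : ZMod (p^2))⁻¹) := by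
  induction s with
  | zero => simp
  | succ s ih =>
    rw [Finset.prod_range_succ, Finset.prod_range_succ, Finset.sum_range_succ, ih (by omega)]
    have u := inv_mul_nat p (m+s) (by omega) (by omega)
    have hz := pp0 p
    generalize ((m+s : ℕ) : ZMod (p^2))⁻¹ = y at *
    generalize ((m+s : ℕ) : ZMod (p^2)) = x at *
    generalize (∏ i ∈ range s, ((m+i : ℕ) : ZMod (p^2))) = A at *
    generalize (∑ i ∈ range s, ((m+i : ℕ) : ZMod (p^2))⁻¹) = B at *
    linear_combination A * B * hz - A * p * u

theorem choose_6m_m (m : ℕ) (hm : 0 < m) (hpm : p = 4*m+1) :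
    2 * ((6*m).choose m : ZMod (p^2)) = ((2*m).choose m : ZMod (p^2)) * (2^(4*m) - 2 * p) := by
  have hp := cast_p p m hpm
  have hz := pp0 p
  have a1 := congrArg (Nat.cast (R := ZMod (p^2))) (Nat.ascFactorial_eq_factorial_mul_choose (5*m) m)
  rw [Nat.ascFactorial_eq_prod_range, show 5*m+m = 6*m by ring, Nat.cast_prod] at a1
  have a2 : ∏ i ∈ range m, ((5*m+1+i : ℕ) : ZMod (p^2)) = ∏ i ∈ range m, ((p : ZMod (p^2)) + ((m+i : ℕ) : ZMod (p^2))) := by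
    refine Finset.prod_congr rfl fun i _ => ?_
    rw [hp]; push_cast; ring
  rw [a2, prod_shift p m hm hpm m le_rfl] at a1
  have b1 : 2 * ∏ i ∈ range m, ((m+i : ℕ) : ZMod (p^2)) = (m.factorial : ℕ) * ((2*m).choose m : ZMod (p^2)) := by
    have h1 := Nat.ascFactorial_eq_factorial_mul_choose m m
    rw [← two_mul, Nat.ascFactorial_eq_prod_range] at h1
    have h2 : m * ∏ i ∈ range m, (m+1+i) = (2*m) * ∏ i ∈ range m, (m+i) := by
      have := Finset.prod_range_succ' (fun i => m+i) m
      rw [Finset.prod_range_succ] at this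
      have e : ∀ i, m + 1 + i = m + (i+1) := by intro i; ring
      simp only [e]
      simp only [add_zero] at this
      rw [mul_comm, ← this]; ring
    rw [h1] at h2
    have h3 : m.factorial * (2*m).choose m = 2 * ∏ i ∈ range m, (m+i) :=
      Nat.eq_of_mul_eq_mul_left hm (by rw [h2]; ring)
    have := congrArg (Nat.cast (R := ZMod (p^2))) h3
    push_cast at this ⊢
    exact this.symm
  have c1 : (p : ZMod (p^2)) * ∑ i ∈ range m, ((m+i : ℕ) : ZMod (p^2))⁻¹ = (2^(4*m) - 1) - 2 * p := by
    have h1 := Finset.sum_range_succ' (fun i => ((m+i : ℕ) : ZMod (p^2))⁻¹) m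
    rw [Finset.sum_range_succ] at h1
    have e : ∑ i ∈ range m, ((m+(i+1) : ℕ) : ZMod (p^2))⁻¹ = ∑ i ∈ range m, ((m+1+i : ℕ) : ZMod (p^2))⁻¹ := by
      refine Finset.sum_congr rfl fun i _ => ?_
      congr 2; ring
    rw [e, add_zero] at h1
    have q := pow2_sum p m hpm
    rw [alt_sum p m hpm m le_rfl] at q
    rw [q]
    have u := inv_mul_nat p m (by omega) (by omega)
    have v := inv_mul_nat p (m+m) (by omega) (by omega)
    push_cast at u v h1 ⊢
    have u' : (p : ZMod (p^2)) * (m : ZMod (p^2))⁻¹ = -4 * p := by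
      linear_combination (-4 * p) * u - p * (m : ZMod (p^2))⁻¹ * hp + (m : ZMod (p^2))⁻¹ * hz
    have v' : (p : ZMod (p^2)) * ((m : ZMod (p^2)) + m)⁻¹ = -2 * p := by
      linear_combination (-2 * p) * v - p * ((m : ZMod (p^2)) + m)⁻¹ * hp + ((m : ZMod (p^2)) + m)⁻¹ * hz
    linear_combination p * h1 + u' - v'
  rw [c1] at a1
  apply (unit_fact p m (by omega)).mul_left_cancel
  rw [Nat.cast_mul] at a1
  linear_combination -2 * a1 + (2^(4*m) - 2 * (p:ZMod (p^2))) * b1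

theorem final_ring {R : Type*} [CommRing R] (P C E Cm Q w v T a A : R) (hz : P * P = 0)
    (hC : IsUnit C) (hE : E * C = -2 * P) (hCm : 2 * Cm = C * (Q - 2 * P)) (hQ : Q = w^2) (hw : w = 1 + P * v)
    (hT : T = C * (2 - w)) (hA : 2 * (2 * A) = (P - 1) * (3 * C - 2 * Cm - E)) (ha : a = -A) :
    4 * (2 * a * T - (4 * a^2 - P)) = 0 := by
  have hPE : P * E = 0 := by
    apply hC.mul_left_cancel; linear_combination P * hE - 2 * hz
  have hE2 : E * E = 0 := by
    apply hC.mul_left_cancel; linear_combination E * hE - 2 * hPE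
  have hX : 4 * a = 2 * T - E := by
    have hA' : 4 * a = (1 - P) * (3 * C - 2 * Cm - E) := by rw [ha]; linear_combination -hA
    rw [hA', hCm, hT, hQ, hw]
    linear_combination (-v^2*C + P*v^2*C+2*C*v - 2*C) * hz + hPE
  have hTE : T * E = -2 * P := by
    rw [hT, hw]; linear_combination (1 - P * v) * hE + 2 * v * hz
  have : 4 * (2 * a * T - (4 * a^2 - P)) = 2 * (4*a) * T - (4*a)^2 + 4 * P := by ring
  rw [this, hX]
  linear_combination 2 * hTE - hE2

theorem case_one (m : ℕ) (hm : 0 < m) (hpm : p = 4*m+1) (a b : ℤ) (hab : (p:ℤ) = a^2+b^2) (ha : a % 4 = 1) :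
    ((2 * a * (∑ k ∈ range (2*m+1), ((2*k).choose k : ℤ)^2 * 32^(2*m-k)) - 32^(2*m) * (4*a^2 - p) : ℤ) : ZMod (p^2)) = 0 := by
  have h2 : p ≠ 2 := by omega
  obtain ⟨g, hg0, hg, hsum⟩ := exists_gen p m hpm
  obtain ⟨A, hA, hA4⟩ := chi_sum_mod4 p m hm hpm g hg0 hg
  have hS : jacS p 1 = 2 * A := by
    rw [← hA, jacS]
    have := hsum (fun x => quadraticChar (ZMod p) (x * (x^2+1))) (by simp)
    rw [← this]
    simp only [map_mul]
  obtain ⟨B, hB⟩ := jacS_sq_sum p h2 (chi_neg_one p m hpm)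
  rw [hS] at hB
  have hBe : (2:ℤ) ∣ B := by
    apply Int.prime_two.dvd_of_dvd_pow (n := 2)
    exact ⟨2 * p - 2 * A^2, by linarith⟩
  obtain ⟨B', rfl⟩ := hBe
  have hAA : a^2 = A^2 := two_sq_unique p hpF.out h2 a b A B' hab (by linarith) (by omega) (by omega)
  have haA : a = -A := by
    rcases sq_eq_sq_iff_eq_or_eq_neg.1 hAA with h | h
    · omega
    · exact h
  have hc := char_sum p m hm hpm g hg0 hg
  rw [hA] at hc
  set w : ZMod (p^2) := (-1)^m * 2^(2*m) with hw
  have hsgn : ((-1 : ZMod (p^2))^m)^2 = 1 := by rw [← pow_mul, mul_comm, pow_mul]; simp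
  obtain ⟨v, hv⟩ : ∃ v, w = 1 + p * v := by
    apply redp_ker
    have hch : ringChar (ZMod p) ≠ 2 := by rw [ZMod.ringChar_zmod_n]; omega
    have h1 := quadraticChar_eq_pow_of_char_ne_two' hch (2 : ZMod p)
    rw [ZMod.card, show p/2 = 2*m by omega, chi_two p m hpm] at h1
    rw [hw, map_mul, map_pow, map_pow, map_neg, map_one, map_ofNat, ← h1]
    push_cast
    rw [← pow_add, ← two_mul, pow_mul]; simp
  have hz := pp0 p
  have hCu : IsUnit ((2*m).choose m : ZMod (p^2)) := by
    have h1 := Nat.choose_mul_factorial_mul_factorial (show m ≤ 2*m by omega)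
    have h3 := unit_fact p (2*m) (by omega)
    rw [← h1, Nat.cast_mul, Nat.cast_mul] at h3
    exact isUnit_of_mul_isUnit_left (isUnit_of_mul_isUnit_left h3)
  have hfin := final_ring (p : ZMod (p^2)) _ _ _ (2^(4*m)) w v (((2*m).choose m : ZMod (p^2)) * (2 - w)) (a : ZMod (p^2)) (A : ZMod (p^2))
    hz hCu (choose_6m_3m p m hm hpm) (choose_6m_m p m hm hpm)
    (by rw [hw, mul_pow, hsgn, one_mul, ← pow_mul]; congr 1; ring) hv rfl
    (by rw [← hc]; push_cast; ring) (by rw [haA]; push_cast; ring)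
  have hs := sum_main p (2*m) (by omega)
  have hsingle : (∑ j ∈ range (2*m+1), if 2*m = 2*j then (-1)^j * ((2*m).choose j : ZMod (p^2)) else 0)
      = (-1)^m * ((2*m).choose m : ZMod (p^2)) := by
    rw [Finset.sum_eq_single m (by intro j _ hj; rw [if_neg]; omega)
      (by intro h; exfalso; apply h; rw [Finset.mem_range]; omega), if_pos rfl]
  rw [hsingle] at hs
  have hww : w * (2 - w) = 1 := by rw [hv]; linear_combination (-v^2) * hz
  have hs' : ∑ k ∈ range (2*m+1), ((2*k).choose k : ZMod (p^2))^2 * 32^(2*m-k) = 32^(2*m) * (((2*m).choose m : ZMod (p^2)) * (2 - w)) := by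
    have h5 : w * ∑ k ∈ range (2*m+1), ((2*k).choose k : ZMod (p^2))^2 * 32^(2*m-k) = 32^(2*m) * ((2*m).choose m : ZMod (p^2)) := by
      rw [hw, mul_assoc, hs]; linear_combination (32^(2*m) * ((2*m).choose m : ZMod (p^2))) * hsgn
    linear_combination (2 - w) * h5 - (∑ k ∈ range (2*m+1), ((2*k).choose k : ZMod (p^2))^2 * 32^(2*m-k)) * hww
  have h4 : IsUnit (4 : ZMod (p^2)) := by
    have := unit_nat p 4 (by omega) (by omega)
    exact_mod_cast this
  apply h4.mul_left_cancel
  push_cast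
  rw [hs']
  linear_combination 32^(2*m) * hfin

theorem case_three (n : ℕ) (hpn : p = 2*n+1) (hn : n % 2 = 1) :
    ((∑ k ∈ range (n+1), ((2*k).choose k : ℤ)^2 * 32^(n-k) : ℤ) : ZMod (p^2)) = 0 := by
  have hs := sum_main p n hpn
  rw [Finset.sum_eq_zero (s := range (n+1)) (f := fun j => if n = 2*j then (-1)^j * (n.choose j : ZMod (p^2)) else 0)
    (by intro j _; rw [if_neg]; omega), mul_zero] at hs
  have h2 : IsUnit (2 : ZMod (p^2)) := by
    have := unit_nat p 2 (by omega) (by omega)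
    exact_mod_cast this
  apply (h2.pow n).mul_left_cancel
  push_cast
  rw [hs, mul_zero]

end PartD

theorem not_dvd_den (p : ℕ) (hp : p.Prime) (M D : ℤ) (hD : ¬ (p:ℤ) ∣ D) : ¬ p ∣ ((M : ℚ) / D).den := by
  intro h
  apply hD
  have := Rat.den_dvd M D
  rw [Rat.divInt_eq_div] at this
  exact (Int.natCast_dvd_natCast.2 h).trans this

theorem sum_clear (n : ℕ) : (∑ k ∈ range (n+1), ((2 * k).choose k : ℚ) ^ 2 / 32 ^ k) =
    ((∑ k ∈ range (n+1), ((2*k).choose k : ℤ)^2 * 32^(n-k) : ℤ) : ℚ) / 32^n := by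
  push_cast
  rw [Finset.sum_div]
  refine Finset.sum_congr rfl fun k hk => ?_
  have hk : k ≤ n := by have := Finset.mem_range.1 hk; omega
  have e : (32:ℚ)^n = 32^(n-k) * 32^k := by rw [← pow_add, Nat.sub_add_cancel hk]
  rw [e]; field_simp

theorem p_not_dvd_32 (p : ℕ) (hp : p.Prime) (hodd : p ≠ 2) (n : ℕ) : ¬ (p:ℤ) ∣ 32^n := by
  intro h
  have h1 : p ∣ 32^n := by exact_mod_cast h
  have h2 := hp.dvd_of_dvd_pow h1
  rw [show 32 = 2^5 by norm_num] at h2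
  exact hodd ((Nat.prime_dvd_prime_iff_eq hp Nat.prime_two).1 (hp.dvd_of_dvd_pow h2))

theorem stmt6 (p : ℕ) (hp : p.Prime) (hodd : p ≠ 2) :
    (p % 4 = 3 →
      ratCongr p 2
        (∑ k ∈ Finset.range ((p - 1) / 2 + 1), ((2 * k).choose k : ℚ) ^ 2 / 32 ^ k) 0) ∧
    (∀ a b : ℤ, p % 4 = 1 → (p : ℤ) = a ^ 2 + b ^ 2 → a % 4 = 1 →
      ratCongr p 2
        (∑ k ∈ Finset.range ((p - 1) / 2 + 1), ((2 * k).choose k : ℚ) ^ 2 / 32 ^ k)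
        (2 * (a : ℚ) - (p : ℚ) / (2 * (a : ℚ)))) := by
  have : Fact p.Prime := ⟨hp⟩
  have hpp : Prime (p:ℤ) := Nat.prime_iff_prime_int.1 hp
  have h32 := p_not_dvd_32 p hp hodd
  constructor
  · intro h3
    have h := case_three p ((p-1)/2) (by omega) (by omega)
    rw [ZMod.intCast_zmod_eq_zero_iff_dvd] at h
    obtain ⟨M, hM⟩ := h
    refine ⟨(M : ℚ) / ((32^((p-1)/2) : ℤ) : ℚ), ?_, not_dvd_den p hp _ _ (h32 _)⟩
    rw [sum_clear, hM]
    push_cast; ring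
  · intro a b h1 hab ha
    obtain ⟨m, hm⟩ : ∃ m, p = 4*m+1 := ⟨p/4, by omega⟩
    have hm0 : 0 < m := by
      have := hp.two_le
      omega
    have h := case_one p m hm0 hm a b hab ha
    rw [ZMod.intCast_zmod_eq_zero_iff_dvd] at h
    obtain ⟨M, hM⟩ := h
    have ha0 : a ≠ 0 := by omega
    have hpa : ¬ (p:ℤ) ∣ a := by
      intro hd
      have hb : (p:ℤ) ∣ b := by
        apply hpp.dvd_of_dvd_pow (n := 2)
        rw [show b^2 = p - a^2 by linarith]
        exact dvd_sub dvd_rfl (dvd_pow hd two_ne_zero)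
      obtain ⟨c, hc⟩ := hd
      obtain ⟨d, hd⟩ := hb
      rw [hc, hd] at hab
      have : (p:ℤ) * 1 = p * (p * (c^2+d^2)) := by linarith
      have := mul_left_cancel₀ hpp.ne_zero this
      exact hpp.not_isUnit (isUnit_of_dvd_one ⟨_, this⟩)
    have hp2 : ¬ (p:ℤ) ∣ 2 := by
      intro h
      exact hodd ((Nat.prime_dvd_prime_iff_eq hp Nat.prime_two).1 (by exact_mod_cast h))
    refine ⟨(M : ℚ) / ((32^(2*m) * (2 * a) : ℤ) : ℚ), ?_, not_dvd_den p hp _ _ ?_⟩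
    · rw [show (p-1)/2 = 2*m by omega, sum_clear]
      have hQ := congrArg (Int.cast (R := ℚ)) hM
      rw [Int.cast_sub, Int.cast_mul, Int.cast_mul] at hQ
      have ha' : (a:ℚ) ≠ 0 := by exact_mod_cast ha0
      generalize ((∑ k ∈ range (2*m+1), ((2*k).choose k : ℤ)^2 * 32^(2*m-k) : ℤ) : ℚ) = S at *
      have h32' : (32:ℚ)^(2*m) ≠ 0 := by positivity
      push_cast at hQ ⊢
      generalize (32:ℚ)^(2*m) = t at *
      field_simp
      linear_combination hQ
    · intro hd
      rcases hpp.dvd_or_dvd hd with hd | hd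
      · exact h32 _ hd
      · rcases hpp.dvd_or_dvd hd with hd | hd
        · exact hp2 hd
        · exact hpa hd
end

section
/- Let p be an odd prime. If p \equiv 1 (mod 4), then \sum_{k=0}^{(p-1)/2} k^2 \binom{2k}{k}^2 / 32^k \equiv (-1)^{(p+3)/4} 2^{-(p-1)/2} ((p+3)/2)! / ( ((p-5)/4)! ((p+3)/4)! ) \pmod{p^2}. If p \equiv 3 (mod 4), then \sum_{k=0}^{(p-1)/2} k^2 \binom{2k}{k}^2 / 32^k \equiv (-1)^{(p+1)/4} 2^{-(p-1)/2} ((p+1)/2)! / ( ((p-3)/4)! ((p+1)/4)! ) \pmod{p^2}. -/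
open Finset

/-- The terms of the Legendre polynomial `P_n(1 - 2t)` at `t = 1/2`. -/
def legT (n k : ℕ) : ℚ := ((n + k).choose (2 * k) : ℚ) * ((2 * k).choose k : ℚ) * (-1 / 2) ^ k

theorem legT_zero {n k : ℕ} (h : n < k) : legT n k = 0 := by
  unfold legT
  rw [Nat.choose_eq_zero_of_lt (by omega)]; simp

theorem cb_rec (k : ℕ) :
    ((k : ℚ) + 1) * ((2 * (k + 1)).choose (k + 1) : ℚ) = 2 * (2 * k + 1) * ((2 * k).choose k : ℚ) := by
  have := Nat.succ_mul_centralBinom_succ k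
  simp only [Nat.centralBinom] at this
  exact_mod_cast this

theorem ch_a (n k : ℕ) : (2 * (k : ℚ) + 1) * ((n + k + 1).choose (2 * k + 1) : ℚ)
    = (n + k + 1) * ((n + k).choose (2 * k) : ℚ) := by
  have := Nat.add_one_mul_choose_eq (n + k) (2 * k)
  have h2 : ((n + k + 1) * (n + k).choose (2 * k) : ℚ) =
    (n + k + 1).choose (2 * k + 1) * (2 * k + 1) := by exact_mod_cast this
  linarith

theorem ch_b (a b : ℕ) : ((b : ℚ) + 1) * (a.choose (b + 1) : ℚ) = (a - b) * (a.choose b : ℚ) := by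
  have := Nat.choose_succ_right_eq a b
  rcases le_or_gt b a with h | h
  · have h2 : (a.choose (b + 1) : ℚ) * (b + 1) = a.choose b * ((a - b : ℕ) : ℚ) := by
      exact_mod_cast this
    rw [Nat.cast_sub h] at h2
    linarith
  · rw [Nat.choose_eq_zero_of_lt h, Nat.choose_eq_zero_of_lt (by omega)]; simp

theorem pascal (n k : ℕ) : ((n + 1 + (k + 1)).choose (2 * (k + 1)) : ℚ) =
    ((n + k + 1).choose (2 * k + 1) : ℚ) + ((n + (k + 1)).choose (2 * (k + 1)) : ℚ) := by
  have : n + 1 + (k + 1) = (n + k + 1) + 1 := by ring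
  rw [this, show 2 * (k + 1) = (2 * k + 1) + 1 by ring, Nat.choose_succ_succ,
    show n + (k + 1) = n + k + 1 by ring]
  push_cast; rfl

theorem legT_i (n k : ℕ) : ((k : ℚ) + 1) * legT (n + 1) (k + 1) =
    (k + 1) * legT n (k + 1) - (n + k + 1) * legT n k := by
  unfold legT
  rw [pascal, pow_succ]
  have h1 := cb_rec k
  have h2 := ch_a n k
  linear_combination (-1 / 2) * (-1 / 2) ^ k * ((n + k + 1).choose (2 * k + 1) : ℚ) * h1
    - ((2 * k).choose k : ℚ) * (-1 / 2) ^ k * h2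

theorem legT_ii (n k : ℕ) : ((n : ℚ) + 1 - k) * legT (n + 1) k =
    (k + 1) * legT n (k + 1) - (k + 1) * legT (n + 1) (k + 1) := by
  unfold legT
  rw [pascal, pow_succ]
  have h1 := cb_rec k
  have h2 := ch_b (n + k + 1) (2 * k)
  rw [show n + 1 + k = n + k + 1 by ring]
  push_cast at h2
  linear_combination (1 / 2) * (-1 / 2) ^ k * ((n + k + 1).choose (2 * k + 1) : ℚ) * (-h1)
    - ((2 * k).choose k : ℚ) * (-1 / 2) ^ k * h2

theorem legT_iii (n k : ℕ) : 2 * ((k : ℚ) + 1) ^ 2 * legT n (k + 1) =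
    - (n - k) * (n + k + 1) * legT n k := by
  unfold legT
  have h1 := cb_rec k
  have h2 := ch_b (n + k + 1) (2 * k + 1)
  have h3 := ch_a n k
  rw [pow_succ, show n + (k + 1) = n + k + 1 by ring, show 2 * (k + 1) = 2 * k + 1 + 1 by ring] at *
  push_cast at h2
  linear_combination (-(k + 1) : ℚ) * (-1 / 2) ^ k * ((n + k + 1).choose (2 * k + 1 + 1) : ℚ) * h1
    - (2 * k + 1) * ((2 * k).choose k : ℚ) * (-1 / 2) ^ k * h2
    - (n - k) * ((2 * k).choose k : ℚ) * (-1 / 2) ^ k * h3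

def legA (n : ℕ) : ℚ := ∑ k ∈ range (n + 1), legT n k
def legK (n : ℕ) : ℚ := ∑ k ∈ range (n + 1), (k : ℚ) * legT n k
def legS (n : ℕ) : ℚ := ∑ k ∈ range (n + 1), (k : ℚ) ^ 2 * legT n k

/-- Index shift for sums of the terms with vanishing boundary. -/
theorem shift (f : ℕ → ℚ) (M : ℕ) (h0 : f 0 = 0) (hM : f M = 0) :
    ∑ k ∈ range M, f (k + 1) = ∑ k ∈ range M, f k := by
  have h1 := sum_range_succ f M
  have h2 := sum_range_succ' f M
  linarith

theorem legS_eq (n : ℕ) : legS n = - n * (n + 1) * legA n + legK n := by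
  have hs := shift (fun k => 2 * (k : ℚ) ^ 2 * legT n k) (n + 1) (by simp)
    (by simp [legT_zero (Nat.lt_succ_self n)])
  have h : ∑ k ∈ range (n + 1), (2 * ((k + 1 : ℕ) : ℚ) ^ 2 * legT n (k + 1)) =
      - n * (n + 1) * legA n + legK n + legS n := by
    unfold legA legK legS
    rw [mul_sum, ← sum_add_distrib, ← sum_add_distrib]
    refine sum_congr rfl fun k _ => ?_
    have := legT_iii n k
    push_cast
    linear_combination this
  have h' : ∑ k ∈ range (n + 1), (2 * (k : ℚ) ^ 2 * legT n k) = 2 * legS n := by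
    unfold legS
    rw [mul_sum]
    exact sum_congr rfl fun k _ => by ring
  linarith

theorem legA_ext (n : ℕ) : legA n = ∑ k ∈ range (n + 2), legT n k := by
  rw [sum_range_succ, legT_zero (Nat.lt_succ_self n), add_zero]; rfl
theorem legK_ext (n : ℕ) : legK n = ∑ k ∈ range (n + 2), (k : ℚ) * legT n k := by
  rw [sum_range_succ, legT_zero (Nat.lt_succ_self n), mul_zero, add_zero]; rfl

theorem shiftK (n M : ℕ) (h : n < M) : ∑ k ∈ range M, ((k : ℚ) + 1) * legT n (k + 1) =
    ∑ k ∈ range M, (k : ℚ) * legT n k := by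
  have := shift (fun k => (k : ℚ) * legT n k) M (by simp) (by simp [legT_zero h])
  simpa using this

theorem legK_succ (n : ℕ) : legK (n + 1) = - (n + 1) * legA n := by
  have h1 := shiftK (n + 1) (n + 2) (by omega)
  have h2 := shiftK n (n + 2) (by omega)
  have h3 : ∑ k ∈ range (n + 2), ((k : ℚ) + 1) * legT (n + 1) (k + 1) =
      ∑ k ∈ range (n + 2), ((k : ℚ) + 1) * legT n (k + 1) - legK n - (n + 1) * legA n := by
    rw [legA_ext, legK_ext, mul_sum, ← sum_sub_distrib, ← sum_sub_distrib]
    refine sum_congr rfl fun k _ => ?_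
    rw [legT_i]; ring
  have h4 : legK (n + 1) = ∑ k ∈ range (n + 2), (k : ℚ) * legT (n + 1) k := rfl
  have h5 := legK_ext n
  linarith

theorem legA_succ (n : ℕ) : ((n : ℚ) + 1) * legA (n + 1) = legK n := by
  have h1 := shiftK (n + 1) (n + 2) (by omega)
  have h2 := shiftK n (n + 2) (by omega)
  have h3 : ((n : ℚ) + 1) * legA (n + 1) - legK (n + 1) =
      ∑ k ∈ range (n + 2), ((k : ℚ) + 1) * legT n (k + 1) -
      ∑ k ∈ range (n + 2), ((k : ℚ) + 1) * legT (n + 1) (k + 1) := by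
    unfold legA legK
    rw [mul_sum, ← sum_sub_distrib, ← sum_sub_distrib]
    refine sum_congr rfl fun k _ => ?_
    rw [← legT_ii]; ring
  have h4 : legK (n + 1) = ∑ k ∈ range (n + 2), (k : ℚ) * legT (n + 1) k := rfl
  have h5 := legK_ext n
  linarith

theorem leg_closed (m : ℕ) : legK (2 * m) = 0 ∧
    legA (2 * m) = (-1 / 4) ^ m * ((2 * m).choose m : ℚ) := by
  induction m with
  | zero => simp [legK, legA, legT]
  | succ m ih =>
    obtain ⟨h1, h2⟩ := ih
    have a := legA_succ (2 * m)
    have b := legK_succ (2 * m)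
    have c := legA_succ (2 * m + 1)
    have d := legK_succ (2 * m + 1)
    rw [h1] at a
    have a' : legA (2 * m + 1) = 0 := by
      rcases mul_eq_zero.1 a with h | h
      · have : (0 : ℚ) < ((2 * m : ℕ) : ℚ) + 1 := by positivity
        linarith
      · exact h
    rw [show 2 * (m + 1) = 2 * m + 1 + 1 by ring]
    refine ⟨by rw [d, a', mul_zero], ?_⟩
    have e := cb_rec m
    rw [show 2 * (m + 1) = 2 * m + 1 + 1 by ring] at e
    rw [b, h2] at c
    push_cast at c
    have hm : (2 * ((m : ℚ) + 1)) ≠ 0 := by positivity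
    apply mul_left_cancel₀ hm
    rw [pow_succ]
    linear_combination c + (1 / 2) * (-1 / 4) ^ m * e

theorem choose_fact (m : ℕ) : ((2 * m).factorial : ℚ) =
    ((2 * m).choose m : ℚ) * m.factorial * m.factorial := by
  have := Nat.add_choose_mul_factorial_mul_factorial m m
  rw [← two_mul] at this
  exact_mod_cast this.symm

theorem legS_even (m : ℕ) : legS (2 * (m + 1)) = (-1 : ℚ) ^ (m + 2) *
    ((2 : ℚ) ^ (2 * (m + 1)))⁻¹ * ((2 * (m + 1) + 2).factorial : ℚ) /
      ((m.factorial : ℚ) * ((m + 2).factorial : ℚ)) := by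
  rw [legS_eq, (leg_closed (m + 1)).1, (leg_closed (m + 1)).2]
  have h := choose_fact (m + 1)
  have hm : (m.factorial : ℚ) ≠ 0 := by exact_mod_cast m.factorial_ne_zero
  rw [show 2 * (m + 1) + 2 = (2 * (m + 1) + 1) + 1 by ring, Nat.factorial_succ (2 * (m + 1) + 1),
    Nat.factorial_succ (2 * (m + 1))]
  push_cast
  rw [h, Nat.factorial_succ (m + 1), Nat.factorial_succ m, pow_mul,
    show (-1 / 4 : ℚ) = (-1) / 4 by norm_num, div_pow]
  push_cast
  norm_num
  field_simp
  ring

theorem legS_odd (m : ℕ) : legS (2 * m + 1) = (-1 : ℚ) ^ (m + 1) *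
    ((2 : ℚ) ^ (2 * m + 1))⁻¹ * ((2 * m + 2).factorial : ℚ) /
      ((m.factorial : ℚ) * ((m + 1).factorial : ℚ)) := by
  have a := legA_succ (2 * m)
  rw [(leg_closed m).1] at a
  have a' : legA (2 * m + 1) = 0 := by
    rcases mul_eq_zero.1 a with h | h
    · have : (0 : ℚ) < ((2 * m : ℕ) : ℚ) + 1 := by positivity
      linarith
    · exact h
  rw [legS_eq, a', legK_succ, (leg_closed m).2]
  have h := choose_fact m
  have hm : (m.factorial : ℚ) ≠ 0 := by exact_mod_cast m.factorial_ne_zero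
  rw [show 2 * m + 2 = (2 * m + 1) + 1 by ring, Nat.factorial_succ (2 * m + 1),
    Nat.factorial_succ (2 * m)]
  push_cast
  rw [h, Nat.factorial_succ m, pow_succ (2 : ℚ), pow_mul,
    show (-1 / 4 : ℚ) = (-1) / 4 by norm_num, div_pow]
  push_cast
  norm_num
  field_simp
  ring

theorem key_dvd (n : ℕ) (hp : (2 * n + 1).Prime) (k : ℕ) (hk : k ≤ n) :
    ((2 * n + 1 : ℕ) : ℤ) ^ 2 ∣
      ((2 * k).choose k : ℤ) - (-16) ^ k * ((n + k).choose (2 * k) : ℤ) := by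
  induction k with
  | zero => simp
  | succ k ih =>
    obtain ⟨d, hd⟩ := ih (by omega)
    have hcop : IsCoprime (((2 * n + 1 : ℕ) : ℤ) ^ 2) ((2 * k + 1) * (2 * k + 2) : ℤ) := by
      apply IsCoprime.pow_left
      have h1 : Nat.Coprime (2 * n + 1) ((2 * k + 1) * (2 * k + 2)) := by
        apply Nat.Coprime.mul_right
        · exact (Nat.coprime_of_lt_prime (by omega) (by omega) hp)
        · exact (Nat.coprime_of_lt_prime (by omega) (by omega) hp)
      exact_mod_cast Nat.isCoprime_iff_coprime.2 h1
    apply hcop.dvd_of_dvd_mul_left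
    refine ⟨4 * (2 * k + 1) ^ 2 * d + 4 * (-16) ^ k * ((n + k).choose (2 * k) : ℤ), ?_⟩
    have h1 := cb_rec k
    have h2 := ch_b (n + k + 1) (2 * k + 1)
    have h3 := ch_a n k
    have hd' : (((2 * k).choose k : ℚ) - (-16) ^ k * ((n + k).choose (2 * k) : ℚ))
      = (2 * n + 1) ^ 2 * d := by exact_mod_cast hd
    rw [show n + (k + 1) = n + k + 1 by ring]
    rw [show 2 * (k + 1) = 2 * k + 1 + 1 by ring] at *
    push_cast at h2
    have : ((2 * k + 1) * (2 * k + 2) : ℚ) * (((2 * k + 1 + 1).choose (k + 1) : ℚ) -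
        (-16) ^ (k + 1) * ((n + k + 1).choose (2 * k + 1 + 1) : ℚ)) =
        (2 * n + 1) ^ 2 *
        (4 * (2 * k + 1) ^ 2 * d + 4 * (-16) ^ k * ((n + k).choose (2 * k) : ℚ)) := by
      rw [pow_succ]
      linear_combination (2 * (2 * k + 1) : ℚ) * h1 + 16 * (-16) ^ k * (2 * k + 1) * h2
        + 16 * (-16) ^ k * (n - k) * h3 + 4 * (2 * k + 1) ^ 2 * hd'
    exact_mod_cast this

theorem sum_cong (n : ℕ) (hp : (2 * n + 1).Prime) (M : ℕ) (hM : M ≤ n) :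
    ∃ N : ℤ, ∑ k ∈ range (M + 1), ((k : ℚ) ^ 2 * ((2 * k).choose k : ℚ) ^ 2 / 32 ^ k -
      (k : ℚ) ^ 2 * legT n k) = ((2 * n + 1 : ℕ) : ℚ) ^ 2 * (N / 32 ^ M) := by
  induction M with
  | zero => exact ⟨0, by simp⟩
  | succ M ih =>
    obtain ⟨N, hN⟩ := ih (by omega)
    obtain ⟨d, hd⟩ := key_dvd n hp (M + 1) hM
    rw [sum_range_succ, hN]
    refine ⟨32 * N + (M + 1) ^ 2 * ((2 * (M + 1)).choose (M + 1) : ℤ) * d, ?_⟩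
    have hd' : (((2 * (M + 1)).choose (M + 1) : ℚ) -
      (-16) ^ (M + 1) * ((n + (M + 1)).choose (2 * (M + 1)) : ℚ))
      = (2 * n + 1) ^ 2 * d := by exact_mod_cast hd
    have e : legT n (M + 1) = (-16) ^ (M + 1) * ((n + (M + 1)).choose (2 * (M + 1)) : ℚ) *
        ((2 * (M + 1)).choose (M + 1) : ℚ) / 32 ^ (M + 1) := by
      unfold legT
      rw [show (-1 / 2 : ℚ) = (-16) / 32 by norm_num, div_pow]
      ring
    rw [e]
    push_cast
    have h32 : (32 : ℚ) ^ (M + 1) = 32 ^ M * 32 := pow_succ _ _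
    have h0 : (32 : ℚ) ^ M ≠ 0 := by positivity
    have : (N : ℚ) / 32 ^ M = 32 * N / 32 ^ (M + 1) := by
      rw [h32]; field_simp
    rw [this]
    linear_combination ((M : ℚ) + 1) ^ 2 * ((2 * (M + 1)).choose (M + 1) : ℚ) /
      32 ^ (M + 1) * hd'

theorem main_cong (n : ℕ) (hp : (2 * n + 1).Prime) :
    ratCongr (2 * n + 1) 2 (∑ k ∈ range (n + 1),
      (k : ℚ) ^ 2 * ((2 * k).choose k : ℚ) ^ 2 / 32 ^ k) (legS n) := by
  obtain ⟨N, hN⟩ := sum_cong n hp n le_rfl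
  refine ⟨N / 32 ^ n, ?_, ?_⟩
  · rw [← hN, sum_sub_distrib]; rfl
  · intro h
    have h1 : (((N : ℚ) / 32 ^ n).den : ℤ) ∣ 32 ^ n := by
      have := Rat.den_dvd N (32 ^ n)
      rw [Rat.divInt_eq_div] at this
      push_cast at this
      exact this
    have h2 : (2 * n + 1) ∣ 32 ^ n := h.trans (by exact_mod_cast h1)
    have h3 := hp.dvd_of_dvd_pow h2
    rw [show 32 = 2 ^ 5 by norm_num] at h3
    have h4 := Nat.le_of_dvd (by norm_num) (hp.dvd_of_dvd_pow h3)
    have := hp.two_le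
    omega

theorem stmt8 (p : ℕ) (hp : p.Prime) (hodd : p ≠ 2) :
    (p % 4 = 1 →
      ratCongr p 2
        (∑ k ∈ Finset.range ((p - 1) / 2 + 1),
          (k : ℚ) ^ 2 * ((2 * k).choose k : ℚ) ^ 2 / 32 ^ k)
        ((-1 : ℚ) ^ ((p + 3) / 4) * ((2 : ℚ) ^ ((p - 1) / 2))⁻¹ *
          (((p + 3) / 2).factorial : ℚ) /
            ((((p - 5) / 4).factorial : ℚ) * (((p + 3) / 4).factorial : ℚ)))) ∧
    (p % 4 = 3 →
      ratCongr p 2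
        (∑ k ∈ Finset.range ((p - 1) / 2 + 1),
          (k : ℚ) ^ 2 * ((2 * k).choose k : ℚ) ^ 2 / 32 ^ k)
        ((-1 : ℚ) ^ ((p + 1) / 4) * ((2 : ℚ) ^ ((p - 1) / 2))⁻¹ *
          (((p + 1) / 2).factorial : ℚ) /
            ((((p - 3) / 4).factorial : ℚ) * (((p + 1) / 4).factorial : ℚ)))) := by
  constructor
  · intro h
    have h2 := hp.two_le
    obtain ⟨m, rfl⟩ : ∃ m, p = 2 * (2 * (m + 1)) + 1 := ⟨(p - 5) / 4, by omega⟩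
    have := main_cong (2 * (m + 1)) hp
    rw [legS_even] at this
    rw [show (2 * (2 * (m + 1)) + 1 - 1) / 2 = 2 * (m + 1) by omega,
      show (2 * (2 * (m + 1)) + 1 + 3) / 4 = m + 2 by omega,
      show (2 * (2 * (m + 1)) + 1 + 3) / 2 = 2 * (m + 1) + 2 by omega,
      show (2 * (2 * (m + 1)) + 1 - 5) / 4 = m by omega]
    exact this
  · intro h
    obtain ⟨m, rfl⟩ : ∃ m, p = 2 * (2 * m + 1) + 1 := ⟨(p - 3) / 4, by omega⟩
    have := main_cong (2 * m + 1) hp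
    rw [legS_odd] at this
    rw [show (2 * (2 * m + 1) + 1 - 1) / 2 = 2 * m + 1 by omega,
      show (2 * (2 * m + 1) + 1 + 1) / 4 = m + 1 by omega,
      show (2 * (2 * m + 1) + 1 + 1) / 2 = 2 * m + 2 by omega,
      show (2 * (2 * m + 1) + 1 - 3) / 4 = m by omega]
    exact this
end

section
/- Let p > 5 be a prime. If p \equiv 5 (mod 6), then \sum_{k=0}^{\lfloor p/3 \rfloor} (3k)!/(54^k k!^3) \equiv 0 \pmod{p}. If p \equiv 1 (mod 6) and p = A^2 + 3B^2 with integers A, B and A \equiv 1 (mod 3), then \sum_{k=0}^{\lfloor p/3 \rfloor} (3k)!/(54^k k!^3) \equiv 2A \pmod{p}. -/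
open Finset

open Polynomial in
lemma leg_odd {K : Type*} [Field K] (r : K) (hr : 2 * r = 1) (n : ℕ) (hn : Odd n) :
    aeval r (shiftedLegendre n) = 0 := by
  have h := shiftedLegendre_eval_symm n r
  have h1 : 1 - r = r := by linear_combination -hr
  rw [h1, hn.neg_one_pow] at h
  linear_combination r * h - (aeval r (shiftedLegendre n)) * hr

open Polynomial in
lemma leg_even {K : Type*} [Field K] (r : K) (hr : 2 * r = 1) (m : ℕ)
    (hf : ((2 * m).factorial : K) ≠ 0) :
    aeval r (shiftedLegendre (2 * m)) = (-(r ^ 2)) ^ m * ((2 * m).choose m : K) := by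
  have h := congrArg (aeval r) (factorial_mul_shiftedLegendre_eq (2 * m))
  rw [map_mul, map_natCast, aeval_def, aeval_def, eval₂_eq_eval_map, eval₂_eq_eval_map,
    ← iterate_derivative_map, ← factorial_smul_hasseDeriv] at h
  rw [aeval_def, eval₂_eq_eval_map]
  apply mul_left_cancel₀ hf
  rw [h]
  simp only [Polynomial.map_mul, Polynomial.map_pow, Polynomial.map_sub, Polynomial.map_one, map_X,
    LinearMap.smul_apply, eval_smul]
  rw [nsmul_eq_mul]
  rw [← taylor_coeff]
  congr 1
  have h2 : taylor r ((X : K[X]) ^ (2 * m) * (1 - X) ^ (2 * m))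
      = expand K 2 ((X + C (-(r ^ 2))) ^ (2 * m)) := by
    have hC : (2 : K[X]) * C r = 1 := by
      rw [← map_ofNat C, ← C_mul]; rw [hr]; simp
    rw [taylor_apply]
    simp only [mul_comp, pow_comp, X_comp, sub_comp, one_comp, map_pow, map_add, expand_X, expand_C,
      map_neg]
    rw [← mul_pow, pow_mul, pow_mul]
    congr 1
    have : (X + C r) * (1 - (X + C r)) = -(X ^ 2 + -(C r) ^ 2) := by
      linear_combination (-X - C r) * hC
    rw [this]; ring
  rw [h2, mul_comm 2 m, coeff_expand_mul (by norm_num), coeff_X_add_C_pow]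
  congr 2
  omega

lemma choose_half {K : Type*} [Field K] (h : ℕ) (hh : (2 * h + 1 : K) = 0) (m : ℕ)
    (hm : m ≤ h) (hinv : ∀ k : ℕ, k < m → ((k + 1 : ℕ) : K) ≠ 0) :
    (-1 : K) ^ m * ((2 * m).choose m : K) = 4 ^ m * (h.choose m : K) := by
  induction m with
  | zero => simp
  | succ m ih =>
    have ih := ih (by omega) (fun k hk => hinv k (by omega))
    apply mul_left_cancel₀ (hinv m (by omega))
    have h1 := congrArg (Nat.cast : ℕ → K) (Nat.succ_mul_centralBinom_succ m)
    have h2 := congrArg (Nat.cast : ℕ → K) (Nat.choose_succ_right_eq h m)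
    simp only [Nat.centralBinom] at h1
    rw [Nat.cast_mul, Nat.cast_mul, Nat.cast_sub (by omega)] at h2
    push_cast at h1 h2 ⊢
    rw [pow_succ, pow_succ]
    linear_combination (-(-1) ^ m) * h1 - 4 ^ m * 4 * h2 - 2 * (2 * m + 1) * ih - 2 * 4 ^ m * (h.choose m) * hh

lemma term_eq {K : Type*} [Field K] (n : ℕ) (hn : ((3 * n + 1 : K)) * (3 * n + 2) = 0) (k : ℕ)
    (hk : k ≤ n) (hinv : ∀ j : ℕ, j < k → ((j + 1 : ℕ) : K) ≠ 0) :
    (((3 * k).choose k * (2 * k).choose k : ℕ) : K)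
      = 27 ^ k * ((-1) ^ k * (n.choose k : K) * ((n + k).choose n : K)) := by
  induction k with
  | zero => simp
  | succ k ih =>
    have ih := ih (by omega) (fun k hk => hinv k (by omega))
    have hk0 := hinv k (by omega)
    apply mul_left_cancel₀ hk0
    apply mul_left_cancel₀ hk0
    have h1 : (k + 1) * ((k + 1) * ((3 * (k + 1)).choose (k + 1) * (2 * (k + 1)).choose (k + 1)))
        = 3 * (3 * k + 1) * (3 * k + 2) * ((3 * k).choose k * (2 * k).choose k) := by
      have e1 : ∀ j : ℕ, (3 * j).choose j * (2 * j).choose j * (j.factorial ^ 3) = (3 * j).factorial := by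
        intro j
        have a1 := Nat.choose_mul_factorial_mul_factorial (show j ≤ 3 * j by omega)
        have a2 := Nat.choose_mul_factorial_mul_factorial (show j ≤ 2 * j by omega)
        rw [show 3 * j - j = 2 * j by omega] at a1
        rw [show 2 * j - j = j by omega] at a2
        rw [← a1, ← a2]; ring
      have e2 := e1 (k + 1)
      have e3 := e1 k
      rw [show 3 * (k + 1) = 3 * k + 1 + 1 + 1 by ring, Nat.factorial_succ (3 * k + 1 + 1),
        Nat.factorial_succ (3 * k + 1), Nat.factorial_succ (3 * k), ← e3, Nat.factorial_succ k] at e2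
      have : 0 < (k + 1) * k.factorial ^ 3 := by positivity
      apply Nat.eq_of_mul_eq_mul_right this
      rw [show 3 * (k + 1) = 3 * k + 1 + 1 + 1 by ring]
      linarith
    have h1 := congrArg (Nat.cast : ℕ → K) h1
    have h2 := congrArg (Nat.cast : ℕ → K) (Nat.choose_succ_right_eq n k)
    rw [Nat.cast_mul, Nat.cast_mul, Nat.cast_sub (by omega)] at h2
    have h3 : (n + k + 1).choose n * (k + 1) = (n + k + 1) * (n + k).choose n := by
      have := Nat.add_one_mul_choose_eq (n + k) k
      rw [show (n + k + 1).choose n = (n + k + 1).choose (k + 1) from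
        Nat.choose_symm_of_eq_add (by ring), show (n + k).choose n = (n + k).choose k from
        Nat.choose_symm_of_eq_add (by ring), this]
    have h3 := congrArg (Nat.cast : ℕ → K) h3
    push_cast at h1 h2 h3 ih ⊢
    rw [h1, ih]
    have : (n + (k + 1)).choose n = (n + k + 1).choose n := rfl
    rw [this, pow_succ, pow_succ]
    have h4 : (3 * (3 * k + 1) * (3 * k + 2) : K) = -27 * ((n - k) * (n + k + 1)) := by
      linear_combination 3 * hn
    rw [h4]
    linear_combination 27 ^ (k+1) * (-1) ^ k * (((k : K) + 1) * (n + k + 1).choose n * h2 + n.choose k * (n - k) * h3)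


section FF
variable {F : Type*} [Field F] [Fintype F] [DecidableEq F]

lemma ff_gen (N : ℕ) (hq : Fintype.card F = N + 1) :
    ∃ g : F, g ≠ 0 ∧ g ^ N = 1 ∧
      ∀ H : F → ℤ, ∑ x, H x = H 0 + ∑ i ∈ range N, H (g ^ i) := by
  obtain ⟨g, hg⟩ := IsCyclic.exists_generator (α := Fˣ)
  have hc : Nat.card Fˣ = N := by
    rw [Nat.card_eq_fintype_card, Fintype.card_units, hq]; simp
  have ho : orderOf g = N := by rw [orderOf_eq_card_of_forall_mem_zpowers hg, hc]
  refine ⟨g, g.ne_zero, ?_, fun H => ?_⟩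
  · have := pow_orderOf_eq_one g
    rw [ho] at this
    simpa using congrArg Units.val this
  · rw [← Finset.add_sum_erase univ H (mem_univ 0)]
    congr 1
    symm
    refine Finset.sum_bij (fun i _ => (g : F) ^ i) ?_ ?_ ?_ ?_
    · intro i _; simp
    · intro i hi j hj hij
      have : g ^ i = g ^ j := by ext; simpa using hij
      rw [mem_range, ← ho] at hi hj
      exact pow_injOn_Iio_orderOf hi hj this
    · intro b hb
      have hb0 : b ≠ 0 := by simpa using hb
      have := IsCyclic.image_range_card hg
      have h2 := mem_univ (Units.mk0 b hb0)
      rw [← this, mem_image] at h2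
      obtain ⟨i, hi, h⟩ := h2
      rw [hc] at hi
      exact ⟨i, hi, by simpa using congrArg Units.val h⟩
    · intros; rfl

lemma ff_avg (g : F) (hg : g ≠ 0) (H : F → ℤ) (hH : ∀ a t, t ≠ 0 → H (a * t ^ 3) = H a) (m : ℕ) :
    ∑ i ∈ range (3 * m), H (g ^ i) = m * (H 1 + H g + H (g ^ 2)) := by
  induction m with
  | zero => simp
  | succ m ih =>
    rw [show 3 * (m + 1) = 3 * m + 1 + 1 + 1 by ring, sum_range_succ, sum_range_succ,
      sum_range_succ, ih]
    have h0 := hH 1 (g ^ m) (pow_ne_zero _ hg)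
    have h1 := hH g (g ^ m) (pow_ne_zero _ hg)
    have h2 := hH (g ^ 2) (g ^ m) (pow_ne_zero _ hg)
    rw [show g ^ (3 * m) = 1 * (g ^ m) ^ 3 by ring, show g ^ (3 * m + 1) = g * (g ^ m) ^ 3 by ring,
      show g ^ (3 * m + 1 + 1) = g ^ 2 * (g ^ m) ^ 3 by ring, h0, h1, h2]
    push_cast; ring

lemma ff_count (f : ℕ) (hq : Fintype.card F = 6 * f + 1) (y : F) (hy : y ≠ 0) :
    (univ.filter (fun x : F => x ^ 3 = y ^ 3)).card = 3 := by
  have : Fact (Nat.Prime 3) := ⟨Nat.prime_three⟩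
  have hd : 3 ∣ Fintype.card Fˣ := by
    rw [Fintype.card_units, hq]; exact ⟨2 * f, by omega⟩
  obtain ⟨u, hu⟩ := exists_prime_orderOf_dvd_card 3 hd
  have hu3 : (u : F) ^ 3 = 1 := by
    have := pow_orderOf_eq_one u
    rw [hu] at this
    simpa using congrArg Units.val this
  have hu1 : (u : F) ≠ 1 := by
    intro h
    have : u = 1 := by ext; simpa using h
    rw [this, orderOf_one] at hu; omega
  set w : F := (u : F) with hwdef
  have hw0 : w ≠ 0 := u.ne_zero
  have hw : w ^ 2 + w + 1 = 0 := by
    have : (w - 1) * (w ^ 2 + w + 1) = 0 := by linear_combination hu3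
    exact (mul_eq_zero.1 this).resolve_left (sub_ne_zero.2 hu1)
  have : univ.filter (fun x : F => x ^ 3 = y ^ 3) = {y, w * y, w ^ 2 * y} := by
    ext x
    simp only [mem_filter, mem_univ, true_and, mem_insert, mem_singleton]
    constructor
    · intro h
      have : (x - y) * ((x - w * y) * (x - w ^ 2 * y)) = 0 := by
        linear_combination h + (x - y) * (- x * y) * hw + (x-y) * y ^ 2 * hu3
      rcases mul_eq_zero.1 this with h | h
      · left; linear_combination h
      rcases mul_eq_zero.1 h with h | h
      · right; left; linear_combination h
      · right; right; linear_combination h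
    · rintro (h | h | h) <;> rw [h]
      · linear_combination y ^ 3 * hu3
      · linear_combination y ^ 3 * (w ^ 3 + 1) * hu3
  rw [this]
  have hw2 : w ^ 2 ≠ 1 := by
    intro h; apply hu1; linear_combination hu3 - w * h
  rw [card_insert_of_notMem, card_insert_of_notMem, card_singleton]
  · rw [mem_singleton]; intro h
    apply hu1
    have := mul_right_cancel₀ hy h
    apply mul_left_cancel₀ hw0; linear_combination -this
  · rw [mem_insert, mem_singleton]
    rintro (h | h)
    · apply hu1; apply mul_right_cancel₀ hy; linear_combination -h
    · apply hw2; apply mul_right_cancel₀ hy; linear_combination -h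

lemma ff_pair0 (hF : ringChar F ≠ 2) (w : F) (hw : w ≠ 0) :
    ∑ a : F, quadraticChar F a * quadraticChar F (a + w) = -1 := by
  have h1 : ∑ a : F, quadraticChar F (1 + w * a) = 0 := by
    rw [← quadraticChar_sum_zero hF]
    exact Fintype.sum_equiv ((Equiv.mulLeft₀ w hw).trans (Equiv.addLeft 1)) _ _ (fun x => rfl)
  have h2 : ∑ a : F, quadraticChar F (1 + w * a⁻¹) = 0 := by
    rw [← h1]
    exact Fintype.sum_equiv (Equiv.inv F) _ _ (fun x => rfl)
  have h3 : ∀ a : F, quadraticChar F a * quadraticChar F (a + w) = quadraticChar F (1 + w * a⁻¹) - if a = 0 then 1 else 0 := by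
    intro a
    split_ifs with h
    · simp [h]
    · rw [← map_mul, show a * (a + w) = a ^ 2 * (1 + w * a⁻¹) by field_simp, map_mul,
        quadraticChar_sq_one' h]; ring
  simp_rw [h3, sum_sub_distrib, h2]
  simp

lemma ff_pair (hF : ringChar F ≠ 2) (u v : F) :
    ∑ a : F, quadraticChar F (u + a) * quadraticChar F (v + a) = (if u = v then (Fintype.card F : ℤ) else 0) - 1 := by
  have h : ∑ a : F, quadraticChar F (u + a) * quadraticChar F (v + a) = ∑ a : F, quadraticChar F a * quadraticChar F (a + (v - u)) := by
    apply Fintype.sum_equiv (Equiv.addLeft u)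
    intro x
    simp only [Equiv.coe_addLeft]
    congr 2; ring
  rw [h]
  split_ifs with huv
  · subst huv
    have : ∀ a : F, quadraticChar F a * quadraticChar F (a + (u - u)) = 1 - if a = 0 then 1 else 0 := by
      intro a
      rw [sub_self, add_zero]
      split_ifs with h
      · simp [h]
      · rw [← pow_two, quadraticChar_sq_one h]; ring
    simp_rw [this, sum_sub_distrib]
    simp
  · rw [ff_pair0 hF _ (sub_ne_zero.2 (Ne.symm huv))]; ring

lemma ff_main (f : ℕ) (hf : 0 < f) (hF : ringChar F ≠ 2) (hq : Fintype.card F = 6 * f + 1) :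
    ∃ a b : ℤ, ∑ x : F, quadraticChar F (x ^ 3 + 1) = -2 * a ∧ a % 3 = 1 ∧ (6 * f + 1 : ℤ) = a ^ 2 + 3 * b ^ 2 := by
  obtain ⟨g, hg0, hgN, hg⟩ := ff_gen (6 * f) hq
  set S : F → ℤ := fun a => ∑ x : F, quadraticChar F (x ^ 3 + a) with hS
  have hSt : ∀ a t : F, t ≠ 0 → S (a * t ^ 3) = quadraticChar F t * S a := by
    intro a t ht
    simp only [hS]
    rw [mul_sum, ← Fintype.sum_equiv (Equiv.mulRight₀ t ht) (fun x => quadraticChar F ((x * t) ^ 3 + a * t ^ 3)) _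
      (fun x => rfl)]
    apply sum_congr rfl
    intro x _
    rw [show (x * t) ^ 3 + a * t ^ 3 = t ^ 2 * (t * (x ^ 3 + a)) by ring, map_mul, map_mul,
      quadraticChar_sq_one' ht, one_mul]
  have hS0 : S 0 = 0 := by
    simp only [hS]
    rw [← quadraticChar_sum_zero hF]
    apply sum_congr rfl
    intro x _
    by_cases hx : x = 0
    · simp [hx]
    · rw [show x ^ 3 + 0 = x ^ 2 * x by ring, map_mul, quadraticChar_sq_one' hx, one_mul]
  set T : F → ℤ := fun a => quadraticChar F a * S a with hT
  have hTt : ∀ a t : F, t ≠ 0 → T (a * t ^ 3) = T a := by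
    intro a t ht
    simp only [hT]
    rw [hSt a t ht, show a * t ^ 3 = t ^ 2 * (t * a) by ring, map_mul, map_mul,
      quadraticChar_sq_one' ht]
    linear_combination quadraticChar F a * S a * quadraticChar_sq_one ht
  have hT0 : T 0 = 0 := by simp [hT]
  have hT1 : T 1 = S 1 := by simp [hT]
  have hsum : T 1 + T g + T (g ^ 2) = 0 := by
    have h1 : ∑ a, T a = 0 := by
      simp only [hT, hS, mul_sum]
      rw [sum_comm]
      have : ∀ x : F, ∑ a : F, quadraticChar F a * quadraticChar F (x ^ 3 + a)
          = (if x = 0 then (Fintype.card F : ℤ) else 0) - 1 := by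
        intro x
        have := ff_pair hF 0 (x ^ 3)
        simp only [zero_add] at this
        rw [this]
        simp [eq_comm (a := (0 : F))]
      simp_rw [this, sum_sub_distrib]
      simp
    rw [hg, hT0, show 6 * f = 3 * (2 * f) by ring, ff_avg g hg0 T hTt, zero_add] at h1
    refine (mul_eq_zero.1 h1).resolve_left ?_
    exact_mod_cast (by omega : 2 * f ≠ 0)
  have hsq : T 1 ^ 2 + T g ^ 2 + T (g ^ 2) ^ 2 = 6 * (6 * f + 1) := by
    have h1 : ∑ a, T a ^ 2 = 12 * f * (6 * f + 1) := by
      have e : ∀ a, T a ^ 2 = S a ^ 2 := by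
        intro a
        by_cases ha : a = 0
        · rw [ha, hT0, hS0]
        · simp only [hT]; rw [mul_pow, quadraticChar_sq_one ha, one_mul]
      simp_rw [e]
      have e1 : ∀ a, S a ^ 2 = ∑ y : F, ∑ x : F,
          quadraticChar F (x ^ 3 + a) * quadraticChar F (y ^ 3 + a) := by
        intro a
        rw [pow_two]
        simp only [hS]
        rw [sum_mul_sum, sum_comm]
      simp_rw [e1]
      rw [sum_comm]
      have e2 : ∀ y : F, ∑ a : F, ∑ x : F,
          quadraticChar F (x ^ 3 + a) * quadraticChar F (y ^ 3 + a)
            = (6 * f + 1) * 2 - if y = 0 then (6 * f + 1) * 2 else 0 := by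
        intro y
        rw [sum_comm]
        simp_rw [ff_pair hF, sum_sub_distrib]
        rw [← sum_filter, sum_const, sum_const, card_univ, hq]
        split_ifs with hy
        · have : univ.filter (fun x : F => x ^ 3 = y ^ 3) = {0} := by
            ext x; simp [hy]
          rw [this]; simp
        · rw [ff_count f hq y hy]; simp; ring
      simp_rw [e2, sum_sub_distrib]
      rw [sum_const, card_univ, hq]
      simp
      ring
    rw [hg (fun a => T a ^ 2), hT0, show 6 * f = 3 * (2 * f) by ring,
      ff_avg g hg0 (fun a => T a ^ 2) (fun a t ht => by simp only [hTt a t ht])] at h1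
    have h2f : (2 * f : ℤ) ≠ 0 := by exact_mod_cast (by omega : 2 * f ≠ 0)
    apply mul_left_cancel₀ h2f
    push_cast at h1
    linear_combination h1
  have h3 : S 1 % 3 = 1 := by
    simp only [hS]
    rw [hg, show 6 * f = 2 * f + 2 * f + 2 * f by ring, sum_range_add, sum_range_add]
    have e1 : ∀ i, (g ^ (2 * f + i)) ^ 3 = (g ^ i) ^ 3 := by
      intro i
      rw [← pow_mul, show (2 * f + i) * 3 = 6 * f + i * 3 by ring, pow_add, hgN, one_mul, pow_mul]
    have e2 : ∀ i, (g ^ (2 * f + 2 * f + i)) ^ 3 = (g ^ i) ^ 3 := by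
      intro i
      rw [add_assoc, e1, e1]
    simp_rw [e1, e2]
    simp
    omega
  have h2 : S 1 % 2 = 0 := by
    have e : ∀ x : F, ∃ c : ℤ, quadraticChar F (x ^ 3 + 1)
        = 2 * c + (1 - if x ^ 3 = (-1) ^ 3 then 1 else 0) := by
      intro x
      split_ifs with h
      · refine ⟨0, ?_⟩
        rw [h, show ((-1 : F) ^ 3 + 1) = 0 by ring]; simp
      · have h' : x ^ 3 + 1 ≠ 0 := fun h0 => h (by linear_combination h0)
        rcases quadraticChar_dichotomy h' with h1 | h1
        · exact ⟨0, by rw [h1]; ring⟩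
        · exact ⟨-1, by rw [h1]; ring⟩
    choose c hc using e
    simp only [hS]
    simp_rw [hc, sum_add_distrib, sum_sub_distrib]
    rw [← mul_sum, ← sum_filter, sum_const, sum_const, card_univ, hq,
      ff_count f hq (-1) (by simp)]
    simp
    omega
  obtain ⟨a, ha⟩ : ∃ a, S 1 = -2 * a := ⟨-(S 1 / 2), by omega⟩
  rw [hT1, ha] at hsum hsq
  have hg2 : T (g ^ 2) = 2 * a - T g := by linarith
  rw [hg2] at hsq
  have hk : (T g - a) ^ 2 = 3 * (6 * f + 1 - a ^ 2) := by linarith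
  have hd : (3 : ℤ) ∣ T g - a := Int.prime_three.dvd_of_dvd_pow ⟨_, hk⟩
  obtain ⟨b, hb⟩ := hd
  refine ⟨a, b, ha, by omega, ?_⟩
  rw [hb] at hk
  linarith
end FF

lemma rep_unique (p : ℕ) (hp : p.Prime) (a b A B : ℤ) (h1 : (p : ℤ) = a ^ 2 + 3 * b ^ 2)
    (h2 : (p : ℤ) = A ^ 2 + 3 * B ^ 2) (ha : a % 3 = 1) (hA : A % 3 = 1) : a = A := by
  have hpp : Prime (p : ℤ) := Nat.prime_iff_prime_int.1 hp
  have hpos : (0 : ℤ) < p := by exact_mod_cast hp.pos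
  have key : ∀ B : ℤ, (p : ℤ) = A ^ 2 + 3 * B ^ 2 → (p : ℤ) ∣ a * B - A * b → a ^ 2 = A ^ 2 := by
    rintro B h2 ⟨k, hk⟩
    have e : (p : ℤ) ^ 2 = (a * A + 3 * b * B) ^ 2 + 3 * (p * k) ^ 2 := by
      rw [← hk]
      calc (p : ℤ) ^ 2 = p * p := by ring
        _ = (a ^ 2 + 3 * b ^ 2) * (A ^ 2 + 3 * B ^ 2) := by rw [← h1, ← h2]
        _ = _ := by ring
    have hk0 : k = 0 := by
      by_contra hne
      have : 1 ≤ k ^ 2 := by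
        have := pow_pos (abs_pos.2 hne) 2
        rw [sq_abs] at this; omega
      nlinarith [sq_nonneg (a * A + 3 * b * B), pow_pos hpos 2]
    rw [hk0, mul_zero] at hk
    have e2 : (p : ℤ) * (A ^ 2 - a ^ 2) = 0 := by
      linear_combination A ^ 2 * h1 - a ^ 2 * h2 - 3 * (a * B + A * b) * hk
    have := (mul_eq_zero.1 e2).resolve_left hpos.ne'
    linarith
  have hd : (p : ℤ) ∣ (a * B - A * b) * (a * B + A * b) := by
    refine ⟨B ^ 2 - b ^ 2, ?_⟩
    linear_combination b ^ 2 * h2 - B ^ 2 * h1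
  have hsq : a ^ 2 = A ^ 2 := by
    rcases hpp.dvd_or_dvd hd with h | h
    · exact key B h2 h
    · apply key (-B) (by rw [h2]; ring)
      have : a * -B - A * b = -(a * B + A * b) := by ring
      rw [this]; exact (dvd_neg).2 h
  rcases sq_eq_sq_iff_eq_or_eq_neg.1 hsq with h | h <;> omega

lemma sum_quad (p : ℕ) [Fact p.Prime] (f : ℕ) (hf : 0 < f) (hpf : p = 6 * f + 1) :
    ((∑ x : ZMod p, quadraticChar (ZMod p) (x ^ 3 + 1) : ℤ) : ZMod p)
      = -((3 * f).choose f : ZMod p) := by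
  have hF : ringChar (ZMod p) ≠ 2 := by rw [ZMod.ringChar_zmod_n]; omega
  push_cast
  simp_rw [quadraticChar_eq_pow_of_char_ne_two' hF, ZMod.card]
  rw [show p / 2 = 3 * f by omega]
  simp_rw [add_pow, one_pow, mul_one]
  rw [sum_comm]
  simp_rw [← sum_mul, ← pow_mul]
  have hps : ∀ i : ℕ, ∑ x : ZMod p, x ^ (3 * i) = if i = 0 then 0 else
      if 2 * f ∣ i then -1 else 0 := by
    intro i
    split_ifs with h h'
    · simp [h]
    · obtain ⟨c, rfl⟩ := h'
      have : ∀ x : ZMod p, x ^ (3 * (2 * f * c)) = 1 - if x = 0 then 1 else 0 := by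
        intro x
        split_ifs with hx
        · rw [hx, zero_pow (by omega)]; ring
        · rw [show 3 * (2 * f * c) = (p - 1) * c by rw [hpf]; simp; ring, pow_mul,
            ZMod.pow_card_sub_one_eq_one hx]; simp
      simp_rw [this, sum_sub_distrib]
      simp
    · have e := FiniteField.sum_pow_units (ZMod p) (3 * i)
      rw [ZMod.card, if_neg] at e
      · rw [← e, ← Finset.add_sum_erase univ _ (mem_univ 0), zero_pow (by omega), zero_add]
        symm
        refine Finset.sum_bij (fun u _ => (u : ZMod p)) (by simp) ?_ ?_ (by simp)
        · intro a _ b _ h; exact Units.ext h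
        · intro b hb
          exact ⟨Units.mk0 b (by simpa using hb), mem_univ _, rfl⟩
      · rintro ⟨c, hc⟩
        apply h'
        refine ⟨c, ?_⟩
        rw [show p - 1 = 3 * (2 * f) by omega, mul_assoc] at hc
        omega
  simp_rw [hps]
  rw [Finset.sum_eq_single (2 * f)]
  · rw [if_neg (by omega), if_pos dvd_rfl]
    rw [show (3 * f).choose (2 * f) = (3 * f).choose f from
      Nat.choose_symm_of_eq_add (by ring)]
    ring
  · intro i hi hne
    rw [mem_range] at hi
    split_ifs with h1 h2
    · simp
    · exfalso
      obtain ⟨c, hc⟩ := h2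
      have : c ≠ 0 := by rintro rfl; simp at hc; omega
      have : c ≠ 1 := by rintro rfl; simp at hc; omega
      have : 2 ≤ c := by omega
      nlinarith
    · simp
  · intro h; exfalso; apply h; rw [mem_range]; omega

lemma zmod_inv (p : ℕ) [Fact p.Prime] (n : ℕ) (hn : n < p) : 
    ∀ j : ℕ, j < n → ((j + 1 : ℕ) : ZMod p) ≠ 0 := by
  intro j hj h
  rw [ZMod.natCast_eq_zero_iff] at h
  have := Nat.le_of_dvd (by omega) h
  omega

lemma transfer (p : ℕ) [Fact p.Prime] (hp5 : 5 < p) (b : ℤ) (n : ℕ) (hn : n = p / 3)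
    (hn3 : ((3 * n + 1 : ZMod p)) * (3 * n + 2) = 0)
    (r : ZMod p) (hr : 2 * r = 1)
    (h : Polynomial.aeval r (Polynomial.shiftedLegendre n) = (b : ZMod p)) :
    ratCongr p 1 (∑ k ∈ Finset.range (p / 3 + 1),
          ((3 * k).factorial : ℚ) / (54 ^ k * (k.factorial : ℚ) ^ 3)) b := by
  have hp : p.Prime := Fact.out
  rw [← hn]
  set N : ℤ := ∑ k ∈ range (n + 1), (((3 * k).choose k * (2 * k).choose k : ℕ) : ℤ) * 54 ^ (n - k)
    with hN
  have hsum : ∑ k ∈ Finset.range (n + 1),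
      ((3 * k).factorial : ℚ) / (54 ^ k * (k.factorial : ℚ) ^ 3) = (N : ℚ) / (54 : ℚ) ^ n := by
    rw [hN]
    push_cast
    rw [sum_div]
    apply sum_congr rfl
    intro k hk
    rw [mem_range] at hk
    have a1 := Nat.choose_mul_factorial_mul_factorial (show k ≤ 3 * k by omega)
    have a2 := Nat.choose_mul_factorial_mul_factorial (show k ≤ 2 * k by omega)
    rw [show 3 * k - k = 2 * k by omega] at a1
    rw [show 2 * k - k = k by omega] at a2
    rw [← a1, ← a2, ← pow_sub_mul_pow (54 : ℚ) (show k ≤ n by omega)]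
    have hk0 : (k.factorial : ℚ) ≠ 0 := by exact_mod_cast k.factorial_ne_zero
    push_cast
    field_simp
  have h54 : ¬ (p ∣ 54 ^ n) := by
    intro hd
    have := hp.dvd_of_dvd_pow hd
    rw [show 54 = 2 * 3 ^ 3 by norm_num, hp.dvd_mul] at this
    rcases this with h | h
    · have := Nat.le_of_dvd (by norm_num) h; omega
    · have := Nat.le_of_dvd (by norm_num) (hp.dvd_of_dvd_pow h); omega
  have hmod : (p : ℤ) ∣ N - b * 54 ^ n := by
    rw [← ZMod.intCast_zmod_eq_zero_iff_dvd _ p] 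
    push_cast
    rw [← h, hN, Polynomial.shiftedLegendre]
    push_cast
    rw [map_sum, sum_mul, ← sum_sub_distrib]
    apply sum_eq_zero
    intro k hk
    rw [mem_range] at hk
    have ht := term_eq n hn3 k (by omega) (zmod_inv p k (by omega))
    push_cast at ht
    rw [ht]
    simp only [map_mul, map_pow, Polynomial.aeval_X, Polynomial.aeval_C, map_neg, map_one, map_natCast]
    rw [← pow_sub_mul_pow (54 : ZMod p) (show k ≤ n by omega)]
    have : (27 : ZMod p) ^ k = r ^ k * 54 ^ k := by
      rw [← mul_pow]; congr 1; linear_combination (-27) * hr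
    rw [this]; ring
  obtain ⟨q, hq⟩ := hmod
  refine ⟨(q : ℚ) / 54 ^ n, ?_, ?_⟩
  · rw [hsum]
    have : (N : ℚ) - b * 54 ^ n = p * q := by exact_mod_cast hq
    field_simp
    linear_combination this
  · intro hd
    apply h54
    have : ((q : ℚ) / 54 ^ n).den ∣ 54 ^ n := by
      have := Rat.den_dvd q (54 ^ n)
      push_cast at this
      exact_mod_cast this
    exact hd.trans this

theorem stmt11 (p : ℕ) (hp : p.Prime) (hp5 : 5 < p) :
    (p % 6 = 5 →
      ratCongr p 1
        (∑ k ∈ Finset.range (p / 3 + 1),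
          ((3 * k).factorial : ℚ) / (54 ^ k * (k.factorial : ℚ) ^ 3)) 0) ∧
    (∀ A B : ℤ, p % 6 = 1 → (p : ℤ) = A ^ 2 + 3 * B ^ 2 → A % 3 = 1 →
      ratCongr p 1
        (∑ k ∈ Finset.range (p / 3 + 1),
          ((3 * k).factorial : ℚ) / (54 ^ k * (k.factorial : ℚ) ^ 3))
        (2 * (A : ℚ))) := by
  have : Fact p.Prime := ⟨hp⟩
  have hodd : p % 2 = 1 := hp.eq_two_or_odd.resolve_left (by omega)
  have h20 : (2 : ZMod p) ≠ 0 := by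
    have := zmod_inv p 2 (by omega) 1 (by omega)
    exact_mod_cast this
  have hr : (2 : ZMod p) * 2⁻¹ = 1 := mul_inv_cancel₀ h20
  have hpz : (p : ZMod p) = 0 := ZMod.natCast_self p
  constructor
  · intro h5
    have h3 : p = 3 * (p / 3) + 2 := by omega
    have hz : (3 * ((p / 3 : ℕ) : ZMod p) + 2) = 0 := by
      have e := congrArg (Nat.cast : ℕ → ZMod p) h3
      rw [hpz] at e
      push_cast at e
      exact e.symm
    have := transfer p hp5 0 (p / 3) rfl (by rw [hz, mul_zero]) _ hr
      (by rw [leg_odd _ hr _ (by rw [Nat.odd_iff]; omega)]; simp)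
    simpa using this
  · intro A B h1 hAB hA
    obtain ⟨f, hpf⟩ : ∃ f, p = 6 * f + 1 := ⟨p / 6, by omega⟩
    have hf : 0 < f := by omega
    have hz : (3 * ((2 * f : ℕ) : ZMod p) + 1) = 0 := by
      have e := congrArg (Nat.cast : ℕ → ZMod p) hpf
      rw [hpz] at e
      push_cast at e ⊢
      linear_combination -e
    have hF : ringChar (ZMod p) ≠ 2 := by rw [ZMod.ringChar_zmod_n]; omega
    obtain ⟨a, b, hS, ha, hab⟩ := ff_main (F := ZMod p) f hf hF (by rw [ZMod.card, hpf])
    have haA : a = A := rep_unique p hp a b A B (by rw [← hab, hpf]; push_cast; rfl) hAB ha hA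
    have hq := sum_quad p f hf hpf
    rw [hS, haA] at hq
    have hfac : ((2 * f).factorial : ZMod p) ≠ 0 := by
      rw [Ne, ZMod.natCast_eq_zero_iff, hp.dvd_factorial]; omega
    have hleg := leg_even (K := ZMod p) _ hr f hfac
    have hch := choose_half (K := ZMod p) (3 * f) (by rw [← hz]; push_cast; ring) f (by omega)
      (zmod_inv p f (by omega))
    have := transfer p hp5 (2 * A) (2 * f) (by omega) (by rw [hz, zero_mul]) _ hr (by
      rw [hleg, neg_pow, mul_right_comm, hch, mul_right_comm, ← mul_pow,
        show (4 : ZMod p) * (2⁻¹) ^ 2 = 1 by linear_combination (2 * 2⁻¹ + 1) * hr]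
      push_cast at hq ⊢
      rw [one_pow]
      linear_combination hq)
    simpa using this
end

section
/- Let p be a prime with p \equiv 1 (mod 4), and write p = a^2 + b^2 with integers a, b and a \equiv 1 (mod 4). Then \sum_{k=0}^{(p-1)/2} \binom{2k}{k}^2 / 8^k \equiv \sum_{k=0}^{(p-1)/2} \binom{2k}{k}^2 / (-16)^k \equiv (-1)^{(p-1)/4} (2a - p/(2a)) \pmod{p^2}. -/
open Finset Polynomial

/-- The Legendre polynomial `P n`, defined via Rodrigues' formula. -/
noncomputable def legendre (n : ℕ) : Polynomial ℚ :=
  ((2 ^ n * n.factorial : ℚ)⁻¹) • ((fun q => Polynomial.derivative q)^[n] ((X ^ 2 - 1) ^ n))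

/-- The Legendre symbol of a `p`-integral rational `x` modulo `p`
(for `x = m/n` it is `(mn/p)`, the symbol of the residue of `x` mod `p`). -/
def ratLegendreSym (p : ℕ) [Fact p.Prime] (x : ℚ) : ℤ :=
  legendreSym p (x.num * x.den)


section jac
variable {p : ℕ} [Fact p.Prime]

local notation "RR" => ZMod (p ^ 2)

noncomputable def redP (p : ℕ) : ZMod (p ^ 2) →+* ZMod p :=
  ZMod.castHom (dvd_pow_self p two_ne_zero) (ZMod p)

lemma pp_zero : (p : RR) ^ 2 = 0 := by
  have := ZMod.natCast_self (p ^ 2)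
  rwa [Nat.cast_pow] at this

lemma redP_ker {u : RR} (h : redP p u = 0) : ∃ v, u = (p : RR) * v := by
  have : NeZero (p ^ 2) := ⟨pow_ne_zero _ (Fact.out : p.Prime).ne_zero⟩
  have h1 : ((u.val : ℕ) : RR) = u := ZMod.natCast_zmod_val u
  rw [← h1, map_natCast, ZMod.natCast_eq_zero_iff] at h
  obtain ⟨c, hc⟩ := h
  exact ⟨c, by rw [← h1, hc]; push_cast; rfl⟩

lemma redP_unit {u : RR} (h : redP p u ≠ 0) : IsUnit u := by
  have : NeZero (p ^ 2) := ⟨pow_ne_zero _ (Fact.out : p.Prime).ne_zero⟩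
  have h1 : ((u.val : ℕ) : RR) = u := ZMod.natCast_zmod_val u
  rw [← h1, map_natCast, Ne, ZMod.natCast_eq_zero_iff] at h
  rw [← h1, ZMod.isUnit_iff_coprime]
  exact Nat.Coprime.pow_right 2 (((Fact.out : p.Prime).coprime_iff_not_dvd.2 h).symm)

lemma pow_p_eq {u v : RR} (h : redP p u = redP p v) : u ^ p = v ^ p := by
  have h2 : redP p (u - v) = 0 := by rw [map_sub, h, sub_self]
  obtain ⟨w, hw⟩ := redP_ker h2
  have := dvd_sub_pow_of_dvd_sub (p := p) (a := u) (b := v) ⟨w, hw⟩ 1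
  rw [pow_one, one_add_one_eq_two, pp_zero, zero_dvd_iff] at this
  exact sub_eq_zero.1 this

/-- Teichmuller lift modulo `p^2`. -/
noncomputable def teich (p : ℕ) (t : ZMod p) : ZMod (p ^ 2) := ((t.val : ℕ) : ZMod (p ^ 2)) ^ p

lemma redP_val (t : ZMod p) : redP p ((t.val : ℕ) : RR) = t := by
  rw [map_natCast, ZMod.natCast_zmod_val]

lemma redP_teich (t : ZMod p) : redP p (teich p t) = t := by
  rw [teich, map_pow, redP_val, ZMod.pow_card]

lemma teich_mul (s t : ZMod p) : teich p (s * t) = teich p s * teich p t := by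
  rw [teich, teich, teich, ← mul_pow]
  apply pow_p_eq
  rw [map_mul, redP_val, redP_val, redP_val]

lemma teich_one : teich p 1 = 1 := by
  have : (1 : RR) = 1 ^ p := (one_pow p).symm
  rw [this, teich]
  apply pow_p_eq
  rw [redP_val, map_one]

lemma teich_zero : teich p 0 = 0 := by
  simp [teich, (Fact.out : p.Prime).ne_zero]

noncomputable def teichHom (p : ℕ) [Fact p.Prime] : ZMod p →* ZMod (p ^ 2) where
  toFun := teich p
  map_one' := teich_one
  map_mul' := teich_mul

lemma teich_pow (t : ZMod p) (k : ℕ) : teich p (t ^ k) = teich p t ^ k :=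
  map_pow (teichHom p) t k

lemma teich_neg_one : teich p (-1) = -1 ∨ p = 2 := by
  rcases (Fact.out : p.Prime).eq_two_or_odd' with h | h
  · exact Or.inr h
  · left
    have : (-1 : RR) = (-1) ^ p := by rw [h.neg_one_pow]
    rw [this, teich]
    apply pow_p_eq
    rw [redP_val, map_neg, map_one]

/-- power sums of Teichmuller representatives -/
lemma teich_sum_dvd (N : ℕ) (hN : 0 < N) (h : p - 1 ∣ N) :
    ∑ t : ZMod p, teich p t ^ N = (p : RR) - 1 := by
  classical
  rw [← Finset.sum_erase_add _ _ (Finset.mem_univ (0 : ZMod p)), teich_zero, zero_pow hN.ne',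
    add_zero]
  have : ∀ t ∈ Finset.univ.erase (0 : ZMod p), teich p t ^ N = 1 := by
    intro t ht
    obtain ⟨c, rfl⟩ := h
    rw [pow_mul, ← teich_pow, ZMod.pow_card_sub_one_eq_one (by simpa using ht), teich_one, one_pow]
  rw [Finset.sum_congr rfl this]
  simp [ZMod.card, Nat.cast_sub (Fact.out : p.Prime).one_le]

lemma teich_sum_ndvd (N : ℕ) (h : ¬ p - 1 ∣ N) :
    ∑ t : ZMod p, teich p t ^ N = 0 := by
  obtain ⟨g, hg⟩ := IsCyclic.exists_generator (α := (ZMod p)ˣ)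
  have hgN : g ^ N ≠ 1 := by
    intro h1
    apply h
    have := orderOf_dvd_of_pow_eq_one h1
    rwa [orderOf_eq_card_of_forall_mem_zpowers hg, Nat.card_eq_fintype_card, ZMod.card_units] at this
  have e : ∑ t : ZMod p, teich p t ^ N = teich p g ^ N * ∑ t : ZMod p, teich p t ^ N := by
    refine (Equiv.sum_comp (Units.mulLeft g) (fun t => teich p t ^ N)).symm.trans ?_
    rw [Finset.mul_sum]
    refine Finset.sum_congr rfl fun t _ => ?_
    simp [teich_mul, mul_pow]
  have hu : IsUnit (teich p g ^ N - 1) := by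
    apply redP_unit
    rw [map_sub, map_pow, redP_teich, map_one, sub_ne_zero]
    intro h1
    exact hgN (Units.ext (by simpa using h1))
  have : (teich p g ^ N - 1) * ∑ t : ZMod p, teich p t ^ N = 0 := by
    linear_combination -e
  exact (hu.mul_right_eq_zero).1 this

lemma qchar_lift {n : ℕ} (hn : p = 2 * n + 1) (hn2 : 2 ≤ n) {u : RR} {s : ZMod p}
    (h : redP p u = s) : 2 * ((quadraticChar (ZMod p) s : ℤ) : RR) = 3 * u ^ n - u ^ (3 * n) := by
  have hF : ringChar (ZMod p) ≠ 2 := by rw [ZMod.ringChar_zmod_n]; omega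
  by_cases hs : s = 0
  · subst hs
    obtain ⟨v, rfl⟩ := redP_ker h
    have h1 : ∀ k, 2 ≤ k → ((p : RR) * v) ^ k = 0 := by
      intro k hk
      obtain ⟨j, rfl⟩ := Nat.exists_eq_add_of_le hk
      rw [pow_add, mul_pow, pp_zero]; ring
    rw [h1 n hn2, h1 (3 * n) (by omega)]; simp
  · have h2 := quadraticChar_eq_pow_of_char_ne_two' hF s
    rw [ZMod.card, show p / 2 = n by omega] at h2
    have h3 : redP p (u ^ n - ((quadraticChar (ZMod p) s : ℤ) : RR)) = 0 := by
      rw [map_sub, map_pow, h, map_intCast, h2, sub_self]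
    obtain ⟨v, hv⟩ := redP_ker h3
    have h4 : u ^ n = ((quadraticChar (ZMod p) s : ℤ) : RR) + p * v := by
      linear_combination hv
    rw [mul_comm 3 n, pow_mul, h4]
    have h0 := pp_zero (p := p)
    rcases quadraticChar_dichotomy hs with h5 | h5 <;> rw [h5] <;> push_cast
    · linear_combination (3 * v ^ 2 + p * v ^ 3) * h0
    · linear_combination (-3 * v ^ 2 + p * v ^ 3) * h0

lemma jac_sum {m : ℕ} (hm : p = 4 * m + 1) (hm1 : 1 ≤ m) :
    ∑ t : ZMod p, teich p t ^ (3 * m) *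
      (3 * (1 - teich p t) ^ (2 * m) - (1 - teich p t) ^ (3 * (2 * m)))
    = (-1) ^ m * ((p : RR) - 1) * (3 * ((2 * m).choose m : RR) - 2 * ((6 * m).choose m : RR)) := by
  have key : ∀ M : ℕ, ∑ t : ZMod p, teich p t ^ (3 * m) * (1 - teich p t) ^ M =
      ∑ k ∈ range (M + 1), if 4 * m ∣ 3 * m + k then
        (-1) ^ k * (M.choose k : RR) * ((p : RR) - 1) else 0 := by
    intro M
    have : ∀ t : ZMod p, teich p t ^ (3 * m) * (1 - teich p t) ^ M =
      ∑ k ∈ range (M + 1), (-1) ^ k * (M.choose k : RR) * teich p t ^ (3 * m + k) := by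
      intro t
      rw [sub_eq_neg_add, add_pow, Finset.mul_sum]
      refine Finset.sum_congr rfl fun k _ => ?_
      rw [neg_pow, pow_add]; ring
    simp_rw [this]
    rw [Finset.sum_comm]
    refine Finset.sum_congr rfl fun k _ => ?_
    rw [← Finset.mul_sum]
    split_ifs with h
    · rw [teich_sum_dvd _ (by omega) (by rw [hm]; simpa using h)]
    · rw [teich_sum_ndvd _ (by rw [hm]; simpa using h), mul_zero]
  have e1 : ∑ k ∈ range (2 * m + 1), (if 4 * m ∣ 3 * m + k then
        (-1) ^ k * ((2 * m).choose k : RR) * ((p : RR) - 1) else 0)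
        = (-1) ^ m * ((2 * m).choose m : RR) * ((p : RR) - 1) := by
    rw [Finset.sum_eq_single m]
    · rw [if_pos (by rw [show 3 * m + m = 4 * m by ring])]
    · intro k hk hkm
      rw [if_neg]
      rintro ⟨c, hc⟩
      rw [Finset.mem_range] at hk
      have : c = 1 := by
        have h1 : c < 2 := by
          by_contra hcc
          have : 4 * m * 2 ≤ 4 * m * c := Nat.mul_le_mul_left _ (by omega)
          omega
        have h2 : c ≠ 0 := by rintro rfl; omega
        omega
      subst this; omega
    · intro h; exact absurd (Finset.mem_range.2 (by omega)) h
  have e2 : ∑ k ∈ range (3 * (2 * m) + 1), (if 4 * m ∣ 3 * m + k then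
        (-1) ^ k * ((3 * (2 * m)).choose k : RR) * ((p : RR) - 1) else 0)
        = (-1) ^ m * (2 * ((6 * m).choose m : RR)) * ((p : RR) - 1) := by
    rw [show 3 * (2 * m) = 6 * m by ring]
    have hsub : ({m, 5 * m} : Finset ℕ) ⊆ range (6 * m + 1) := by
      intro x hx; simp at hx; simp; omega
    rw [← Finset.sum_subset hsub]
    · rw [Finset.sum_pair (by omega), if_pos (by rw [show 3 * m + m = 4 * m by ring]),
        if_pos ⟨2, by ring⟩]
      have : (6 * m).choose (5 * m) = (6 * m).choose m := by
        rw [← Nat.choose_symm (by omega : m ≤ 6 * m)]; congr 1; omega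
      rw [this, show 5 * m = 2 * (2 * m) + m by ring, pow_add, pow_mul]
      ring
    · intro k hk hkm
      rw [if_neg]
      rintro ⟨c, hc⟩
      rw [Finset.mem_range] at hk
      simp only [Finset.mem_insert, Finset.mem_singleton, not_or] at hkm
      have h1 : c < 3 := by
        by_contra hcc
        have : 4 * m * 3 ≤ 4 * m * c := Nat.mul_le_mul_left _ (by omega)
        omega
      interval_cases c <;> omega
  simp_rw [mul_sub, Finset.sum_sub_distrib, mul_left_comm _ (3 : RR), ← Finset.mul_sum, key, e1, e2]
  ring

lemma gauss_part {m : ℕ} (hm : p = 4 * m + 1) (hm1 : 1 ≤ m) :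
    ∃ A B : ℤ, (p : ℤ) = A ^ 2 + B ^ 2 ∧ (A + 1 - 2 * m) % 4 = 0 ∧
      ∃ X : RR, X ^ 2 - 2 * (A : RR) * X + (p : RR) = 0 ∧
        2 * X = (-1) ^ m * ((p : RR) - 1) *
          (3 * ((2 * m).choose m : RR) - 2 * ((6 * m).choose m : RR)) := by
  classical
  have hF : ringChar (ZMod p) ≠ 2 := by rw [ZMod.ringChar_zmod_n]; omega
  obtain ⟨g, hg⟩ := IsCyclic.exists_generator (α := (ZMod p)ˣ)
  let ii : GaussianInt := ⟨0, 1⟩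
  have hii : ii * ii = -1 := by decide
  let z : GaussianIntˣ := ⟨ii, -ii, by rw [mul_neg, hii, neg_neg], by rw [neg_mul, hii, neg_neg]⟩
  have hz4 : z ^ 4 = 1 := by
    apply Units.ext
    show ii ^ 4 = 1
    decide
  have hz : z ∈ rootsOfUnity (Fintype.card (ZMod p)ˣ) GaussianInt := by
    rw [mem_rootsOfUnity, ZMod.card_units, hm, Nat.add_sub_cancel, pow_mul, hz4, one_pow]
  let χ : MulChar (ZMod p) GaussianInt := MulChar.ofRootOfUnity hz hg
  have hχg : χ g = ii := MulChar.ofRootOfUnity_spec hz hg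
  let ρ : MulChar (ZMod p) GaussianInt :=
    (quadraticChar (ZMod p)).ringHomComp (Int.castRingHom GaussianInt)
  have hρ : ∀ t, ρ t = ((quadraticChar (ZMod p) t : ℤ) : GaussianInt) := fun t => rfl
  have hgpow : ∀ t : ZMod p, t ≠ 0 → ∃ k : ℕ, t = (g : ZMod p) ^ k := by
    intro t ht
    obtain ⟨k, hk⟩ := (mem_powers_iff_mem_zpowers.2 (hg (Units.mk0 t ht)))
    exact ⟨k, by have := congrArg Units.val hk; simpa using this.symm⟩
  have hdich : ∀ t : ZMod p, t ≠ 0 → ρ t = 1 ∨ ρ t = -1 := by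
    intro t ht
    rcases quadraticChar_dichotomy ht with h | h <;> rw [hρ, h] <;> simp
  have hχ1 : χ ≠ 1 := by
    intro h
    have : χ g = 1 := by rw [h]; simp
    rw [hχg] at this
    exact absurd this (by decide)
  have hρ1 : ρ ≠ 1 := by
    intro h
    obtain ⟨x, hx⟩ := quadraticChar_exists_neg_one' hF
    have h1 : ρ x = 1 := by rw [h]; simp
    rw [hρ, hx] at h1
    exact absurd h1 (by decide)
  have hχρ1 : χ * ρ ≠ 1 := by
    intro h
    have h1 : (χ * ρ) g = 1 := by rw [h]; simp
    rw [MulChar.mul_apply, hχg] at h1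
    rcases hdich g g.ne_zero with h2 | h2 <;> rw [h2] at h1 <;> exact absurd h1 (by decide)
  let J := jacobiSum χ ρ
  have hnorm : (p : ℤ) = J.re ^ 2 + J.im ^ 2 := by
    let tc := GaussianInt.toComplex
    have hinj : Function.Injective tc := GaussianInt.toComplex_injective
    have hne : ∀ ψ : MulChar (ZMod p) GaussianInt, ψ ≠ 1 → ψ.ringHomComp tc ≠ 1 := by
      intro ψ hψ h
      exact hψ ((MulChar.ringHomComp_eq_one_iff hinj).1 h)
    have h1 := jacobiSum_mul_jacobiSum_inv (F := ZMod p) (F' := ℂ)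
      (χ := χ.ringHomComp tc) (φ := ρ.ringHomComp tc)
      (by rw [ZMod.ringChar_zmod_n, ringChar.eq_zero]; exact (Fact.out : p.Prime).ne_zero.symm)
      (hne _ hχ1) (hne _ hρ1) (by rw [← MulChar.ringHomComp_mul]; exact hne _ hχρ1)
    rw [← MulChar.star_eq_inv, ← MulChar.star_eq_inv] at h1
    have h2 : jacobiSum (star (χ.ringHomComp tc)) (star (ρ.ringHomComp tc)) =
        (starRingEnd ℂ) (jacobiSum (χ.ringHomComp tc) (ρ.ringHomComp tc)) := by
      rw [← jacobiSum_ringHomComp]; rfl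
    rw [h2, jacobiSum_ringHomComp, Complex.mul_conj, ZMod.card] at h1
    have h3 : ((J.norm : ℤ) : ℂ) = ((p : ℤ) : ℂ) := by
      rw [GaussianInt.intCast_complex_norm]; push_cast; exact h1
    have h4 : J.norm = p := by exact_mod_cast h3
    rw [← h4, Zsqrtd.norm_def]; ring
  have hcong : ((2 : GaussianInt) * (1 - ii)) ∣ J + p := by
    have hd : ∀ t ∈ (univ.erase (0 : ZMod p)).erase 1,
        (2 : GaussianInt) * (1 - ii) ∣ (1 - ρ (1 - t)) * (1 - χ t) := by
      intro t ht
      simp only [Finset.mem_erase, Finset.mem_univ, and_true] at ht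
      apply mul_dvd_mul
      · rcases hdich (1 - t) (sub_ne_zero.2 (Ne.symm ht.1)) with h | h <;> rw [h]
        · simp
        · norm_num
      · obtain ⟨k, rfl⟩ := hgpow t ht.2
        rw [map_pow, hχg]
        have := sub_dvd_pow_sub_pow (1 : GaussianInt) ii k
        rwa [one_pow] at this
    have hs := Finset.dvd_sum hd
    have e : ∑ t ∈ (univ.erase (0 : ZMod p)).erase 1, (1 - ρ (1 - t)) * (1 - χ t) = J + p := by
      have e1 : ∀ f : ZMod p → GaussianInt, ∑ t ∈ (univ.erase (0 : ZMod p)).erase 1, f t =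
          ∑ t, f t - f 0 - f 1 := by
        intro f
        rw [← Finset.sum_erase_add univ f (Finset.mem_univ 0),
          ← Finset.sum_erase_add (univ.erase 0) f (a := 1) (by simp)]
        ring
      rw [e1]
      have e2 : ∑ t, (1 - ρ (1 - t)) * (1 - χ t) = p - ∑ t, χ t - ∑ t, ρ (1 - t) + J := by
        have : ∀ t, (1 - ρ (1 - t)) * (1 - χ t) = 1 - χ t - ρ (1 - t) + χ t * ρ (1 - t) := by
          intro t; ring
        simp_rw [this, Finset.sum_add_distrib, Finset.sum_sub_distrib]
        simp [J, jacobiSum, ZMod.card]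
      have e3 : ∑ t, ρ (1 - t) = 0 := by
        refine (Equiv.sum_comp (Equiv.subLeft (1 : ZMod p)) (fun t => ρ t)).trans ?_
        exact MulChar.sum_eq_zero_of_ne_one hρ1
      rw [e2, e3, MulChar.sum_eq_zero_of_ne_one hχ1]
      simp
      ring
    rwa [e] at hs
  refine ⟨J.re, J.im, hnorm, ?_, ?_⟩
  · obtain ⟨w, hw⟩ := hcong
    have h1 := congrArg Zsqrtd.re hw
    have h2 := congrArg Zsqrtd.im hw
    simp [ii, Zsqrtd.re_mul, Zsqrtd.im_mul] at h1 h2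
    have h3 : J.re = 2 * (w.re + w.im) - p := by linear_combination h1
    have h4 : J.im = 2 * (w.im - w.re) := by linear_combination h2
    rw [h3, h4] at hnorm
    have hpm : (p : ℤ) = 4 * m + 1 := by exact_mod_cast hm
    rw [h3]
    rw [hpm] at hnorm ⊢
    obtain ⟨k1, hk1⟩ := Int.even_mul_succ_self (w.re + w.im)
    obtain ⟨k2, hk2⟩ := Int.even_mul_succ_self (w.im - w.re)
    have h5 : (m : ℤ) + 4 * (m * m) = 3 * (w.re + w.im) + 4 * (m * (w.re + w.im))
        - 2 * k1 - 2 * k2 - 2 * w.re := by linarith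
    generalize (m : ℤ) * m = M at h5
    generalize (m : ℤ) * (w.re + w.im) = N at h5
    omega
  · let ι : RR := teich p g ^ (3 * m)
    have hι : ι * ι = ((-1 : ℤ) : RR) := by
      have hgm : (g : ZMod p) ^ (2 * m) = -1 := by
        have h1 : ((g : ZMod p) ^ (2 * m)) ^ 2 = 1 := by
          rw [← pow_mul, show 2 * m * 2 = p - 1 by omega]
          exact ZMod.pow_card_sub_one_eq_one g.ne_zero
        rcases mul_self_eq_one_iff.1 ((sq _).symm.trans h1) with h | h
        · exfalso
          have h2 : g ^ (2 * m) = 1 := Units.ext (by simpa using h)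
          have := orderOf_dvd_of_pow_eq_one h2
          rw [orderOf_eq_card_of_forall_mem_zpowers hg, Nat.card_eq_fintype_card,
            ZMod.card_units] at this
          have := Nat.le_of_dvd (by omega) this
          omega
        · exact h
      have h3 : teich p g ^ (2 * m) = -1 := by
        rw [← teich_pow, hgm]
        rcases teich_neg_one (p := p) with h | h
        · exact h
        · omega
      show teich p g ^ (3 * m) * teich p g ^ (3 * m) = _
      rw [← pow_add, show 3 * m + 3 * m = 2 * m * 3 by ring, pow_mul, h3]
      norm_num
    let φ : GaussianInt →+* RR := Zsqrtd.lift ⟨ι, hι⟩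
    have hφ : ∀ w : GaussianInt, φ w = w.re + w.im * ι := fun w => rfl
    refine ⟨φ J, ?_, ?_⟩
    · have hp : (p : RR) = ((J.re ^ 2 + J.im ^ 2 : ℤ) : RR) := by rw [← hnorm]; simp
      rw [hp, hφ]
      push_cast
      push_cast at hι
      linear_combination (J.im : RR) ^ 2 * hι
    · rw [← jac_sum hm hm1]
      show 2 * φ (∑ t, χ t * ρ (1 - t)) = _
      rw [map_sum, Finset.mul_sum]
      refine Finset.sum_congr rfl fun t _ => ?_
      rw [← qchar_lift (n := 2 * m) (s := 1 - t) (by omega) (by omega)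
        (by rw [map_sub, map_one, redP_teich]), map_mul, hρ, map_intCast]
      have : φ (χ t) = teich p t ^ (3 * m) := by
        by_cases ht : t = 0
        · subst ht
          rw [teich_zero, zero_pow (by omega), MulChar.map_zero, map_zero]
        · obtain ⟨k, rfl⟩ := hgpow t ht
          rw [map_pow, hχg, map_pow, hφ, teich_pow]
          simp [ii, ι]
          rw [← pow_mul, ← pow_mul, mul_comm]
      rw [this]; ring

end jac

lemma kummer1 (m : ℕ) :
    ∑ k ∈ range (2 * m + 1), (-1 : ℤ) ^ k * ((2 * m + k).choose (2 * m) : ℤ) *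
      ((2 * m + (2 * m - k)).choose (2 * m) : ℤ) = ((3 * m).choose m : ℤ) := by
  have h1 := PowerSeries.mk_add_choose_mul_one_sub_pow_eq_one ℤ (2 * m)
  set F : PowerSeries ℤ := PowerSeries.mk fun n => (((2 * m + n).choose (2 * m) : ℕ) : ℤ) with hF
  have h2 := congrArg (PowerSeries.rescale (-1 : ℤ)) h1
  have h3 := congrArg (PowerSeries.expand 2 two_ne_zero) h1
  simp only [map_mul, map_pow, map_sub, map_one, PowerSeries.rescale_X, PowerSeries.expand_X] at h2 h3
  have hc : (PowerSeries.C (-1 : ℤ)) = -1 := by simp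
  rw [hc] at h2
  have h4 : PowerSeries.rescale (-1 : ℤ) F * F = PowerSeries.expand 2 two_ne_zero F := by
    have e : (1 - PowerSeries.X ^ 2 : PowerSeries ℤ) ^ (2 * m + 1) =
      (1 - PowerSeries.X) ^ (2 * m + 1) * (1 - (-1) * PowerSeries.X) ^ (2 * m + 1) := by
      rw [← mul_pow]; congr 1; ring
    rw [e] at h3
    generalize (1 - PowerSeries.X : PowerSeries ℤ) ^ (2 * m + 1) = u at *
    generalize (1 - (-1) * PowerSeries.X : PowerSeries ℤ) ^ (2 * m + 1) = v at *
    generalize PowerSeries.rescale (-1 : ℤ) F = G at *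
    generalize PowerSeries.expand 2 two_ne_zero F = K at *
    linear_combination (-F * G) * h3 + (K * v * G) * h1 + K * h2
  have h5 := congrArg (PowerSeries.coeff (2 * m)) h4
  rw [PowerSeries.coeff_expand_mul, PowerSeries.coeff_mul,
    Finset.Nat.sum_antidiagonal_eq_sum_range_succ_mk] at h5
  simp only [PowerSeries.coeff_rescale, hF, PowerSeries.coeff_mk] at h5
  rw [show 2 * m + m = 3 * m by ring] at h5
  rw [Nat.succ_eq_add_one] at h5
  rw [h5]
  congr 1
  rw [← Nat.choose_symm (by omega : m ≤ 3 * m)]; congr 1; omega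

/-- the linear functional `f ↦ ∫₀¹ f` on polynomials -/
noncomputable def intFun : ℚ[X] →ₗ[ℚ] ℚ :=
  Polynomial.lsum (fun k => ((1 : ℚ) / (k + 1)) • LinearMap.id)

lemma intFun_X_pow (k : ℕ) : intFun (X ^ k) = 1 / (k + 1) := by
  rw [intFun, Polynomial.lsum_apply, X_pow_eq_monomial, Polynomial.sum_monomial_index] <;> simp

lemma intFun_beta (j : ℕ) : ∀ i : ℕ, intFun (X ^ i * (1 - X) ^ j) =
    (i.factorial * j.factorial : ℚ) / ((i + j + 1).factorial : ℚ) := by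
  induction j with
  | zero =>
    intro i
    rw [pow_zero, mul_one, intFun_X_pow, add_zero, Nat.factorial_succ]
    have : (i.factorial : ℚ) ≠ 0 := by exact_mod_cast i.factorial_ne_zero
    push_cast
    field_simp
    simp
  | succ j ih =>
    intro i
    have e : (X ^ i * (1 - X) ^ (j + 1) : ℚ[X]) = X ^ i * (1 - X) ^ j - X ^ (i + 1) * (1 - X) ^ j := by
      ring
    rw [e, map_sub, ih, ih, show i + 1 + j + 1 = (i + j + 1) + 1 by ring,
      show i + (j + 1) + 1 = (i + j + 1) + 1 by ring, Nat.factorial_succ (i + j + 1),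
      Nat.factorial_succ i, Nat.factorial_succ j]
    have : ((i + j + 1).factorial : ℚ) ≠ 0 := by exact_mod_cast Nat.factorial_ne_zero _
    push_cast
    field_simp
    ring

lemma kummer2_aux (n : ℕ) :
    ∑ k ∈ range (n + 1), (n.choose k : ℚ) * ((n + k).choose k : ℚ) / ((2 * n + 1 + k).choose k : ℚ)
    = (2 * n + 1) * ((2 * n).choose n : ℚ) *
      ∑ j ∈ range (n + 1), (-1) ^ j * (n.choose j : ℚ) / (n + 2 * j + 1) := by
  have e1 : (X ^ n * (1 - X ^ 2) ^ n : ℚ[X]) =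
      ∑ j ∈ range (n + 1), ((-1) ^ j * (n.choose j : ℚ)) • X ^ (n + 2 * j) := by
    rw [sub_eq_neg_add, add_pow, Finset.mul_sum]
    refine Finset.sum_congr rfl fun j _ => ?_
    rw [Polynomial.smul_eq_C_mul, neg_pow, one_pow, pow_add, ← pow_mul]
    simp
    ring
  have e2 : (X ^ n * (1 - X ^ 2) ^ n : ℚ[X]) =
      ∑ k ∈ range (n + 1), (n.choose k : ℚ) • (X ^ (n + k) * (1 - X) ^ n) := by
    have : (1 - X ^ 2 : ℚ[X]) = (X + 1) * (1 - X) := by ring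
    rw [this, mul_pow, add_pow, Finset.sum_mul, Finset.mul_sum]
    refine Finset.sum_congr rfl fun j _ => ?_
    rw [Polynomial.smul_eq_C_mul, pow_add]
    simp
    ring
  have h := congrArg intFun (e2.symm.trans e1)
  simp only [map_sum, map_smul, smul_eq_mul, intFun_beta, intFun_X_pow] at h
  have h' : ∑ j ∈ range (n + 1), (-1) ^ j * (n.choose j : ℚ) / (n + 2 * j + 1) =
     ∑ x ∈ range (n + 1), (-1) ^ x * (n.choose x : ℚ) * (1 / (((n + 2 * x : ℕ) : ℚ) + 1)) := by
    refine Finset.sum_congr rfl fun j _ => ?_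
    push_cast; ring
  rw [h', ← h, Finset.mul_sum]
  refine Finset.sum_congr rfl fun k _ => ?_
  have f1 : ((n + k).choose k : ℚ) = (n + k).factorial / (k.factorial * n.factorial) := by
    rw [Nat.cast_choose ℚ (by omega), Nat.add_sub_cancel]
  have f2 : ((2 * n + 1 + k).choose k : ℚ) =
      (2 * n + 1 + k).factorial / (k.factorial * (2 * n + 1).factorial) := by
    rw [Nat.cast_choose ℚ (by omega), Nat.add_sub_cancel]
  have f3 : ((2 * n).choose n : ℚ) = (2 * n).factorial / (n.factorial * n.factorial) := by
    rw [Nat.cast_choose ℚ (by omega)]; congr 4; omega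
  rw [f1, f2, f3, show n + k + n + 1 = 2 * n + 1 + k by ring, Nat.factorial_succ (2 * n)]
  have g1 : (n.factorial : ℚ) ≠ 0 := by exact_mod_cast Nat.factorial_ne_zero _
  have g2 : (k.factorial : ℚ) ≠ 0 := by exact_mod_cast Nat.factorial_ne_zero _
  have g3 : ((2 * n + 1 + k).factorial : ℚ) ≠ 0 := by exact_mod_cast Nat.factorial_ne_zero _
  push_cast
  field_simp

lemma sum_pair_mid (m : ℕ) (f : ℕ → ℚ) :
    ∑ j ∈ range (2 * m + 1), f j = f m + ∑ j ∈ range m, (f j + f (2 * m - j)) := by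
  rw [Finset.sum_add_distrib, show 2 * m + 1 = m + (m + 1) by ring, Finset.sum_range_add,
    ← Finset.sum_range_reflect (fun x => f (m + x)), Finset.sum_range_succ]
  have : ∀ j ∈ range m, f (m + (m + 1 - 1 - j)) = f (2 * m - j) := by
    intro j hj
    rw [Finset.mem_range] at hj
    congr 1; omega
  rw [Finset.sum_congr rfl this]
  simp
  ring

lemma kummer2 (m : ℕ) :
    ∑ k ∈ range (2 * m + 1), ((2 * m).choose k : ℚ) * ((2 * m + k).choose k : ℚ) /
        ((4 * m + 1 + k).choose k : ℚ)
    = ((4 * m).choose (2 * m) : ℚ) * ((-1) ^ m * ((2 * m).choose m : ℚ) +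
      (4 * m + 1) ^ 2 * ∑ j ∈ range m, 2 * (-1) ^ j * ((2 * m).choose j : ℚ) /
        ((2 * m + 2 * j + 1) * (4 * m + 1 + 2 * (m - j : ℕ)))) := by
  have h := kummer2_aux (2 * m)
  rw [sum_pair_mid m (fun j => (-1) ^ j * ((2 * m).choose j : ℚ) / ((2 * m : ℕ) + 2 * j + 1))] at h
  rw [show 2 * (2 * m) = 4 * m by ring] at h
  rw [h]
  rw [mul_add, mul_add]
  congr 1
  · push_cast; field_simp; ring
  · rw [Finset.mul_sum, Finset.mul_sum, Finset.mul_sum]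
    refine Finset.sum_congr rfl fun j hj => ?_
    rw [Finset.mem_range] at hj
    obtain ⟨d, rfl⟩ := Nat.exists_eq_add_of_lt hj
    have e1 : (2 * (j + d + 1)).choose (2 * (j + d + 1) - j) = (2 * (j + d + 1)).choose j :=
      Nat.choose_symm (by omega)
    have e2 : (-1 : ℚ) ^ (2 * (j + d + 1) - j) = (-1) ^ j := by
      rw [show 2 * (j + d + 1) - j = j + 2 * (d + 1) by omega, pow_add, pow_mul]; simp
    rw [e1, e2, show 2 * (j + d + 1) - j = j + 2 * d + 2 by omega, show j + d + 1 - j = d + 1 by omega]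
    push_cast
    have a1 : (2 * ((j : ℚ) + d + 1) + 2 * j + 1) ≠ 0 := by positivity
    have a2 : (2 * ((j : ℚ) + d + 1) + 2 * (j + 2 * d + 2) + 1) ≠ 0 := by positivity
    have a3 : (4 * ((j : ℚ) + d + 1) + 1 + 2 * (d + 1)) ≠ 0 := by positivity
    field_simp
    ring

section trans
variable {p : ℕ} [Fact p.Prime]

local notation "RR" => ZMod (p ^ 2)

lemma padic_iv {N : ℕ} (h : ¬ p ∣ N) :
    (N : ℤ_[p]) * Ring.inverse (N : ℤ_[p]) = 1 ∧
      ((Ring.inverse (N : ℤ_[p]) : ℤ_[p]) : ℚ_[p]) = (N : ℚ_[p])⁻¹ := by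
  have hu : IsUnit (N : ℤ_[p]) := by
    by_contra hc
    rw [PadicInt.not_isUnit_iff] at hc
    have h2 := (PadicInt.norm_int_lt_one_iff_dvd (p := p) (N : ℤ)).1 (by simpa using hc)
    exact h (by exact_mod_cast h2)
  have h1 := Ring.mul_inverse_cancel _ hu
  refine ⟨h1, ?_⟩
  have h2 := congrArg (fun z : ℤ_[p] => (z : ℚ_[p])) h1
  simp only [PadicInt.coe_mul, PadicInt.coe_natCast, PadicInt.coe_one] at h2
  exact (eq_inv_of_mul_eq_one_right h2)

lemma not_dvd_of_inv {N : ℕ} {x : RR} (h : x * (N : RR) = 1) : ¬ p ∣ N := by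
  intro hd
  have h1 := congrArg (redP p) h
  rw [map_mul, map_natCast, (ZMod.natCast_eq_zero_iff _ _).2 hd, mul_zero, map_one] at h1
  exact zero_ne_one h1

lemma kummer2_R {m : ℕ} (hm : p = 4 * m + 1) (x : ℕ → RR)
    (hx : ∀ k ≤ 2 * m, x k * ((4 * m + 1 + k).choose k : RR) = 1) :
    ∑ k ∈ range (2 * m + 1), ((2 * m).choose k : RR) * ((2 * m + k).choose k : RR) * x k
      = ((4 * m).choose (2 * m) : RR) * ((-1) ^ m * ((2 * m).choose m : RR)) := by
  let iv : ℕ → ℤ_[p] := fun N => Ring.inverse (N : ℤ_[p])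
  have hdvd : ∀ j ∈ range m, ¬ p ∣ (2 * m + 2 * j + 1) * (4 * m + 1 + 2 * (m - j)) := by
    intro j hj hd
    rw [Finset.mem_range] at hj
    rcases (Fact.out : p.Prime).dvd_mul.1 hd with h | h
    · have := Nat.le_of_dvd (by omega) h
      omega
    · rw [← hm] at h
      have h2 := (Nat.dvd_add_right (dvd_refl p)).1 h
      have := Nat.le_of_dvd (by omega) h2
      omega
  have key : ∑ k ∈ range (2 * m + 1), ((2 * m).choose k : ℤ_[p]) * ((2 * m + k).choose k : ℤ_[p]) *
        iv ((4 * m + 1 + k).choose k)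
      = ((4 * m).choose (2 * m) : ℤ_[p]) * ((-1) ^ m * ((2 * m).choose m : ℤ_[p]) +
      (p : ℤ_[p]) ^ 2 * ∑ j ∈ range m, ((-1) ^ j + (-1) ^ j) * ((2 * m).choose j : ℤ_[p]) *
        iv ((2 * m + 2 * j + 1) * (4 * m + 1 + 2 * (m - j)))) := by
    apply PadicInt.ext
    have h := congrArg (fun q : ℚ => (q : ℚ_[p])) (kummer2 m)
    push_cast at h
    push_cast
    have a1 : ∀ k ∈ range (2 * m + 1), ((2 * m).choose k : ℚ_[p]) * ((2 * m + k).choose k : ℚ_[p]) *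
        ((iv ((4 * m + 1 + k).choose k) : ℤ_[p]) : ℚ_[p]) =
        ((2 * m).choose k : ℚ_[p]) * ((2 * m + k).choose k : ℚ_[p]) /
          ((4 * m + 1 + k).choose k : ℚ_[p]) := by
      intro k hk
      rw [Finset.mem_range] at hk
      rw [(padic_iv (not_dvd_of_inv (hx k (by omega)))).2, div_eq_mul_inv]
    have a2 : ∀ j ∈ range m, ((-1) ^ j + (-1) ^ j) * ((2 * m).choose j : ℚ_[p]) *
        ((iv ((2 * m + 2 * j + 1) * (4 * m + 1 + 2 * (m - j))) : ℤ_[p]) : ℚ_[p]) =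
        2 * (-1) ^ j * ((2 * m).choose j : ℚ_[p]) /
        ((2 * m + 2 * j + 1) * (4 * m + 1 + 2 * (m - j : ℕ))) := by
      intro j hj
      rw [(padic_iv (hdvd j hj)).2, div_eq_mul_inv, ← two_mul]
      push_cast
      rfl
    rw [PadicInt.coe_sum, PadicInt.coe_sum]
    push_cast
    rw [Finset.sum_congr rfl a1, Finset.sum_congr rfl a2, h]
    have : (p : ℚ_[p]) = 4 * m + 1 := by
      have := congrArg (fun n : ℕ => (n : ℚ_[p])) hm
      simpa using this
    rw [this]
  have h2 := congrArg (PadicInt.toZModPow (p := p) 2) key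
  simp only [map_sum, map_mul, map_add, map_pow, map_natCast, map_neg, map_one] at h2
  rw [pp_zero, zero_mul, add_zero] at h2
  rw [← h2]
  refine Finset.sum_congr rfl fun k hk => ?_
  rw [Finset.mem_range] at hk
  congr 1
  have h3 := congrArg (PadicInt.toZModPow (p := p) 2)
    (padic_iv (not_dvd_of_inv (hx k (by omega)))).1
  rw [map_mul, map_natCast, map_one] at h3
  calc x k = x k * (((4 * m + 1 + k).choose k : RR) *
        (PadicInt.toZModPow (p := p) 2) (Ring.inverse ((4 * m + 1 + k).choose k : ℤ_[p]))) := by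
          rw [h3, mul_one]
    _ = _ := by rw [← mul_assoc, hx k (by omega), one_mul]

lemma natR_unit {k : ℕ} (h0 : 0 < k) (hk : k < p) : IsUnit (k : RR) := by
  apply redP_unit
  rw [map_natCast, Ne, ZMod.natCast_eq_zero_iff]
  intro h
  exact absurd (Nat.le_of_dvd h0 h) (by omega)

/-- harmonic numbers modulo `p^2` -/
noncomputable def harmR (p : ℕ) (k : ℕ) : ZMod (p ^ 2) :=
  ∑ i ∈ range k, Ring.inverse ((i + 1 : ℕ) : ZMod (p ^ 2))

lemma harmR_succ (k : ℕ) : harmR p (k + 1) =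
    harmR p k + Ring.inverse ((k + 1 : ℕ) : RR) := by
  unfold harmR
  exact Finset.sum_range_succ _ _

lemma xk_eq (k : ℕ) (hk : k < p) :
    (-1) ^ k * ((p - 1).choose k : RR) = 1 - p * harmR p k := by
  induction k with
  | zero => simp [harmR]
  | succ k ih =>
    have ih := ih (by omega)
    have hu := natR_unit (p := p) (k := k + 1) (by omega) hk
    have h1 := congrArg (fun n : ℕ => (n : RR)) (Nat.choose_succ_right_eq (p - 1) k)
    simp only [Nat.cast_mul] at h1
    rw [show p - 1 - k = p - (k + 1) by omega, Nat.cast_sub (by omega)] at h1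
    have h2 := Ring.mul_inverse_cancel _ hu
    have h0 := pp_zero (p := p)
    apply hu.mul_left_cancel
    rw [harmR_succ]
    linear_combination (-1) ^ (k + 1) * h1 - ((p : RR) - (k + 1 : ℕ)) * ih + (p : RR) * h2
      + harmR p k * h0

lemma yk_eq (k : ℕ) (hk : k < p) :
    ((p + k).choose k : RR) = 1 + p * harmR p k := by
  induction k with
  | zero => simp [harmR]
  | succ k ih =>
    have ih := ih (by omega)
    have hu := natR_unit (p := p) (k := k + 1) (by omega) hk
    have h1 := congrArg (fun n : ℕ => (n : RR)) (Nat.add_one_mul_choose_eq (p + k) k)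
    simp only [Nat.cast_mul] at h1
    rw [add_assoc, Nat.cast_add] at h1
    have h2 := Ring.mul_inverse_cancel _ hu
    have h0 := pp_zero (p := p)
    apply hu.mul_left_cancel
    rw [harmR_succ]
    linear_combination -h1 + ((p : RR) + (k + 1 : ℕ)) * ih + (-p : RR) * h2
      + harmR p k * h0

lemma D_eq {m : ℕ} (hm : p = 4 * m + 1) (hm1 : 1 ≤ m) :
    2 * ∑ k ∈ range (2 * m + 1), ((2 * m).choose k : RR) * ((2 * m + k).choose k : RR) =
      (-1) ^ m * ((2 * m).choose m : RR) * ((1 + p * harmR p m) + (1 - p * harmR p (2 * m))) := by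
  have h0 := pp_zero (p := p)
  have K2 := kummer2_R hm (fun k => 1 - p * harmR p k) (by
    intro k hk
    rw [← hm, yk_eq k (by omega)]
    linear_combination - harmR p k ^ 2 * h0)
  have hg : ((4 * m).choose (2 * m) : RR) = 1 - p * harmR p (2 * m) := by
    rw [← xk_eq (2 * m) (by omega), hm]
    simp
  have K1 : ((4 * m).choose (2 * m) : RR) *
      ∑ k ∈ range (2 * m + 1), ((2 * m).choose k : RR) * ((2 * m + k).choose k : RR) *
        (1 + p * harmR p k) = ((3 * m).choose m : RR) := by
    have h := congrArg (fun z : ℤ => (z : RR)) (kummer1 m)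
    push_cast at h
    rw [← h, Finset.mul_sum]
    refine Finset.sum_congr rfl fun k hk => ?_
    rw [Finset.mem_range] at hk
    have e1 := congrArg (fun n : ℕ => (n : RR))
      (Nat.choose_mul (n := 4 * m) (k := 2 * m) (s := k) (by omega))
    simp only [Nat.cast_mul] at e1
    have e2 : (4 * m - k).choose (2 * m - k) = (2 * m + (2 * m - k)).choose (2 * m) := by
      rw [← Nat.choose_symm (by omega : 2 * m - k ≤ 4 * m - k)]
      congr 1 <;> omega
    have e3 : (2 * m + k).choose k = (2 * m + k).choose (2 * m) := by
      rw [← Nat.choose_symm (by omega : k ≤ 2 * m + k)]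
      congr 1; omega
    rw [e2] at e1
    rw [e3]
    have e4 := xk_eq (p := p) k (by omega)
    rw [show p - 1 = 4 * m by omega] at e4
    have e5 : ((4 * m).choose k : RR) = (-1) ^ k * (1 - p * harmR p k) := by
      rw [← e4, ← mul_assoc, ← mul_pow]; simp
    rw [e5] at e1
    linear_combination ((2 * m + k).choose (2 * m) : RR) * (1 + p * harmR p k) * e1
      - ((2 * m + k).choose (2 * m) : RR) * ((2 * m + (2 * m - k)).choose (2 * m) : RR) *
        (-1) ^ k * harmR p k ^ 2 * h0
  have h3 : ((3 * m).choose m : RR) = (-1) ^ m * ((2 * m).choose m : RR) *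
      (1 - p * harmR p (2 * m)) * (1 + p * harmR p m) := by
    have e1 := congrArg (fun n : ℕ => (n : RR))
      (Nat.choose_mul (n := 4 * m) (k := 2 * m) (s := m) (by omega))
    simp only [Nat.cast_mul] at e1
    rw [hg, show 4 * m - m = 3 * m by omega, show 2 * m - m = m by omega] at e1
    have e4 := xk_eq (p := p) m (by omega)
    rw [show p - 1 = 4 * m by omega] at e4
    have e5 : ((4 * m).choose m : RR) = (-1) ^ m * (1 - p * harmR p m) := by
      rw [← e4, ← mul_assoc, ← mul_pow]; simp
    rw [e5] at e1
    have hs : ((-1 : RR) ^ m) * (-1) ^ m = 1 := by rw [← mul_pow]; simp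
    linear_combination (-(-1) ^ m * (1 + p * harmR p m)) * e1
      - ((3 * m).choose m : RR) * (1 - p * harmR p m) * (1 + p * harmR p m) * hs
      + ((3 * m).choose m : RR) * harmR p m ^ 2 * h0
  rw [hg, h3] at K1
  rw [hg] at K2
  have hsum : ∑ k ∈ range (2 * m + 1), ((2 * m).choose k : RR) * ((2 * m + k).choose k : RR) *
        (1 + p * harmR p k) + ∑ k ∈ range (2 * m + 1), ((2 * m).choose k : RR) *
        ((2 * m + k).choose k : RR) * (1 - p * harmR p k) =
      2 * ∑ k ∈ range (2 * m + 1), ((2 * m).choose k : RR) * ((2 * m + k).choose k : RR) := by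
    rw [← Finset.sum_add_distrib, Finset.mul_sum]
    refine Finset.sum_congr rfl fun k _ => ?_
    ring
  rw [← hsum, K2]
  generalize ∑ k ∈ range (2 * m + 1), ((2 * m).choose k : RR) * ((2 * m + k).choose k : RR) *
        (1 + p * harmR p k) = S at *
  linear_combination (1 + p * harmR p (2 * m)) * K1 + harmR p (2 * m) ^ 2 *
    (S - (-1) ^ m * ((2 * m).choose m : RR) * (1 + p * harmR p m)) * h0

lemma D_eq_X {m : ℕ} (hm : p = 4 * m + 1) (hm1 : 1 ≤ m) {Y : RR}
    (hY : 2 * Y = (-1) ^ m * ((p : RR) - 1) *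
          (3 * ((2 * m).choose m : RR) - 2 * ((6 * m).choose m : RR))) :
    ∑ k ∈ range (2 * m + 1), ((2 * m).choose k : RR) * ((2 * m + k).choose k : RR) = - Y := by
  have h0 := pp_zero (p := p)
  have h1 := D_eq hm hm1
  have hpR : (p : RR) = 4 * m + 1 := by
    have := congrArg (fun n : ℕ => (n : RR)) hm
    simpa using this
  have c1 : ((6 * m + 1).choose m : RR) =
      ((2 * m).choose m : RR) * (1 + p * harmR p (2 * m)) * (1 - p * harmR p m) := by
    have e1 := congrArg (fun n : ℕ => (n : RR))
      (Nat.choose_mul (n := 6 * m + 1) (k := 2 * m) (s := m) (by omega))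
    simp only [Nat.cast_mul] at e1
    rw [show 6 * m + 1 - m = p + m by omega, show 2 * m - m = m by omega, yk_eq m (by omega),
      show (6 * m + 1).choose (2 * m) = (p + 2 * m).choose (2 * m) by congr 1; omega,
      yk_eq (2 * m) (by omega)] at e1
    linear_combination (-(1 - p * harmR p m)) * e1
      + ((6 * m + 1).choose m : RR) * harmR p m ^ 2 * h0
  have c2 : -2 * ((6 * m).choose m : RR) = ((6 * m + 1).choose m : RR) * (2 * p - 1) := by
    have e1 := congrArg (fun n : ℕ => (n : RR)) (Nat.choose_mul_succ_eq (6 * m) m)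
    simp only [Nat.cast_mul] at e1
    rw [show 6 * m + 1 - m = 5 * m + 1 by omega] at e1
    push_cast at e1
    have e2 : (4 : RR) * (6 * m + 1) = 6 * p - 2 := by rw [hpR]; ring
    have e3 : (4 : RR) * (5 * m + 1) = 5 * p - 1 := by rw [hpR]; ring
    linear_combination 4 * (1 + 3 * p) * e1 - (1 + 3 * p) * ((6 * m).choose m : RR) * e2
      + (1 + 3 * p) * ((6 * m + 1).choose m : RR) * e3
      + (-18 * ((6 * m).choose m : RR) + 15 * ((6 * m + 1).choose m : RR)) * h0
  have h2 : IsUnit (2 : RR) := by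
    have := natR_unit (p := p) (k := 2) (by omega) (by omega)
    simpa using this
  apply h2.mul_left_cancel
  rw [h1, mul_neg, hY]
  linear_combination (-1) ^ m * ((p : RR) - 1) * c2
    + (-1) ^ m * ((p : RR) - 1) * (2 * p - 1) * c1
    - (-1) ^ m * ((2 * m).choose m : RR) * (-2 + (harmR p (2 * m) - harmR p m)
      + (1 - p) * (2 * (harmR p (2 * m) - harmR p m) + harmR p m * harmR p (2 * m)
        - 2 * p * (harmR p m * harmR p (2 * m)))) * h0

end trans

section fin

lemma rc_refl {p : ℕ} (hp : p.Prime) (x : ℚ) : ratCongr p 2 x x :=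
  ⟨0, by simp, by simpa using hp.ne_one⟩

lemma rc_symm {p : ℕ} {x y : ℚ} (h : ratCongr p 2 x y) : ratCongr p 2 y x := by
  obtain ⟨c, h1, h2⟩ := h
  exact ⟨-c, by linarith, by simpa using h2⟩

lemma rc_add {p : ℕ} (hp : p.Prime) {x y z w : ℚ} (h : ratCongr p 2 x y)
    (h' : ratCongr p 2 z w) : ratCongr p 2 (x + z) (y + w) := by
  obtain ⟨c, h1, h2⟩ := h
  obtain ⟨d, h3, h4⟩ := h'
  refine ⟨c + d, by linarith, fun hd => ?_⟩
  rcases hp.dvd_mul.1 (hd.trans (Rat.add_den_dvd c d)) with h | h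
  · exact h2 h
  · exact h4 h

lemma rc_trans {p : ℕ} (hp : p.Prime) {x y z : ℚ} (h : ratCongr p 2 x y)
    (h' : ratCongr p 2 y z) : ratCongr p 2 x z := by
  obtain ⟨c, h1, h2⟩ := rc_add hp h h'
  exact ⟨c, by linarith, h2⟩

lemma rc_sum {p : ℕ} (hp : p.Prime) (n : ℕ) (f g : ℕ → ℚ)
    (h : ∀ k < n, ratCongr p 2 (f k) (g k)) :
    ratCongr p 2 (∑ k ∈ range n, f k) (∑ k ∈ range n, g k) := by
  induction n with
  | zero => simpa using rc_refl hp 0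
  | succ n ih =>
    rw [Finset.sum_range_succ, Finset.sum_range_succ]
    exact rc_add hp (ih fun k hk => h k (by omega)) (h n (by omega))

lemma rc_div {p : ℕ} (hp : p.Prime) {x y N : ℤ} (hN : ¬ (p : ℤ) ∣ N)
    (h : ((p : ℤ) ^ 2) ∣ x - N * y) : ratCongr p 2 ((x : ℚ) / N) y := by
  obtain ⟨c, hc⟩ := h
  have hN0 : (N : ℚ) ≠ 0 := by
    intro h0
    apply hN
    rw [Int.cast_eq_zero.1 h0]
    exact dvd_zero _
  refine ⟨(c : ℚ) / N, ?_, fun hd => ?_⟩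
  · field_simp
    exact_mod_cast (by linarith : x - N * y = (p : ℤ) ^ 2 * c)
  · apply hN
    have h1 := Rat.den_dvd c N
    rw [Rat.divInt_eq_div] at h1
    exact (Int.natCast_dvd_natCast.2 hd).trans h1

/-- exact identity from the symmetry of shifted Legendre polynomials -/
lemma leg_id (m : ℕ) :
    ∑ k ∈ range (2 * m + 1), ((2 * m).choose k : ℤ) * ((2 * m + k).choose k : ℤ) * (-2) ^ k =
    ∑ k ∈ range (2 * m + 1), ((2 * m).choose k : ℤ) * ((2 * m + k).choose k : ℤ) := by
  have h := Polynomial.shiftedLegendre_eval_symm (2 * m) (-1 : ℤ)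
  have hd : (Polynomial.shiftedLegendre (2 * m)).natDegree < 2 * m + 1 := by
    rw [Polynomial.natDegree_shiftedLegendre]; omega
  rw [Polynomial.aeval_def, Polynomial.aeval_def,
    Polynomial.eval₂_eq_sum_range' _ hd, Polynomial.eval₂_eq_sum_range' _ hd] at h
  simp only [Polynomial.coeff_shiftedLegendre] at h
  have e3 : ∀ k, (2 * m + k).choose (2 * m) = (2 * m + k).choose k := fun k => by
    rw [← Nat.choose_symm (by omega : k ≤ 2 * m + k)]
    congr 1; omega
  rw [pow_mul] at h
  simp only [neg_one_sq, one_pow, one_mul, e3] at h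
  have h1 : (∑ k ∈ range (2 * m + 1), ((2 * m).choose k : ℤ) * ((2 * m + k).choose k : ℤ)) =
    _ := Eq.trans (Finset.sum_congr rfl fun k _ => ?_) h
  · rw [h1]
    refine Finset.sum_congr rfl fun k _ => ?_
    simp
    rw [show (-2 : ℤ) = -1 * 2 by norm_num, mul_pow]
    ring
  · simp
    have : (-1 : ℤ) ^ k * (-1) ^ k = 1 := by rw [← mul_pow]; simp
    linear_combination (-((2 * m).choose k : ℤ) * ((2 * m + k).choose k : ℤ)) * this

lemma central_cong {p m : ℕ} [Fact p.Prime] (hm : p = 4 * m + 1) (k : ℕ) (hk : k ≤ 2 * m) :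
    (p : ℤ) ^ 2 ∣ ((2 * k).choose k : ℤ) - (-16) ^ k * ((2 * m + k).choose (2 * k) : ℤ) := by
  have hp : p.Prime := Fact.out
  induction k with
  | zero => simp
  | succ k ih =>
    have ih := ih (by omega)
    have h1 : ((k : ℤ) + 1) * ((2 * (k + 1)).choose (k + 1) : ℤ) =
        2 * (2 * k + 1) * ((2 * k).choose k : ℤ) := by
      have := Nat.succ_mul_centralBinom_succ k
      simp only [Nat.centralBinom] at this
      exact_mod_cast this
    have h2 : ((2 * m + (k + 1)).choose (2 * (k + 1)) : ℤ) * ((2 * k + 2) * (2 * k + 1)) =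
        ((2 * m + k).choose (2 * k) : ℤ) * ((2 * m + k + 1) * (2 * m - k)) := by
      have e1 := Nat.add_one_mul_choose_eq (2 * m + k) (2 * k + 1)
      have e2 := Nat.choose_succ_right_eq (2 * m + k) (2 * k)
      rw [show 2 * m + k - 2 * k = 2 * m - k by omega] at e2
      zify [show k ≤ 2 * m by omega] at e1 e2
      rw [show 2 * m + (k + 1) = 2 * m + k + 1 by ring, show 2 * (k + 1) = 2 * k + 1 + 1 by ring]
      linear_combination (-(2 * k + 1 : ℤ)) * e1 + (2 * m + k + 1 : ℤ) * e2
    have hc : IsCoprime ((p : ℤ) ^ 2) ((k + 1 : ℕ) * (2 * k + 1 : ℕ) : ℤ) := by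
      apply IsCoprime.pow_left
      rw [← Nat.cast_mul, Nat.isCoprime_iff_coprime, hp.coprime_iff_not_dvd]
      intro hd
      rcases hp.dvd_mul.1 hd with h | h
      · have := Nat.le_of_dvd (by omega) h
        omega
      · have := Nat.le_of_dvd (by omega) h
        omega
    apply hc.dvd_of_dvd_mul_left
    obtain ⟨c, hc⟩ := ih
    refine ⟨2 * (2 * k + 1) ^ 2 * c + 2 * (-16) ^ k * ((2 * m + k).choose (2 * k) : ℤ), ?_⟩
    have hpm : (p : ℤ) = 4 * m + 1 := by exact_mod_cast hm
    push_cast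
    rw [hpm] at hc ⊢
    rw [pow_succ]
    linear_combination (2 * k + 1 : ℤ) * h1 + 8 * (-16) ^ k * h2 + 2 * (2 * k + 1 : ℤ) ^ 2 * hc

lemma choose_eq' (m k : ℕ) (hk : k ≤ 2 * m) :
    ((2 * m + k).choose (2 * k) : ℤ) * ((2 * k).choose k : ℤ) =
      ((2 * m).choose k : ℤ) * ((2 * m + k).choose k : ℤ) := by
  have := Nat.choose_mul (n := 2 * m + k) (k := 2 * k) (s := k) (by omega)
  rw [show 2 * m + k - k = 2 * m by omega, show 2 * k - k = k by omega] at this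
  rw [mul_comm ((2 * m).choose k : ℤ)]
  exact_mod_cast this

lemma S2_cong {p m : ℕ} [Fact p.Prime] (hm : p = 4 * m + 1) (hm1 : 1 ≤ m) :
    ratCongr p 2 (∑ k ∈ range (2 * m + 1), ((2 * k).choose k : ℚ) ^ 2 / (-16 : ℚ) ^ k)
      ((∑ k ∈ range (2 * m + 1), ((2 * m).choose k : ℤ) * ((2 * m + k).choose k : ℤ) : ℤ) : ℚ) := by
  have hp : p.Prime := Fact.out
  rw [Int.cast_sum]
  refine rc_sum hp _ _ _ fun k hk => ?_
  have := rc_div hp (x := ((2 * k).choose k : ℤ) ^ 2) (N := (-16) ^ k)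
    (y := ((2 * m).choose k : ℤ) * ((2 * m + k).choose k : ℤ)) (by
      intro h
      have h := (Nat.prime_iff_prime_int.1 hp).dvd_of_dvd_pow h
      rw [dvd_neg] at h
      have h : p ∣ 2 ^ 4 := by exact_mod_cast h
      have := Nat.le_of_dvd (by omega) (hp.dvd_of_dvd_pow h)
      omega) (by
      obtain ⟨c, hc⟩ := central_cong hm k (by omega)
      refine ⟨((2 * k).choose k : ℤ) * c, ?_⟩
      linear_combination ((2 * k).choose k : ℤ) * hc + (-16) ^ k * choose_eq' m k (by omega))
  push_cast at this ⊢
  exact this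

lemma S1_cong {p m : ℕ} [Fact p.Prime] (hm : p = 4 * m + 1) (hm1 : 1 ≤ m) :
    ratCongr p 2 (∑ k ∈ range (2 * m + 1), ((2 * k).choose k : ℚ) ^ 2 / 8 ^ k)
      ((∑ k ∈ range (2 * m + 1), ((2 * m).choose k : ℤ) * ((2 * m + k).choose k : ℤ) : ℤ) : ℚ) := by
  have hp : p.Prime := Fact.out
  rw [← leg_id, Int.cast_sum]
  refine rc_sum hp _ _ _ fun k hk => ?_
  have := rc_div hp (x := ((2 * k).choose k : ℤ) ^ 2) (N := 8 ^ k)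
    (y := ((2 * m).choose k : ℤ) * ((2 * m + k).choose k : ℤ) * (-2) ^ k) (by
      intro h
      have h := (Nat.prime_iff_prime_int.1 hp).dvd_of_dvd_pow h
      have h : p ∣ 2 ^ 3 := by exact_mod_cast h
      have := Nat.le_of_dvd (by omega) (hp.dvd_of_dvd_pow h)
      omega) (by
      obtain ⟨c, hc⟩ := central_cong hm k (by omega)
      refine ⟨((2 * k).choose k : ℤ) * c, ?_⟩
      have e : (8 : ℤ) ^ k * (-2) ^ k = (-16) ^ k := by rw [← mul_pow]; norm_num
      linear_combination ((2 * k).choose k : ℤ) * hc + (-16) ^ k * choose_eq' m k (by omega)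
        - ((2 * m).choose k : ℤ) * ((2 * m + k).choose k : ℤ) * e)
  push_cast at this ⊢
  exact this

lemma two_sq {p : ℕ} (hp : p.Prime) (hp4 : p % 4 = 1) {a b A B : ℤ} (h1 : (p : ℤ) = a ^ 2 + b ^ 2)
    (h2 : (p : ℤ) = A ^ 2 + B ^ 2) (ha : a % 2 = 1) (hA : A % 2 = 1) : A = a ∨ A = -a := by
  have hpi := Nat.prime_iff_prime_int.1 hp
  have hp0 : (0 : ℤ) < p := by exact_mod_cast hp.pos
  have hbe : b % 2 = 0 := by
    by_contra hb
    have hb : b % 2 = 1 := by omega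
    have e1 := Int.emod_emod_of_dvd p (by norm_num : (2:ℤ) ∣ 4)
    have : Odd (p : ℤ) := by rw [Int.odd_iff]; omega
    rw [h1] at this
    rw [Int.odd_add] at this
    have ho : Odd (a ^ 2) := (Int.odd_iff.2 ha).pow
    have := this.1 ho
    have ho2 : Odd (b ^ 2) := (Int.odd_iff.2 hb).pow
    exact (Int.not_even_iff_odd.2 ho2) this
  suffices h : A ^ 2 = a ^ 2 from sq_eq_sq_iff_eq_or_eq_neg.1 h
  have hprod : (p : ℤ) ∣ (A * b - a * B) * (A * b + a * B) :=
    ⟨A ^ 2 - a ^ 2, by linear_combination (-A^2) * h1 + a ^ 2 * h2⟩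
  have key : ∀ u v : ℤ, (p : ℤ) ^ 2 = v ^ 2 + u ^ 2 → (p : ℤ) ∣ u → u = 0 ∨ v = 0 := by
    rintro u v h ⟨c, rfl⟩
    by_contra! hc
    have hc0 : c ≠ 0 := by rintro rfl; simp at hc
    have : 1 ≤ c ^ 2 := by
      have := pow_pos (abs_pos.2 hc0) 2
      rw [sq_abs] at this
      omega
    have hv : 0 < v ^ 2 := by have := hc.2; positivity
    nlinarith
  have fin : ∀ u : ℤ, u = A * b - a * B ∨ u = A * b + a * B → u = 0 → A ^ 2 = a ^ 2 := by
    intro u hu h0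
    have : (p : ℤ) * (A ^ 2 - a ^ 2) = 0 := by
      have : (A * b - a * B) * (A * b + a * B) = 0 := by
        rcases hu with h | h
        · rw [← h, h0, zero_mul]
        · rw [← h, h0, mul_zero]
      linear_combination this + A^2 * h1 - a ^ 2 * h2
    rcases mul_eq_zero.1 this with h | h
    · omega
    · omega
  have par : ∀ v : ℤ, v = A * a + B * b ∨ v = A * a - B * b → v ≠ 0 := by
    intro v hv h0
    have ho : Odd (A * a) := (Int.odd_iff.2 hA).mul (Int.odd_iff.2 ha)
    have he : Even (B * b) := (Int.even_iff.2 hbe).mul_left _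
    rcases hv with h | h
    · have := ho.add_even he
      rw [← h, h0] at this
      simp at this
    · have := ho.sub_even he
      rw [← h, h0] at this
      simp at this
  rcases hpi.dvd_mul.1 hprod with h | h
  · rcases key _ (A * a + B * b) (by
      linear_combination (p : ℤ) * h1 + (a ^ 2 + b ^ 2) * h2) h with h | h
    · exact fin _ (Or.inl rfl) h
    · exact absurd h (par _ (Or.inl rfl))
  · rcases key _ (A * a - B * b) (by
      linear_combination (p : ℤ) * h1 + (a ^ 2 + b ^ 2) * h2) h with h | h
    · exact fin _ (Or.inr rfl) h
    · exact absurd h (par _ (Or.inr rfl))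

lemma D_final {p m : ℕ} [Fact p.Prime] (hm : p = 4 * m + 1) (hm1 : 1 ≤ m) {a b : ℤ}
    (hab : (p : ℤ) = a ^ 2 + b ^ 2) (ha : a % 4 = 1) :
    (p : ℤ) ^ 2 ∣ (-1) ^ m * (4 * a ^ 2 - p) - 2 * a *
      ∑ k ∈ range (2 * m + 1), ((2 * m).choose k : ℤ) * ((2 * m + k).choose k : ℤ) := by
  have hp : p.Prime := Fact.out
  obtain ⟨A, B, hAB, hA, Y, hY1, hY2⟩ := gauss_part hm hm1
  have hD := D_eq_X hm hm1 hY2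
  have hD2 := D_eq hm hm1
  have h0 := pp_zero (p := p)
  have hAa := two_sq hp (by omega) hab hAB (by omega) (by omega)
  have hs : ((-1 : ZMod (p ^ 2)) ^ m) * (-1) ^ m = 1 := by rw [← mul_pow]; simp
  have hA2 : A = -((-1) ^ m * a) := by
    rcases Nat.even_or_odd m with h | h
    · rw [h.neg_one_pow, one_mul]
      obtain ⟨r, hr⟩ := h
      omega
    · rw [h.neg_one_pow]
      obtain ⟨r, hr⟩ := h
      omega
  have hAR : (A : ZMod (p ^ 2)) = -((-1) ^ m * a) := by rw [hA2]; push_cast; rfl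
  rw [hAR] at hY1
  suffices h : (((-1) ^ m * (4 * a ^ 2 - p) - 2 * a *
      ∑ k ∈ range (2 * m + 1), ((2 * m).choose k : ℤ) * ((2 * m + k).choose k : ℤ) : ℤ) :
      ZMod (p ^ 2)) = 0 by
    have := (ZMod.intCast_zmod_eq_zero_iff_dvd _ _).1 h
    exact_mod_cast this
  push_cast
  generalize ∑ k ∈ range (2 * m + 1), ((2 * m).choose k : ZMod (p ^ 2)) *
    ((2 * m + k).choose k : ZMod (p ^ 2)) = D at *
  have hq : D * (D - 2 * (-1) ^ m * a) = - p := by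
    have : Y = -D := by rw [hD]; ring
    rw [this] at hY1
    linear_combination hY1
  have hDu : redP p D ≠ 0 := by
    intro h
    have h1 := congrArg (redP p) hD2
    simp only [map_mul, map_add, map_sub, map_pow, map_neg, map_one, map_natCast, h,
      CharP.cast_eq_zero, zero_mul, mul_zero, add_zero, sub_zero] at h1
    have h2 : (((2 * m).choose m * 2 : ℕ) : ZMod p) = 0 := by
      have hs2 : ((-1 : ZMod p) ^ m) * (-1) ^ m = 1 := by rw [← mul_pow]; simp
      push_cast
      linear_combination (-((2 * m).choose m : ZMod p) * 2) * hs2 - (-1) ^ m * h1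
    rw [ZMod.natCast_eq_zero_iff] at h2
    rcases hp.dvd_mul.1 h2 with h | h
    · have h3 := Nat.choose_mul_factorial_mul_factorial (n := 2 * m) (k := m) (by omega)
      have h4 : p ∣ (2 * m).factorial := by
        rw [← h3, mul_assoc]
        exact h.mul_right _
      have := hp.dvd_factorial.1 h4
      omega
    · have := Nat.le_of_dvd (by omega) h
      omega
  have hz : redP p (D - 2 * (-1) ^ m * a) = 0 := by
    have h1 := congrArg (redP p) hq
    rw [map_mul, map_neg, map_natCast, CharP.cast_eq_zero, neg_zero] at h1
    exact (mul_eq_zero.1 h1).resolve_left hDu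
  obtain ⟨w, hw⟩ := redP_ker hz
  have hw2 : (D - 2 * (-1) ^ m * a) ^ 2 = 0 := by
    rw [hw, mul_pow, h0, zero_mul]
  linear_combination (-(-1 : ZMod (p ^ 2)) ^ m) * hq + (-1) ^ m * hw2
    + (2 * a * D - 4 * (-1) ^ m * a ^ 2) * hs

end fin

theorem stmt18 (p : ℕ) (hp : p.Prime) (hp4 : p % 4 = 1) (a b : ℤ)
    (hab : (p : ℤ) = a ^ 2 + b ^ 2) (ha : a % 4 = 1) :
    ratCongr p 2
      (∑ k ∈ Finset.range ((p - 1) / 2 + 1), ((2 * k).choose k : ℚ) ^ 2 / 8 ^ k)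
      (∑ k ∈ Finset.range ((p - 1) / 2 + 1), ((2 * k).choose k : ℚ) ^ 2 / (-16 : ℚ) ^ k) ∧
    ratCongr p 2
      (∑ k ∈ Finset.range ((p - 1) / 2 + 1), ((2 * k).choose k : ℚ) ^ 2 / (-16 : ℚ) ^ k)
      ((-1 : ℚ) ^ ((p - 1) / 4) * (2 * (a : ℚ) - (p : ℚ) / (2 * (a : ℚ)))) := by
  have : Fact p.Prime := ⟨hp⟩
  obtain ⟨m, hm⟩ : ∃ m, p = 4 * m + 1 := ⟨p / 4, by omega⟩
  have hm1 : 1 ≤ m := by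
    have := hp.two_le
    omega
  rw [show (p - 1) / 2 = 2 * m by omega, show (p - 1) / 4 = m by omega]
  have h1 := S1_cong hm hm1
  have h2 := S2_cong hm hm1
  refine ⟨rc_trans hp h1 (rc_symm h2), rc_trans hp h2 (rc_symm ?_)⟩
  have ha0 : a ≠ 0 := by rintro rfl; simp at ha
  have h3 := rc_div hp (x := (-1) ^ m * (4 * a ^ 2 - p)) (N := 2 * a) (by
    intro h
    rcases (Nat.prime_iff_prime_int.1 hp).dvd_mul.1 h with h | h
    · have := Int.le_of_dvd (by norm_num) h
      omega
    · obtain ⟨c, rfl⟩ := h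
      have hc : c ≠ 0 := by rintro rfl; simp at ha0
      have hc2 : 0 < c ^ 2 := by positivity
      have hpp : (1 : ℤ) < p := by exact_mod_cast hp.one_lt
      nlinarith [sq_nonneg b, mul_pos (by omega : (0 : ℤ) < p) hc2]) (D_final hm hm1 hab ha)
  convert h3 using 1
  have ha0 : (a : ℚ) ≠ 0 := by exact_mod_cast ha0
  push_cast
  field_simp
  ring
end
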